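/- arXiv:2209.10532 — 5 statements merged into one kernel-verified Lean document; each statement's English description precedes it below -/
import Mathlib

section
/- There exists a universal constant c₀ > 0 with the following property. Let U ⊆ ℂ be a simply connected domain, 𝒲 a Whitney square decomposition of U, and Q₀, Q₁ ∈ 𝒲. For j ∈ ℕ let ℱ_j be the set of squares Q̃ ∈ 𝒲 such that some hyperbolic geodesic in U (parameterized by hyperbolic length) from cen(Q₀) to a point of Q₁ passes through Q̃ at some time t ∈ [j−1, j). Then |ℱ_j| ≤ c₀ for every j. -/
open Complex Set Metric MeasureTheory

noncomputable section

/-- The closed axis-parallel square with center `c` and side length `s`. -/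
def square (c : ℂ) (s : ℝ) : Set ℂ :=
  {z : ℂ | |z.re - c.re| ≤ s / 2 ∧ |z.im - c.im| ≤ s / 2}

/-- The (Euclidean) distance between two subsets of `ℂ`. -/
def sdist (A B : Set ℂ) : ℝ := sInf {d : ℝ | ∃ a ∈ A, ∃ b ∈ B, d = dist a b}

/-- A Whitney square decomposition of an open set `D ⊊ ℂ`: a family of closed dyadic
squares (recorded by their centers and side lengths) with pairwise disjoint interiors
covering `D`, such that `diam(Q) ≤ dist(Q, ∂D) < 4 diam(Q)` for each square `Q`. -/
structure IsWhitneyDecomp (D : Set ℂ) (W : Set (ℂ × ℝ)) : Prop where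
  dyadic : ∀ q ∈ W, ∃ n : ℤ, q.2 = (2:ℝ) ^ n
  cover : D = ⋃ q ∈ W, square q.1 q.2
  disjInt : ∀ q ∈ W, ∀ q' ∈ W, q ≠ q' →
    interior (square q.1 q.2) ∩ interior (square q'.1 q'.2) = ∅
  lower : ∀ q ∈ W, Metric.diam (square q.1 q.2) ≤ sdist (square q.1 q.2) Dᶜ
  upper : ∀ q ∈ W, sdist (square q.1 q.2) Dᶜ < 4 * Metric.diam (square q.1 q.2)

/-- The inverse hyperbolic tangent, `artanh x = ½ log((1+x)/(1-x))`; for `x ∈ [0,1)` it is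
the hyperbolic length of the segment `[0, x]` in the unit disk with density `1/(1-|z|²)`. -/
def artanh (x : ℝ) : ℝ := (1 / 2) * Real.log ((1 + x) / (1 - x))


lemma sqrt_branch (z : ℂ) (R : ℝ) (hR : 0 < R) (F : ℂ → ℂ)
    (hF : DifferentiableOn ℂ F (ball z R)) (h0 : ∀ w ∈ ball z R, F w ≠ 0) (h1 : F z = 1) :
    ∃ g : ℂ → ℂ, DifferentiableOn ℂ g (ball z R) ∧ g z = 1 ∧ ∀ w ∈ ball z R, g w ^ 2 = F w := by
  have hd : DifferentiableOn ℂ (fun w => deriv F w / F w) (ball z R) :=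
    (hF.deriv isOpen_ball).div hF h0
  obtain ⟨h, hh0, hh⟩ := hd.isExactOn_ball.with_val_at z 0
  have hz : z ∈ ball z R := mem_ball_self hR
  have key : ∀ w ∈ ball z R, F w * exp (-h w) = 1 := by
    intro w hw
    have hder : ∀ x ∈ ball z R, HasDerivAt (fun w => F w * exp (-h w)) 0 x := by
      intro x hx
      have a := (hF.differentiableAt (isOpen_ball.mem_nhds hx)).hasDerivAt
      have b := (hh x hx).fun_neg.cexp
      refine (a.fun_mul b).congr_deriv ?_
      field_simp [h0 x hx]
      ring
    have := isOpen_ball.is_const_of_deriv_eq_zero (convex_ball z R).isPreconnected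
      (fun x hx => (hder x hx).differentiableAt.differentiableWithinAt)
      (fun x hx => (hder x hx).deriv) hw hz
    rw [this, h1, hh0]; simp
  refine ⟨fun w => exp (h w / 2), ?_, by simp [hh0], ?_⟩
  · intro x hx
    exact ((hh x hx).differentiableAt.div_const 2).cexp.differentiableWithinAt
  · intro w hw
    have := key w hw
    rw [exp_neg] at this
    rw [← exp_nat_mul]
    have e : ((2:ℕ):ℂ) * (h w / 2) = h w := by push_cast; ring
    rw [e]
    field_simp at this
    exact this.symm

lemma koebe_step (z : ℂ) (R : ℝ) (hR : 0 < R) (V : Set ℂ) (hV : IsOpen V) (hVne : V ≠ univ)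
    (φ ψ : ℂ → ℂ) (hψ : DifferentiableOn ℂ ψ (ball z R)) (hψm : MapsTo ψ (ball z R) V)
    (hφ : ContinuousOn φ V) (hφm : MapsTo φ V (ball z R))
    (hl : ∀ w ∈ ball z R, φ (ψ w) = w) (hr : ∀ x ∈ V, ψ (φ x) = x)
    (w : ℂ) (hw : dist w z ≤ R / 1000) :
    dist (ψ w) (ψ z) ≤ infDist (ψ z) Vᶜ / 2 := by
  have hz : z ∈ ball z R := mem_ball_self hR
  have hwb : w ∈ ball z R := by rw [mem_ball]; linarith
  have hne : (Vᶜ).Nonempty := by rwa [nonempty_compl]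
  obtain ⟨a, ha, had⟩ := hV.isClosed_compl.exists_infDist_eq_dist hne (ψ z)
  rw [had]
  set c : ℂ := ψ z - a with hc
  have hav : ∀ x ∈ V, x - a ≠ 0 := by
    intro x hx h
    rw [sub_eq_zero] at h
    exact ha (h ▸ hx)
  have hc0 : c ≠ 0 := hav _ (hψm hz)
  obtain ⟨g, hgd, hg1, hg2⟩ := sqrt_branch z R hR (fun w => (ψ w - a) / c)
    ((hψ.sub_const a).div_const c)
    (fun w hw => div_ne_zero (hav _ (hψm hw)) hc0) (div_self hc0)
  -- g covers ball 1 (1/4)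
  have hin : ∀ v ∈ ball (1:ℂ) (1/4), a + c * v ^ 2 ∈ V := by
    intro v hv
    by_contra hn
    have h1 : infDist (ψ z) Vᶜ ≤ dist (ψ z) (a + c * v^2) := infDist_le_dist_of_mem hn
    rw [had, dist_eq, dist_eq] at h1
    have e : ψ z - (a + c * v^2) = c * ((1 - v) * (2 + (v - 1))) := by rw [hc]; ring
    rw [e, norm_mul, norm_mul] at h1
    rw [mem_ball, dist_eq] at hv
    have h2 : ‖(2:ℂ) + (v - 1)‖ ≤ 2 + 1/4 := by
      refine (norm_add_le _ _).trans ?_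
      simp; linarith
    have h3 : ‖1 - v‖ < 1/4 := by rwa [norm_sub_rev]
    have h4 : 0 < ‖c‖ := norm_pos_iff.2 hc0
    have h5 : ‖1 - v‖ * ‖(2:ℂ) + (v - 1)‖ ≤ (1/4) * (2 + 1/4) := by gcongr
    nlinarith
  have hcov : EqOn (fun v => g (φ (a + c * v^2))) (fun v => v) (ball (1:ℂ) (1/4)) := by
    refine (convex_ball (1:ℂ) (1/4)).isPreconnected.eq_of_sq_eq ?_ continuousOn_id ?_ ?_
      (mem_ball_self (by norm_num)) ?_
    · refine hgd.continuousOn.comp (hφ.comp (by fun_prop) hin) ?_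
      intro v hv
      exact hφm (hin v hv)
    · intro v hv
      simp only [Pi.pow_apply]
      rw [hg2 _ (hφm (hin v hv)), hr _ (hin v hv)]
      field_simp
      ring
    · intro x hx h
      rw [h, mem_ball, dist_eq] at hx
      norm_num at hx
    · have : a + c * 1 ^ 2 = ψ z := by rw [hc]; ring
      simp only [this, hl z hz, hg1]
  have homit : ∀ x ∈ ball z R, 1/4 ≤ ‖g x + 1‖ := by
    intro x hx
    by_contra hlt
    push Not at hlt
    have hv : -g x ∈ ball (1:ℂ) (1/4) := by
      rw [mem_ball, dist_eq]
      have e : -g x - 1 = -(g x + 1) := by ring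
      rwa [e, norm_neg]
    have h1 := hcov hv
    have h2 := hg2 x hx
    simp only [neg_sq] at h1
    rw [h2] at h1
    have e : a + c * ((ψ x - a) / c) = ψ x := by field_simp; ring
    rw [e, hl x hx] at h1
    have h3 : g x = 0 := by linear_combination h1 / 2
    rw [h3] at hlt
    norm_num at hlt
  have hgne : ∀ x ∈ ball z R, g x + 1 ≠ 0 := by
    intro x hx h
    have := homit x hx
    rw [h] at this
    norm_num at this
  have hS := dist_le_div_mul_dist_of_mapsTo_ball (f := fun x => (g x + 1)⁻¹) (R₂ := 5)
    ((hgd.add_const 1).inv hgne) (by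
      intro x hx
      rw [mem_closedBall, dist_eq]
      refine (norm_sub_le _ _).trans ?_
      have h1 : ‖(g x + 1)⁻¹‖ ≤ 4 := by
        rw [norm_inv]
        refine inv_le_of_inv_le₀ (by norm_num) ?_
        have := homit x hx
        linarith
      have h2 : ‖(g z + 1)⁻¹‖ ≤ 1 := by
        rw [hg1, norm_inv]
        norm_num
      linarith) hwb
  set k : ℂ := (g w + 1)⁻¹ with hk
  have hk0 : k ≠ 0 := inv_ne_zero (hgne w hwb)
  have hkd : ‖k - 1/2‖ ≤ 1/200 := by
    rw [dist_eq] at hS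
    have e : ((g z + 1)⁻¹ : ℂ) = 1/2 := by rw [hg1]; norm_num
    simp only [e] at hS
    refine hS.trans ?_
    have : 5 / R * dist w z ≤ 5 / R * (R / 1000) := by gcongr
    refine this.trans (le_of_eq ?_)
    field_simp
    norm_num
  have hkn : 49/100 ≤ ‖k‖ := by
    have := norm_sub_norm_le (1/2:ℂ) (1/2 - k)
    have e : (1/2:ℂ) - (1/2 - k) = k := by ring
    rw [e, norm_sub_rev (1/2:ℂ) k] at this
    have : ‖(1/2:ℂ)‖ = 1/2 := by norm_num
    linarith
  have hgk : g w = 1 / k - 1 := by rw [hk]; simp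
  have hfin : ψ w - ψ z = c * (2 * (1/2 - k) / k^2) := by
    have h2 := hg2 w hwb
    rw [hgk] at h2
    have h3 : ψ w - a = c * (1/k - 1)^2 := by rw [h2]; field_simp
    have h4 : ψ w - ψ z = (ψ w - a) - c := by rw [hc]; ring
    rw [h4, h3]
    field_simp
    ring
  rw [dist_eq, dist_eq, hfin, norm_mul, ← hc, div_eq_mul_inv ‖c‖]
  refine mul_le_mul_of_nonneg_left ?_ (norm_nonneg _)
  rw [norm_div, norm_mul, norm_pow, norm_sub_rev]
  rw [div_le_iff₀ (by positivity)]
  norm_num at hkd ⊢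
  nlinarith

/-- Comparability of two points relative to the distance to a set. -/
def Cmp (S : Set ℂ) (C : ℝ) (x y : ℂ) : Prop :=
  infDist y S ≤ C * infDist x S ∧ infDist x S ≤ C * infDist y S ∧ dist x y ≤ C * infDist x S

lemma Cmp.trans' {S : Set ℂ} {C C' : ℝ} (hC : 0 ≤ C) (hC' : 0 ≤ C') {x y z : ℂ}
    (h : Cmp S C x y) (h' : Cmp S C' y z) : Cmp S (C + C * C') x z := by
  obtain ⟨a1, a2, a3⟩ := h
  obtain ⟨b1, b2, b3⟩ := h'
  have hx : 0 ≤ infDist x S := infDist_nonneg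
  have hy : 0 ≤ infDist y S := infDist_nonneg
  have hz : 0 ≤ infDist z S := infDist_nonneg
  have m1 : C' * infDist y S ≤ C' * (C * infDist x S) := by gcongr
  have m2 : C * infDist y S ≤ C * (C' * infDist z S) := by gcongr
  have p1 : 0 ≤ C * infDist x S := by positivity
  have p2 : 0 ≤ C * infDist z S := by positivity
  refine ⟨by linarith, by linarith, ?_⟩
  have := dist_triangle x y z
  linarith

lemma chain_cmp (S : Set ℂ) (x : ℕ → ℂ) (n : ℕ)
    (h : ∀ i < n, dist (x (i + 1)) (x i) ≤ infDist (x i) S / 2) :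
    Cmp S (2 ^ n) (x 0) (x n) := by
  induction n with
  | zero => simp [Cmp, infDist_nonneg]
  | succ n ih =>
    obtain ⟨a1, a2, a3⟩ := ih (fun i hi => h i (by omega))
    have hs := h n (by omega)
    have e1 : infDist (x (n+1)) S ≤ infDist (x n) S + dist (x (n+1)) (x n) :=
      infDist_le_infDist_add_dist
    have e2 : infDist (x n) S ≤ infDist (x (n+1)) S + dist (x n) (x (n+1)) :=
      infDist_le_infDist_add_dist
    rw [dist_comm] at e2
    have h0 : 0 ≤ infDist (x n) S := infDist_nonneg
    have hp : (0:ℝ) < 2 ^ n := by positivity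
    have m : (2:ℝ) ^ n * infDist (x n) S ≤ 2 ^ n * (2 * infDist (x (n+1)) S) := by
      gcongr; linarith
    have tri := dist_triangle (x 0) (x n) (x (n+1))
    rw [dist_comm (x n)] at tri
    refine ⟨?_, ?_, ?_⟩ <;> rw [pow_succ] <;> linarith

lemma disk_step (U : Set ℂ) (hU : IsOpen U) (hUne : U ≠ univ) (φ ψ : ℂ → ℂ)
    (hφ : ContinuousOn φ U)
    (hψ : DifferentiableOn ℂ ψ (ball (0:ℂ) 1)) (hψm : MapsTo ψ (ball (0:ℂ) 1) U)
    (hl : ∀ z ∈ ball (0:ℂ) 1, φ (ψ z) = z) (hr : ∀ z ∈ U, ψ (φ z) = z)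
    (p q : ℂ) (hp : ‖p‖ < 1) (hq : dist q p ≤ (1 - ‖p‖) / 1000) :
    dist (ψ q) (ψ p) ≤ infDist (ψ p) Uᶜ / 2 := by
  have hR : 0 < 1 - ‖p‖ := by linarith
  have hsub : ball p (1 - ‖p‖) ⊆ ball (0:ℂ) 1 := by
    apply ball_subset_ball'
    simp
  have hne : (Uᶜ).Nonempty := by rwa [nonempty_compl]
  have hk := koebe_step p (1 - ‖p‖) hR (U ∩ φ ⁻¹' ball p (1 - ‖p‖))
    (hφ.isOpen_inter_preimage hU isOpen_ball)
    (fun h => hUne (eq_univ_of_subset inter_subset_left h)) φ ψ (hψ.mono hsub)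
    (fun x hx => ⟨hψm (hsub hx), by rw [mem_preimage, hl x (hsub hx)]; exact hx⟩)
    (hφ.mono inter_subset_left) (fun x hx => hx.2)
    (fun x hx => hl x (hsub hx)) (fun x hx => hr x hx.1) q hq
  have : infDist (ψ p) (U ∩ φ ⁻¹' ball p (1 - ‖p‖))ᶜ ≤ infDist (ψ p) Uᶜ :=
    infDist_le_infDist_of_subset (compl_subset_compl.2 inter_subset_left) hne
  linarith

lemma norm_sub_le_norm_one_sub (p q : ℂ) (hp : ‖p‖ < 1) (hq : ‖q‖ < 1) :
    ‖q - p‖ ≤ ‖1 - (starRingEnd ℂ) p * q‖ := by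
  have h1 : ‖p‖ ^ 2 ≤ 1 := by have := norm_nonneg p; nlinarith
  have h2 : ‖q‖ ^ 2 ≤ 1 := by have := norm_nonneg q; nlinarith
  rw [Complex.sq_norm, normSq_apply] at h1 h2
  refine le_of_sq_le_sq ?_ (norm_nonneg _)
  rw [Complex.sq_norm, Complex.sq_norm, normSq_apply, normSq_apply]
  simp
  nlinarith [mul_nonneg (sub_nonneg.2 h1) (sub_nonneg.2 h2)]

lemma schwarz_step (U : Set ℂ) (hU : IsOpen U) (hUne : U ≠ univ) (φ : ℂ → ℂ)
    (hφ : DifferentiableOn ℂ φ U) (hφm : MapsTo φ U (ball (0:ℂ) 1))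
    (x y : ℂ) (hx : x ∈ U) (ε : ℝ) (hε0 : 0 ≤ ε) (hε : ε ≤ 1 / 2)
    (hy : dist y x ≤ ε * infDist x Uᶜ) :
    dist (φ y) (φ x) ≤ 4 * ε * (1 - ‖φ x‖) := by
  have hne : (Uᶜ).Nonempty := by rwa [nonempty_compl]
  set d := infDist x Uᶜ with hd
  have hd0 : 0 < d := by
    exact (hU.isClosed_compl.notMem_iff_infDist_pos hne).1 (by simpa using hx : x ∉ Uᶜ)
  have hsub : ball x d ⊆ U := ball_infDist_compl_subset
  have hyb : y ∈ ball x d := by rw [mem_ball]; nlinarith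
  have hn : ∀ u ∈ U, ‖φ u‖ < 1 := fun u hu => by simpa using hφm hu
  have hp := hn x hx
  have hq := hn y (hsub hyb)
  have hden : ∀ u ∈ U, 1 - (starRingEnd ℂ) (φ x) * φ u ≠ 0 := by
    intro u hu h
    have h1 : (starRingEnd ℂ) (φ x) * φ u = 1 := by linear_combination -h
    have h2 : ‖φ x‖ * ‖φ u‖ = 1 := by
      rw [← Complex.norm_conj (φ x), ← norm_mul, h1, norm_one]
    have := hn u hu
    have := norm_nonneg (φ x)
    have := norm_nonneg (φ u)
    nlinarith
  have hS := dist_le_div_mul_dist_of_mapsTo_ball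
    (f := fun u => (φ u - φ x) / (1 - (starRingEnd ℂ) (φ x) * φ u)) (R₂ := 1) (c := x) (R₁ := d)
    (((hφ.sub_const _).div ((hφ.const_mul _).const_sub 1) hden).mono hsub) (by
      intro u hu
      have h1 := norm_sub_le_norm_one_sub (φ x) (φ u) hp (hn u (hsub hu))
      simp only [mem_closedBall, sub_self, zero_div, dist_zero_right, norm_div]
      exact div_le_one_of_le₀ h1 (norm_nonneg _)) hyb
  simp only [sub_self, zero_div, dist_zero_right, norm_div] at hS
  have hle : 1 / d * dist y x ≤ ε := by
    rw [one_div, inv_mul_le_iff₀ hd0]; linarith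
  have hpos : 0 < ‖1 - (starRingEnd ℂ) (φ x) * φ y‖ := norm_pos_iff.2 (hden y (hsub hyb))
  have h3 : ‖φ y - φ x‖ ≤ ε * ‖1 - (starRingEnd ℂ) (φ x) * φ y‖ :=
    (div_le_iff₀ hpos).1 (hS.trans hle)
  have h4 : ‖1 - (starRingEnd ℂ) (φ x) * φ y‖ ≤ (1 - ‖φ x‖ ^ 2) + ‖φ y - φ x‖ := by
    have e : 1 - (starRingEnd ℂ) (φ x) * φ y
        = ((1 - ‖φ x‖ ^ 2 : ℝ) : ℂ) - (starRingEnd ℂ) (φ x) * (φ y - φ x) := by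
      push_cast
      rw [← Complex.conj_mul']
      ring
    have hnn : 0 ≤ 1 - ‖φ x‖ ^ 2 := by have := norm_nonneg (φ x); nlinarith
    rw [e]
    refine (norm_sub_le _ _).trans ?_
    rw [norm_mul, Complex.norm_conj, Complex.norm_real, Real.norm_of_nonneg hnn]
    have := mul_le_mul_of_nonneg_right hp.le (norm_nonneg (φ y - φ x))
    linarith
  rw [dist_eq]
  have h5 : 1 - ‖φ x‖ ^ 2 ≤ 2 * (1 - ‖φ x‖) := by nlinarith
  have h6 : ε * ‖1 - (starRingEnd ℂ) (φ x) * φ y‖ ≤ ε * (2 * (1 - ‖φ x‖) + ‖φ y - φ x‖) := by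
    gcongr; linarith
  have h7 : ε * ‖φ y - φ x‖ ≤ 1 / 2 * ‖φ y - φ x‖ := by gcongr
  linarith

/-- Radial projection. -/
def rproj (r : ℝ) (p : ℂ) : ℂ := ((r / max r ‖p‖ : ℝ) : ℂ) * p

lemma rproj_norm_le (r : ℝ) (hr : 0 ≤ r) (p : ℂ) : ‖rproj r p‖ ≤ ‖p‖ := by
  unfold rproj
  have hm : 0 ≤ max r ‖p‖ := le_max_of_le_left hr
  rw [norm_mul, Complex.norm_real, Real.norm_of_nonneg (div_nonneg hr hm)]
  exact mul_le_of_le_one_left (norm_nonneg _) (div_le_one_of_le₀ (le_max_left _ _) hm)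

lemma rproj_dist_le (r : ℝ) (hr : 0 ≤ r) (a b : ℂ) :
    dist (rproj r a) (rproj r b) ≤ 2 * dist a b := by
  rcases hr.eq_or_lt with rfl | hr'
  · simp [rproj]
  unfold rproj
  set A := max r ‖a‖ with hA
  set B := max r ‖b‖ with hB
  have hrA : r ≤ A := le_max_left _ _
  have hrB : r ≤ B := le_max_left _ _
  have hbB : ‖b‖ ≤ B := le_max_right _ _
  have hA0 : 0 < A := by linarith
  have hB0 : 0 < B := by linarith
  have hAB : |B - A| ≤ ‖a - b‖ := by
    have h1 : |max r ‖b‖ - max r ‖a‖| ≤ |‖b‖ - ‖a‖| := by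
      have := abs_max_sub_max_le_max r ‖b‖ r ‖a‖
      simpa using this
    rw [norm_sub_rev]
    exact h1.trans (abs_norm_sub_norm_le b a)
  rw [dist_eq, dist_eq]
  have e : ((r / A : ℝ) : ℂ) * a - ((r / B : ℝ) : ℂ) * b
      = ((r / A : ℝ) : ℂ) * (a - b) + ((r / A * ((B - A) / B) : ℝ) : ℂ) * b := by
    have hA1 : (A : ℂ) ≠ 0 := by exact_mod_cast hA0.ne'
    have hB1 : (B : ℂ) ≠ 0 := by exact_mod_cast hB0.ne'
    push_cast
    field_simp
    ring
  rw [e]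
  refine (norm_add_le _ _).trans ?_
  rw [norm_mul, norm_mul, Complex.norm_real, Complex.norm_real, norm_mul, norm_div (B - A),
    Real.norm_of_nonneg hB0.le, Real.norm_of_nonneg (div_nonneg hr hA0.le), Real.norm_eq_abs]
  have h1 : r / A ≤ 1 := div_le_one_of_le₀ hrA hA0.le
  have h0 : 0 ≤ r / A := div_nonneg hr hA0.le
  have h2 : |B - A| / B * ‖b‖ ≤ ‖a - b‖ := by
    rw [div_mul_eq_mul_div, div_le_iff₀ hB0]
    exact mul_le_mul hAB hbB (norm_nonneg _) (norm_nonneg _)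
  have h3 : r / A * ‖a - b‖ ≤ 1 * ‖a - b‖ := by gcongr
  have h4 : r / A * (|B - A| / B * ‖b‖) ≤ 1 * ‖a - b‖ :=
    mul_le_mul h1 h2 (by positivity) (by norm_num)
  rw [mul_assoc]
  linarith

lemma one_sub_tanh (t : ℝ) : 1 - Real.tanh t = 2 / (Real.exp (2 * t) + 1) := by
  rw [Real.tanh_eq]
  have h : Real.exp (2 * t) = Real.exp t * Real.exp t := by rw [← Real.exp_add]; ring_nf
  have h0 := Real.exp_pos t
  rw [h, Real.exp_neg]
  field_simp
  ring

lemma tanh_mono {s t : ℝ} (h : s ≤ t) : Real.tanh s ≤ Real.tanh t := by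
  have h1 := one_sub_tanh s
  have h2 := one_sub_tanh t
  have : 2 / (Real.exp (2 * t) + 1) ≤ 2 / (Real.exp (2 * s) + 1) := by gcongr
  linarith

lemma tanh_le_of_le_artanh {t x : ℝ} (h0 : 0 ≤ x) (h1 : x < 1) (h : t ≤ artanh x) :
    Real.tanh t ≤ x := by
  unfold artanh at h
  have hp : 0 < (1 + x) / (1 - x) := div_pos (by linarith) (by linarith)
  have h2 : Real.exp (2 * t) ≤ (1 + x) / (1 - x) := by
    rw [← Real.le_log_iff_exp_le hp]; linarith
  have h3 := one_sub_tanh t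
  have h4 : 1 - x ≤ 2 / (Real.exp (2 * t) + 1) := by
    rw [le_div_iff₀ (by positivity)]
    rw [le_div_iff₀ (by linarith)] at h2
    linarith
  linarith

lemma tanh_gap {s t : ℝ} (h : t ≤ s + 1) :
    1 - Real.tanh s ≤ 8 * (1 - Real.tanh t) := by
  rw [one_sub_tanh, one_sub_tanh, ← mul_div_assoc, div_le_div_iff₀ (by positivity) (by positivity)]
  have h1 : Real.exp (2 * t) ≤ Real.exp 1 * Real.exp 1 * Real.exp (2 * s) := by
    rw [← Real.exp_add, ← Real.exp_add]
    exact Real.exp_le_exp.2 (by linarith)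
  have h2 := Real.exp_one_lt_d9
  have h3 : Real.exp 1 * Real.exp 1 ≤ 8 := by nlinarith [Real.exp_pos 1]
  have h4 := mul_le_mul_of_nonneg_right h3 (Real.exp_pos (2 * s)).le
  linarith

lemma square_dist_le {c : ℂ} {s : ℝ} {x y : ℂ} (hx : x ∈ square c s) (hy : y ∈ square c s) :
    dist x y ≤ 2 * s := by
  obtain ⟨x1, x2⟩ := hx
  obtain ⟨y1, y2⟩ := hy
  rw [dist_eq]
  refine (Complex.norm_le_abs_re_add_abs_im _).trans ?_
  rw [sub_re, sub_im]
  rw [abs_le] at x1 x2 y1 y2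
  have h1 : |x.re - y.re| ≤ s := by rw [abs_le]; constructor <;> linarith
  have h2 : |x.im - y.im| ≤ s := by rw [abs_le]; constructor <;> linarith
  linarith

lemma square_bdd (c : ℂ) (s : ℝ) : Bornology.IsBounded (square c s) :=
  Metric.isBounded_iff.2 ⟨2 * s, fun _ hx _ hy => square_dist_le hx hy⟩

lemma center_mem (c : ℂ) {s : ℝ} (hs : 0 ≤ s) : c ∈ square c s := by
  have h2 : 0 ≤ s / 2 := by linarith
  simp [square, h2]

lemma square_diam_le (c : ℂ) {s : ℝ} (hs : 0 ≤ s) : Metric.diam (square c s) ≤ 2 * s :=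
  Metric.diam_le_of_forall_dist_le (by linarith) (fun _ hx _ hy => square_dist_le hx hy)

lemma le_square_diam (c : ℂ) {s : ℝ} (hs : 0 ≤ s) : s ≤ Metric.diam (square c s) := by
  have h1 : c + ((s / 2 : ℝ) : ℂ) ∈ square c s := by
    have h2 : 0 ≤ s / 2 := by linarith
    simp [square, abs_of_nonneg h2, h2]
  have h2 : c - ((s / 2 : ℝ) : ℂ) ∈ square c s := by
    have h2 : 0 ≤ s / 2 := by linarith
    simp [square, abs_of_nonneg h2, h2]
  have h := Metric.dist_le_diam_of_mem (square_bdd c s) h1 h2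
  have e : c + ((s / 2 : ℝ) : ℂ) - (c - ((s / 2 : ℝ) : ℂ)) = ((s : ℝ) : ℂ) := by
    push_cast; ring
  rwa [dist_eq, e, Complex.norm_real, Real.norm_of_nonneg hs] at h

lemma mem_interior_square {c : ℂ} {s : ℝ} {z : ℂ} (h1 : |z.re - c.re| < s / 2)
    (h2 : |z.im - c.im| < s / 2) : z ∈ interior (square c s) := by
  rw [mem_interior]
  refine ⟨{z : ℂ | |z.re - c.re| < s / 2} ∩ {z : ℂ | |z.im - c.im| < s / 2},
    fun z hz => ⟨le_of_lt hz.1, le_of_lt hz.2⟩, IsOpen.inter ?_ ?_, h1, h2⟩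
  · exact isOpen_lt (by fun_prop) (by fun_prop)
  · exact isOpen_lt (by fun_prop) (by fun_prop)

lemma square_segment {c : ℂ} {s : ℝ} {w : ℂ} (hw : w ∈ square c s) {θ : ℝ}
    (h0 : 0 ≤ θ) (h1 : θ ≤ 1) : c + (θ : ℂ) * (w - c) ∈ square c s := by
  obtain ⟨a, b⟩ := hw
  constructor
  · have e : (c + (θ : ℂ) * (w - c)).re - c.re = θ * (w.re - c.re) := by simp
    rw [e, abs_mul, abs_of_nonneg h0]
    exact (mul_le_of_le_one_left (abs_nonneg _) h1).trans a
  · have e : (c + (θ : ℂ) * (w - c)).im - c.im = θ * (w.im - c.im) := by simp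
    rw [e, abs_mul, abs_of_nonneg h0]
    exact (mul_le_of_le_one_left (abs_nonneg _) h1).trans b

lemma whitney_pos {U : Set ℂ} {W : Set (ℂ × ℝ)} (hW : IsWhitneyDecomp U W) {q : ℂ × ℝ}
    (hq : q ∈ W) : 0 < q.2 := by
  obtain ⟨n, hn⟩ := hW.dyadic q hq
  rw [hn]; positivity

lemma whitney_lower {U : Set ℂ} (hUne : U ≠ univ) {W : Set (ℂ × ℝ)} (hW : IsWhitneyDecomp U W)
    {q : ℂ × ℝ} (hq : q ∈ W) {x : ℂ} (hx : x ∈ square q.1 q.2) :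
    Metric.diam (square q.1 q.2) ≤ infDist x Uᶜ := by
  have hne : (Uᶜ).Nonempty := by rwa [nonempty_compl]
  refine (hW.lower q hq).trans ?_
  rw [le_infDist hne]
  intro y hy
  refine csInf_le ⟨0, ?_⟩ ⟨x, hx, y, hy, rfl⟩
  rintro d ⟨a, _, b, _, rfl⟩
  exact dist_nonneg

lemma whitney_upper {U : Set ℂ} (hUne : U ≠ univ) {W : Set (ℂ × ℝ)} (hW : IsWhitneyDecomp U W)
    {q : ℂ × ℝ} (hq : q ∈ W) {x : ℂ} (hx : x ∈ square q.1 q.2) :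
    infDist x Uᶜ ≤ 5 * Metric.diam (square q.1 q.2) := by
  obtain ⟨y, hy⟩ : (Uᶜ).Nonempty := by rwa [nonempty_compl]
  have h := hW.upper q hq
  obtain ⟨d, ⟨a, ha, b, hb, rfl⟩, hd⟩ := exists_lt_of_csInf_lt
    (⟨_, x, hx, y, hy, rfl⟩ : {d : ℝ | ∃ a ∈ square q.1 q.2, ∃ b ∈ Uᶜ, d = dist a b}.Nonempty) h
  have h1 : infDist x Uᶜ ≤ dist x b := infDist_le_dist_of_mem hb
  have h2 := dist_triangle x a b
  have h3 := Metric.dist_le_diam_of_mem (square_bdd q.1 q.2) hx ha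
  linarith

lemma packing (C : ℝ) (hC : 1 ≤ C) : ∃ M : ℕ, 0 < M ∧
    ∀ (U : Set ℂ), U ≠ univ → ∀ W : Set (ℂ × ℝ), IsWhitneyDecomp U W →
    ∀ b : ℂ, 0 < infDist b Uᶜ → ∀ T : Set (ℂ × ℝ), T ⊆ W →
    (∀ q ∈ T, ∃ x ∈ square q.1 q.2, Cmp Uᶜ C b x) → T.Finite ∧ T.ncard ≤ M := by
  obtain ⟨K, hK⟩ := exists_nat_ge (30 * C ^ 2)
  set B : Finset (ℤ × ℤ) := Finset.Icc (-(K:ℤ)) K ×ˢ Finset.Icc (-(K:ℤ)) K with hB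
  refine ⟨B.card, Finset.card_pos.2 ⟨(0, 0), by simp [hB]⟩, ?_⟩
  intro U hUne W hW b hb T hT h
  set δ := infDist b Uᶜ / (10 * C) with hδ
  have hC0 : 0 < C := by linarith
  have hδ0 : 0 < δ := by positivity
  have hside : ∀ q ∈ T, δ ≤ q.2 ∧ dist q.1 b ≤ K * δ := by
    intro q hq
    obtain ⟨x, hx, h1, h2, h3⟩ := h q hq
    have hs := whitney_pos hW (hT hq)
    have l := whitney_lower hUne hW (hT hq) hx
    have u := whitney_upper hUne hW (hT hq) hx
    have d1 := square_diam_le q.1 hs.le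
    have d2 := le_square_diam q.1 hs.le
    have hxs : infDist x Uᶜ ≤ 10 * q.2 := by linarith
    constructor
    · rw [hδ, div_le_iff₀ (by positivity)]
      have := mul_le_mul_of_nonneg_left hxs hC0.le
      linarith
    · have h4 := square_dist_le (center_mem q.1 hs.le) hx
      have h5 := dist_triangle q.1 x b
      rw [dist_comm x b] at h5
      have h6 : dist q.1 b ≤ 3 * (C * infDist b Uᶜ) := by linarith
      have h7 : 3 * (C * infDist b Uᶜ) = 30 * C ^ 2 * δ := by rw [hδ]; field_simp; norm_num
      rw [h7] at h6
      exact h6.trans (mul_le_mul_of_nonneg_right hK hδ0.le)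
  let f : ℂ × ℝ → ℤ × ℤ := fun q => (⌊(q.1.re - b.re) / δ⌋, ⌊(q.1.im - b.im) / δ⌋)
  have hfl : ∀ y : ℝ, |y| ≤ K * δ → ⌊y / δ⌋ ∈ Finset.Icc (-(K:ℤ)) K := by
    intro y hy
    rw [abs_le] at hy
    rw [Finset.mem_Icc]
    constructor
    · rw [Int.le_floor, le_div_iff₀ hδ0]; push_cast; linarith
    · have : y / δ ≤ K := by rw [div_le_iff₀ hδ0]; linarith
      have h1 := (Int.floor_le (y / δ)).trans this
      exact_mod_cast h1
  have hmaps : MapsTo f T (B : Set (ℤ × ℤ)) := by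
    intro q hq
    have hd := (hside q hq).2
    rw [dist_eq] at hd
    have h1 := (Complex.abs_re_le_norm (q.1 - b)).trans hd
    have h2 := (Complex.abs_im_le_norm (q.1 - b)).trans hd
    rw [Finset.mem_coe, hB, Finset.mem_product]
    exact ⟨hfl _ h1, hfl _ h2⟩
  have hclose : ∀ y y' : ℝ, ⌊y / δ⌋ = ⌊y' / δ⌋ → |y - y'| < δ := by
    intro y y' hyy
    have := Int.abs_sub_lt_one_of_floor_eq_floor hyy
    rw [← sub_div, abs_div, abs_of_pos hδ0, div_lt_one hδ0] at this
    exact this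
  have hinj : InjOn f T := by
    intro q hq q' hq' hf
    by_contra hne
    have hd := hW.disjInt q (hT hq) q' (hT hq') hne
    have e1 := hclose _ _ (congrArg Prod.fst hf)
    have e2 := hclose _ _ (congrArg Prod.snd hf)
    have s1 := (hside q hq).1
    have s2 := (hside q' hq').1
    rw [abs_lt] at e1 e2
    set m : ℂ := ⟨(q.1.re + q'.1.re) / 2, (q.1.im + q'.1.im) / 2⟩ with hm
    have hmem : m ∈ interior (square q.1 q.2) ∩ interior (square q'.1 q'.2) := by
      constructor
      · apply mem_interior_square <;> rw [abs_lt] <;> constructor <;> simp only [hm] <;> linarith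
      · apply mem_interior_square <;> rw [abs_lt] <;> constructor <;> simp only [hm] <;> linarith
    rw [hd] at hmem
    exact hmem
  refine ⟨Set.Finite.of_injOn hmaps hinj B.finite_toSet, ?_⟩
  have := Set.ncard_le_ncard_of_injOn f hmaps hinj B.finite_toSet
  rwa [Set.ncard_coe_finset] at this

/-- There exists a universal constant `c₀ > 0` with the following property.  Let `U ⊆ ℂ`
be a simply connected domain, `𝒲` a Whitney square decomposition of `U`, and
`Q₀, Q₁ ∈ 𝒲`.  For `j ∈ ℕ`, `j ≥ 1`, let `ℱ_j` be the set of squares `Q̃ ∈ 𝒲` such that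
some hyperbolic geodesic in `U` (parameterized by hyperbolic length) from `cen(Q₀)` to a
point of `Q₁` passes through `Q̃` at some time `t ∈ [j−1, j)`.  (The geodesic from
`cen(Q₀) = ψ(0)` to `w` is `t ↦ ψ(tanh(t) φ(w)/|φ(w)|)` for `t ∈ [0, artanh |φ(w)|]`,
where `ψ : 𝔻 → U` is a Riemann map with inverse `φ`.)  Then `|ℱ_j| ≤ c₀` for every `j`. -/
theorem stmt10 : ∃ M : ℕ, 0 < M ∧
    ∀ (U : Set ℂ), IsOpen U → U ≠ univ →
    ∀ φ ψ : ℂ → ℂ,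
    DifferentiableOn ℂ φ U → BijOn φ U (ball (0:ℂ) 1) →
    DifferentiableOn ℂ ψ (ball (0:ℂ) 1) → BijOn ψ (ball (0:ℂ) 1) U →
    (∀ z ∈ ball (0:ℂ) 1, φ (ψ z) = z) → (∀ z ∈ U, ψ (φ z) = z) →
    ∀ W : Set (ℂ × ℝ), IsWhitneyDecomp U W →
    ∀ Q₀ ∈ W, ∀ Q₁ ∈ W, ψ 0 = Q₀.1 →
    ∀ j : ℕ, 1 ≤ j →
      {q ∈ W | ∃ w ∈ square Q₁.1 Q₁.2, ∃ t : ℝ,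
        (j : ℝ) - 1 ≤ t ∧ t < (j : ℝ) ∧ t ≤ artanh ‖φ w‖ ∧
        ψ ((Real.tanh t / ‖φ w‖ : ℝ) * φ w : ℂ) ∈ square q.1 q.2}.Finite ∧
      {q ∈ W | ∃ w ∈ square Q₁.1 Q₁.2, ∃ t : ℝ,
        (j : ℝ) - 1 ≤ t ∧ t < (j : ℝ) ∧ t ≤ artanh ‖φ w‖ ∧
        ψ ((Real.tanh t / ‖φ w‖ : ℝ) * φ w : ℂ) ∈ square q.1 q.2}.ncard ≤ M := by
  obtain ⟨N, hN⟩ : ∃ N : ℕ, N = 8000 := ⟨_, rfl⟩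
  have hNR : (N : ℝ) = 8000 := by rw [hN]; norm_num
  have hC : (1:ℝ) ≤ 2 ^ N := one_le_pow₀ (by norm_num)
  obtain ⟨M, hM, hpack⟩ := packing ((2:ℝ) ^ N + 2 ^ N * 2 ^ N) (by nlinarith)
  refine ⟨M, hM, ?_⟩
  intro U hU hUne φ ψ hφ hφb hψ hψb hl hr W hW Q₀ hQ₀ Q₁ hQ₁ _ j hj
  have hφm : ∀ u ∈ U, ‖φ u‖ < 1 := fun u hu => by simpa using hφb.mapsTo hu
  have hs₁ := whitney_pos hW hQ₁
  have hsqU : ∀ u ∈ square Q₁.1 Q₁.2, u ∈ U := by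
    intro u hu
    rw [hW.cover]
    exact mem_biUnion hQ₁ hu
  have hj0 : (0:ℝ) ≤ (j:ℝ) - 1 := by
    have : (1:ℝ) ≤ j := by exact_mod_cast hj
    linarith
  set r := Real.tanh ((j:ℝ) - 1) with hrdef
  have hr0 : 0 ≤ r := by
    have := tanh_mono hj0
    rwa [Real.tanh_zero] at this
  have step := disk_step U hU hUne φ ψ hφ.continuousOn hψ hψb.mapsTo hl hr
  have hne : (Uᶜ).Nonempty := by rwa [nonempty_compl]
  have hcU := hsqU _ (center_mem Q₁.1 hs₁.le)
  refine hpack U hUne W hW (ψ (rproj r (φ Q₁.1))) ?_ _ (fun q hq => hq.1) ?_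
  · refine (hU.isClosed_compl.notMem_iff_infDist_pos hne).1 ?_
    rw [notMem_compl_iff]
    refine hψb.mapsTo ?_
    rw [mem_ball_zero_iff]
    exact (rproj_norm_le r hr0 _).trans_lt (hφm _ hcU)
  rintro q ⟨-, w, hw, t, ht1, ht2, ht3, hx⟩
  refine ⟨_, hx, ?_⟩
  have hp1 := hφm w (hsqU w hw)
  have htp : Real.tanh t ≤ ‖φ w‖ := tanh_le_of_le_artanh (norm_nonneg _) hp1 ht3
  have hrt : r ≤ Real.tanh t := tanh_mono ht1
  have hgap : 1 - r ≤ 8 * (1 - Real.tanh t) := tanh_gap (by linarith)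
  have ht1' := Real.tanh_lt_one t
  refine Cmp.trans' (y := ψ (rproj r (φ w))) (by positivity) (by positivity) ?_ ?_
  · -- chain along the segment from the centre of `Q₁` to `w`
    have hch := chain_cmp Uᶜ
      (fun i => ψ (rproj r (φ (Q₁.1 + (((i:ℝ) / N : ℝ) : ℂ) * (w - Q₁.1))))) N ?_
    · have hN0 : ((N:ℝ) / N) = 1 := by rw [hNR]; norm_num
      simpa only [hN0, Nat.cast_zero, zero_div, Complex.ofReal_zero, zero_mul, add_zero,
        Complex.ofReal_one, one_mul, add_sub_cancel] using hch
    · intro i hi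
      have hiN : (i:ℝ) + 1 ≤ N := by exact_mod_cast hi
      have hmem : Q₁.1 + (((i:ℝ) / N : ℝ) : ℂ) * (w - Q₁.1) ∈ square Q₁.1 Q₁.2 :=
        square_segment hw (by positivity) (by rw [div_le_one (by rw [hNR]; norm_num)]; linarith)
      have hxU := hsqU _ hmem
      have hx1 := hφm _ hxU
      refine step _ _ ((rproj_norm_le r hr0 _).trans_lt hx1) ?_
      have hdd : dist (Q₁.1 + ((((i + 1 : ℕ):ℝ) / N : ℝ) : ℂ) * (w - Q₁.1))
          (Q₁.1 + (((i:ℝ) / N : ℝ) : ℂ) * (w - Q₁.1)) ≤ 1 / 8000 *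
          infDist (Q₁.1 + (((i:ℝ) / N : ℝ) : ℂ) * (w - Q₁.1)) Uᶜ := by
        rw [dist_eq]
        have e : (Q₁.1 + ((((i + 1 : ℕ):ℝ) / N : ℝ) : ℂ) * (w - Q₁.1)) -
          (Q₁.1 + (((i:ℝ) / N : ℝ) : ℂ) * (w - Q₁.1)) = ((1 / 8000 : ℝ) : ℂ) * (w - Q₁.1) := by
          rw [hNR]; push_cast; ring
        rw [e, norm_mul, Complex.norm_real, Real.norm_of_nonneg (by norm_num), ← dist_eq]
        refine mul_le_mul_of_nonneg_left ?_ (by norm_num)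
        exact (Metric.dist_le_diam_of_mem (square_bdd _ _) hw (center_mem _ hs₁.le)).trans
          (whitney_lower hUne hW hQ₁ hmem)
      have h1 := schwarz_step U hU hUne φ hφ hφb.mapsTo _ _ hxU (1 / 8000) (by norm_num)
        (by norm_num) hdd
      refine (rproj_dist_le r hr0 _ _).trans ?_
      have h2 := rproj_norm_le r hr0 (φ (Q₁.1 + (((i:ℝ) / N : ℝ) : ℂ) * (w - Q₁.1)))
      linarith
  · -- radial chain
    have hch := chain_cmp Uᶜ
      (fun i => ψ ((((r + (i:ℝ) / N * (Real.tanh t - r)) / ‖φ w‖ : ℝ) : ℂ) * φ w)) N ?_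
    · have hN0 : ((N:ℝ) / N) = 1 := by rw [hNR]; norm_num
      have hmax : max r ‖φ w‖ = ‖φ w‖ := max_eq_right (hrt.trans htp)
      rw [rproj, hmax]
      simpa only [hN0, Nat.cast_zero, zero_div, zero_mul, add_zero,
        one_mul, add_sub_cancel] using hch
    · intro i hi
      have hiN : (i:ℝ) + 1 ≤ N := by exact_mod_cast hi
      have hθ1 : (i:ℝ) / N ≤ 1 := by rw [div_le_one (by rw [hNR]; norm_num)]; linarith
      have hθ0 : 0 ≤ (i:ℝ) / N := by positivity
      have hnl : ∀ ρ : ℝ, 0 ≤ ρ → ‖((ρ / ‖φ w‖ : ℝ) : ℂ) * φ w‖ ≤ ρ := by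
        intro ρ hρ
        rw [norm_mul, Complex.norm_real, Real.norm_of_nonneg (by positivity)]
        rcases (norm_nonneg (φ w)).eq_or_lt with h | h
        · rw [← h]; simpa using hρ
        · rw [div_mul_cancel₀ _ h.ne']
      have hb0 : 0 ≤ (i:ℝ) / N * (Real.tanh t - r) := mul_nonneg hθ0 (by linarith)
      have hb1 : (i:ℝ) / N * (Real.tanh t - r) ≤ Real.tanh t - r :=
        mul_le_of_le_one_left (by linarith) hθ1
      have h1 := hnl (r + (i:ℝ) / N * (Real.tanh t - r)) (by linarith)
      refine step _ _ (by linarith) ?_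
      rw [dist_eq]
      have e : (((r + ((i + 1 : ℕ):ℝ) / N * (Real.tanh t - r)) / ‖φ w‖ : ℝ) : ℂ) * φ w -
          (((r + (i:ℝ) / N * (Real.tanh t - r)) / ‖φ w‖ : ℝ) : ℂ) * φ w =
          (((Real.tanh t - r) / 8000 / ‖φ w‖ : ℝ) : ℂ) * φ w := by
        rw [← sub_mul, ← Complex.ofReal_sub]
        congr 2
        rw [hNR]; push_cast; ring
      rw [e]
      refine (hnl _ (by linarith)).trans ?_
      linarith

end
end

section
/- Fix C > 0 and r₀ ≥ 2. Let D̃ ⊆ ℍ be a simply connected domain with i ∈ D̃ and with 0 a prime end of ∂ℍ also in ∂D̃, and suppose inrad(D̃) ≥ r₀ (i.e., B(0, r₀) ∩ ℍ ⊆ D̃). Let z₀ ∈ D̃ with dist_hyp^{D̃}(z₀, i) ≤ C. Then there exists C̃ > 0 depending only on r₀ and C such that dist_hyp^{D̃}(γ^{D̃}_{z₀,0}(t), γ^{ℍ}_{i,0}(ℝ₊)) ≤ C̃ e^{−t} for all t ≥ 0, where γ^{D̃}_{z₀,0} and γ^{ℍ}_{i,0} are the unit-speed hyperbolic geodesics from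 z₀ to 0 in D̃ and from i to 0 in ℍ respectively. -/
open Complex Set Metric MeasureTheory

noncomputable section

/-- The length of a `C¹` curve `γ : [0,1] → ℂ` with respect to a conformal density `ρ`. -/
def pathLen (ρ : ℂ → ℝ) (γ : ℝ → ℂ) : ℝ :=
  ∫ t in (0:ℝ)..1, ρ (γ t) * ‖deriv γ t‖

/-- `C¹` curves from `z` to `w` staying in `D`. -/
def PathsIn (D : Set ℂ) (z w : ℂ) : Set (ℝ → ℂ) :=
  {γ | ContDiff ℝ 1 γ ∧ γ 0 = z ∧ γ 1 = w ∧ ∀ t ∈ Icc (0:ℝ) 1, γ t ∈ D}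

/-- The conformal distance on `D` associated to the density `ρ`. -/
def confDist (ρ : ℂ → ℝ) (D : Set ℂ) (z w : ℂ) : ℝ :=
  sInf (pathLen ρ '' PathsIn D z w)

/-- The hyperbolic density on `D`, pulled back from `1/(1-|z|²)` on the unit disk via a
Riemann map `φ : D → 𝔻`. -/
def hypDensity (φ : ℂ → ℂ) (z : ℂ) : ℝ := ‖deriv φ z‖ / (1 - ‖φ z‖ ^ 2)

/-- The hyperbolic distance on `D`, where `φ` is a Riemann map from `D` onto the unit disk. -/
def distHyp (φ : ℂ → ℂ) (D : Set ℂ) (z w : ℂ) : ℝ := confDist (hypDensity φ) D z w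

/-- Hyperbolic distance from a point to a set in `D`. -/
def distHypToSet (φ : ℂ → ℂ) (D : Set ℂ) (z : ℂ) (S : Set ℂ) : ℝ :=
  sInf (distHyp φ D z '' S)


lemma aux_normSq_conj (a b : ℂ) :
    normSq (a - (starRingEnd ℂ) b) = normSq (a - b) + 4 * (a.im * b.im) := by
  simp [normSq_apply]; ring

/-- Schwarz–Pick for the upper half plane. -/
lemma aux_sp (f : ℂ → ℂ) (hd : DifferentiableOn ℂ f {z : ℂ | 0 < z.im})
    (hm : ∀ z : ℂ, 0 < z.im → 0 < (f z).im) (z w : ℂ) (hz : 0 < z.im) (hw : 0 < w.im) :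
    normSq (f z - f w) * (z.im * w.im) ≤ normSq (z - w) * ((f z).im * (f w).im) := by
  set M : ℂ → ℂ := fun ζ => (w - (starRingEnd ℂ) w * ζ) / (1 - ζ) with hM
  have hne : ∀ ζ ∈ ball (0:ℂ) 1, 1 - ζ ≠ 0 := by
    intro ζ hζ h
    have : ζ = 1 := (sub_eq_zero.mp h).symm
    simp [this] at hζ
  have hMim : ∀ ζ ∈ ball (0:ℂ) 1, 0 < (M ζ).im := by
    intro ζ hζ
    have h1 : (M ζ).im = w.im * (1 - normSq ζ) / normSq (1 - ζ) := by
      simp only [hM, Complex.div_im]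
      rw [← sub_div]
      congr 1
      simp [normSq_apply]; ring
    rw [h1]
    have h2 : 0 < normSq (1 - ζ) := normSq_pos.mpr (hne ζ hζ)
    have h3 : normSq ζ < 1 := by
      rw [normSq_eq_norm_sq]
      have : ‖ζ‖ < 1 := by simpa using hζ
      nlinarith [norm_nonneg ζ]
    have : 0 < 1 - normSq ζ := by linarith
    positivity
  have hden : ∀ a b : ℂ, 0 < a.im → 0 < b.im → a - (starRingEnd ℂ) b ≠ 0 := by
    intro a b ha hb h
    have := congrArg Complex.im h
    simp at this
    linarith
  have hlt : ∀ a b : ℂ, 0 < a.im → 0 < b.im → ‖(a - b) / (a - (starRingEnd ℂ) b)‖ < 1 := by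
    intro a b ha hb
    rw [norm_div, div_lt_one (norm_pos_iff.mpr (hden a b ha hb))]
    apply lt_of_pow_lt_pow_left₀ 2 (norm_nonneg _)
    rw [← normSq_eq_norm_sq, ← normSq_eq_norm_sq, aux_normSq_conj]
    have := mul_pos ha hb
    linarith
  set g : ℂ → ℂ := fun ζ => (f (M ζ) - f w) / (f (M ζ) - (starRingEnd ℂ) (f w)) with hg
  have hMd : DifferentiableOn ℂ M (ball 0 1) := by
    apply DifferentiableOn.div
    · fun_prop
    · fun_prop
    · exact hne
  have hfM : DifferentiableOn ℂ (fun ζ => f (M ζ)) (ball 0 1) := hd.comp hMd hMim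
  have hgd : DifferentiableOn ℂ g (ball 0 1) := by
    apply DifferentiableOn.div
    · exact hfM.sub_const _
    · exact hfM.sub_const _
    · intro ζ hζ
      exact hden _ _ (hm _ (hMim ζ hζ)) (hm _ hw)
  have hgm : MapsTo g (ball 0 1) (closedBall 0 1) := by
    intro ζ hζ
    have := hlt _ _ (hm _ (hMim ζ hζ)) (hm _ hw)
    rw [mem_closedBall_zero_iff]
    exact this.le
  have hg0 : g 0 = 0 := by simp [hg, hM]
  have key := norm_le_norm_of_mapsTo_ball hgd hgm hg0 (hlt z w hz hw)
  have hMz : M ((z - w) / (z - (starRingEnd ℂ) w)) = z := by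
    have h1 := hden z w hz hw
    have h2 := hden w w hw hw
    simp only [hM]
    rw [one_sub_div h1]
    have : z - (starRingEnd ℂ) w - (z - w) = w - (starRingEnd ℂ) w := by ring
    rw [this]
    field_simp
    ring
  simp only [hg, hMz] at key
  rw [norm_div, norm_div, div_le_div_iff₀ (norm_pos_iff.mpr (hden _ _ (hm z hz) (hm w hw)))
    (norm_pos_iff.mpr (hden _ _ hz hw))] at key
  have k2 := pow_le_pow_left₀ (by positivity) key 2
  rw [mul_pow, mul_pow, ← normSq_eq_norm_sq, ← normSq_eq_norm_sq, ← normSq_eq_norm_sq,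
    ← normSq_eq_norm_sq, aux_normSq_conj, aux_normSq_conj] at k2
  nlinarith

/-- derivative form, for maps into the closed half plane. -/
lemma aux_sp_deriv (f : ℂ → ℂ) (hd : DifferentiableOn ℂ f {z : ℂ | 0 < z.im})
    (hm : ∀ z : ℂ, 0 < z.im → 0 ≤ (f z).im) (w : ℂ) (hw : 0 < w.im) :
    ‖deriv f w‖ * w.im ≤ (f w).im := by
  apply le_of_forall_pos_le_add
  intro ε hε
  have hop : IsOpen {z : ℂ | 0 < z.im} := isOpen_lt continuous_const Complex.continuous_im
  have hfd : DifferentiableAt ℂ f w := hd.differentiableAt (hop.mem_nhds hw)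
  set g : ℂ → ℂ := fun z => f z + ε * I with hg
  have hgim : ∀ z, (g z).im = (f z).im + ε := by intro z; simp [hg]
  have h := fun z hz => aux_sp g (hd.add_const _) (fun z hz => by
    rw [hgim]; linarith [hm z hz]) z w hz hw
  have hs : Filter.Tendsto (fun z => ‖slope f w z‖ ^ 2 * (z.im * w.im)) (nhdsWithin w {w}ᶜ)
      (nhds (‖deriv f w‖ ^ 2 * (w.im * w.im))) := by
    apply Filter.Tendsto.mul
    · exact (hfd.hasDerivAt.tendsto_slope.norm).pow 2
    · apply Filter.Tendsto.mul_const
      exact (Complex.continuous_im.tendsto w).mono_left nhdsWithin_le_nhds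
  have ht : Filter.Tendsto (fun z => (g z).im * (g w).im) (nhdsWithin w {w}ᶜ)
      (nhds ((g w).im * (g w).im)) := by
    apply Filter.Tendsto.mul_const
    have : ContinuousAt (fun z => (g z).im) w := by
      apply Complex.continuous_im.continuousAt.comp
      exact (hfd.add_const _).continuousAt
    exact this.tendsto.mono_left nhdsWithin_le_nhds
  have hle : ‖deriv f w‖ ^ 2 * (w.im * w.im) ≤ (g w).im * (g w).im := by
    apply le_of_tendsto_of_tendsto hs ht
    have : ∀ᶠ z in nhdsWithin w {w}ᶜ, 0 < z.im := nhdsWithin_le_nhds (hop.mem_nhds hw)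
    filter_upwards [this, self_mem_nhdsWithin] with z hz hzw
    have h1 := h z hz
    have hzw' : z - w ≠ 0 := sub_ne_zero.mpr hzw
    have e : g z - g w = (z - w) * slope f w z := by
      rw [slope_def_field]; simp only [hg]; field_simp; ring
    rw [e, normSq_mul, mul_assoc] at h1
    have := le_of_mul_le_mul_left h1 (normSq_pos.mpr hzw')
    rwa [normSq_eq_norm_sq] at this
  rw [← hgim]
  have h0 : 0 ≤ (g w).im := by rw [hgim]; linarith [hm w hw]
  apply le_of_sq_le_sq _ h0
  nlinarith

/-- Schwarz–Pick density bound at the centre of a disc. -/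
lemma aux_density (f : ℂ → ℂ) (z : ℂ) (y : ℝ) (hy : 0 < y)
    (hd : DifferentiableOn ℂ f (ball z y)) (hm : ∀ x ∈ ball z y, ‖f x‖ < 1) :
    ‖deriv f z‖ / (1 - ‖f z‖ ^ 2) ≤ 1 / y := by
  have hzb : z ∈ ball z y := mem_ball_self hy
  have hb := hm z hzb
  set b := f z with hbdef
  have hb2 : ‖b‖ ^ 2 < 1 := by nlinarith [norm_nonneg b]
  have hden : ∀ x ∈ ball z y, 1 - (starRingEnd ℂ) b * f x ≠ 0 := by
    intro x hx h
    have h1 : (starRingEnd ℂ) b * f x = 1 := (sub_eq_zero.mp h).symm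
    have h2 : ‖b‖ * ‖f x‖ = 1 := by
      have := congrArg norm h1
      simpa using this
    nlinarith [norm_nonneg b, norm_nonneg (f x), hm x hx]
  set g : ℂ → ℂ := fun x => (f x - b) / (1 - (starRingEnd ℂ) b * f x) with hg
  have hgd : DifferentiableOn ℂ g (ball z y) :=
    (hd.sub_const _).div ((hd.const_mul _).const_sub _) hden
  have hgz : g z = 0 := by simp [hg, hbdef]
  have hgm : MapsTo g (ball z y) (closedBall (g z) 1) := by
    intro x hx
    rw [hgz, mem_closedBall_zero_iff]
    simp only [hg]
    rw [norm_div, div_le_one (norm_pos_iff.mpr (hden x hx))]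
    apply le_of_sq_le_sq _ (norm_nonneg _)
    have hx2 : ‖f x‖ ^ 2 < 1 := by nlinarith [norm_nonneg (f x), hm x hx]
    have e : normSq (1 - (starRingEnd ℂ) b * f x) =
        normSq (f x - b) + (1 - normSq b) * (1 - normSq (f x)) := by
      simp [normSq_apply]; ring
    simp only [normSq_eq_norm_sq] at e
    nlinarith
  have key := norm_deriv_le_div_of_mapsTo_ball hgd hgm hy
  have hfd : DifferentiableAt ℂ f z := hd.differentiableAt (isOpen_ball.mem_nhds hzb)
  have hder : deriv g z = deriv f z / (1 - (starRingEnd ℂ) b * b) := by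
    have h1 := (hfd.hasDerivAt.sub_const b).div
      ((hfd.hasDerivAt.const_mul ((starRingEnd ℂ) b)).const_sub 1) (hden z hzb)
    have h2 := h1.deriv
    have h0 := hden z hzb
    have hE : deriv g z = _ := h2
    rw [hE]
    rw [← hbdef] at h0 ⊢
    field_simp
    ring
  have hn : ‖(1 - (starRingEnd ℂ) b * b)‖ = 1 - ‖b‖ ^ 2 := by
    have : (1 - (starRingEnd ℂ) b * b) = ((1 - ‖b‖ ^ 2 : ℝ) : ℂ) := by
      rw [← normSq_eq_conj_mul_self, normSq_eq_norm_sq]; push_cast; ring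
    rw [this, Complex.norm_real, Real.norm_of_nonneg (by linarith)]
  rwa [hder, norm_div, hn] at key

lemma aux_ratio (A b : ℕ → ℂ) (b₀ : ℂ) (hA : Filter.Tendsto (fun n => ‖A n‖) Filter.atTop Filter.atTop)
    (hb : Filter.Tendsto b Filter.atTop (nhds b₀)) :
    Filter.Tendsto (fun n => normSq (b n - A n) / normSq (A n)) Filter.atTop (nhds 1) := by
  have hinv : Filter.Tendsto (fun n => (A n)⁻¹) Filter.atTop (nhds 0) := by
    rw [tendsto_zero_iff_norm_tendsto_zero]
    simp only [norm_inv]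
    exact hA.inv_tendsto_atTop
  have h1 : Filter.Tendsto (fun n => normSq (b n * (A n)⁻¹ - 1)) Filter.atTop (nhds 1) := by
    have := (Complex.continuous_normSq.tendsto _).comp ((hb.mul hinv).sub_const 1)
    simpa [Function.comp_def] using this
  refine h1.congr' ?_
  filter_upwards [hA.eventually_gt_atTop 0] with n hn
  have hn' : A n ≠ 0 := norm_pos_iff.mp hn
  rw [← normSq_div]
  congr 1
  field_simp

lemma aux_F_ineq (F : ℂ → ℂ) (hF : DifferentiableOn ℂ F {z : ℂ | 0 < z.im})
    (hFm : ∀ z : ℂ, 0 < z.im → 0 < (F z).im) (η : ℝ) (hη : 0 < η) (w : ℂ) (hw : 0 < w.im) :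
    normSq (F w - F (η * I)) / normSq (F (η * I)) *
      (normSq (F (η * I)) / (η * (F (η * I)).im)) * w.im ≤
      normSq (w - η * I) / normSq ((η : ℂ) * I) * (F w).im := by
  have hi : 0 < ((η : ℂ) * I).im := by simpa using hη
  have h := aux_sp F hF hFm w (η * I) hw hi
  have hA := hFm _ hi
  have hA0 : 0 < normSq (F (η * I)) := normSq_pos.mpr (fun h => by simp [h] at hA)
  have e1 : ((η : ℂ) * I).im = η := by simp
  have e2 : normSq ((η : ℂ) * I) = η * η := by simp [normSq_apply]
  rw [e1] at h
  rw [e2]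
  set A := F (η * I)
  have e3 : normSq (F w - A) / normSq A * (normSq A / (η * A.im)) * w.im =
    normSq (F w - A) * w.im / (η * A.im) := by field_simp
  rw [e3, div_mul_eq_mul_div, div_le_div_iff₀ (by positivity) (by positivity)]
  nlinarith

lemma aux_core (F H : ℂ → ℂ) (hF : DifferentiableOn ℂ F {z : ℂ | 0 < z.im})
    (hFm : ∀ z : ℂ, 0 < z.im → 0 < (F z).im) (hH : DifferentiableOn ℂ H {z : ℂ | 0 < z.im})
    (hHm : ∀ z : ℂ, 0 < z.im → 0 < (H z).im)
    (hinv : ∀ w : ℂ, 0 < w.im → 1 / 2 < ‖F w‖ → H (F w + 1 / 4 * (F w)⁻¹) = w)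
    (hlim : Filter.Tendsto (fun η : ℝ => ‖F (η * I)‖) Filter.atTop Filter.atTop) :
    ∃ a : ℝ, 0 < a ∧ ∀ w : ℂ, 0 < w.im → a * w.im ≤ (F w).im ∧ (F w).im ≤ a * w.im + 1 / 2 := by
  set q : ℝ → ℝ := fun η => normSq (F (η * I)) / (η * (F (η * I)).im) with hq
  have hAim : ∀ η : ℝ, 0 < η → 0 < (F (η * I)).im := fun η hη => hFm _ (by simpa using hη)
  -- basic limits
  have hIlim : ∀ η : ℕ → ℝ, Filter.Tendsto η Filter.atTop Filter.atTop →
      Filter.Tendsto (fun n => ‖(η n : ℂ) * I‖) Filter.atTop Filter.atTop := by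
    intro η hη
    have := Filter.tendsto_abs_atTop_atTop.comp hη
    simpa [Function.comp_def] using this
  have hr1 : ∀ η : ℕ → ℝ, Filter.Tendsto η Filter.atTop Filter.atTop → ∀ b : ℂ,
      Filter.Tendsto (fun n => normSq (b - F (η n * I)) / normSq (F (η n * I))) Filter.atTop (nhds 1) :=
    fun η hη b => aux_ratio (fun n => F (η n * I)) (fun _ => b) b (hlim.comp hη) tendsto_const_nhds
  have hr2 : ∀ η : ℕ → ℝ, Filter.Tendsto η Filter.atTop Filter.atTop → ∀ b : ℂ,
      Filter.Tendsto (fun n => normSq (b - η n * I) / normSq ((η n : ℂ) * I)) Filter.atTop (nhds 1) :=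
    fun η hη b => aux_ratio (fun n => η n * I) (fun _ => b) b (hIlim η hη) tendsto_const_nhds
  -- boundedness of q
  have hnat : Filter.Tendsto (fun n : ℕ => (n : ℝ)) Filter.atTop Filter.atTop :=
    tendsto_natCast_atTop_atTop
  have hbd : ∀ᶠ n : ℕ in Filter.atTop, q n ∈ Icc 0 (4 * (F I).im) := by
    filter_upwards [(hr1 _ hnat (F I)).eventually_const_lt (show (1/2 : ℝ) < 1 by norm_num),
      (hr2 _ hnat I).eventually_lt_const (show (1 : ℝ) < 2 by norm_num),
      Filter.eventually_gt_atTop 0] with n h1 h2 h3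
    have hn : (0:ℝ) < n := by exact_mod_cast h3
    have h := aux_F_ineq F hF hFm n hn I (by simp)
    have hpos := hAim n hn
    have hq0 : 0 ≤ q n := by
      have := normSq_nonneg (F ((n:ℝ) * I))
      simp only [hq]; positivity
    refine ⟨hq0, ?_⟩
    have hFI := hFm I (by simp)
    change _ * q n * _ ≤ _ at h
    simp only [I_im, mul_one] at h
    nlinarith
  obtain ⟨a, ha, σ, hσ, hσlim⟩ := isCompact_Icc.tendsto_subseq' hbd.frequently
  set η : ℕ → ℝ := fun n => (σ n : ℝ) with hη
  have hηlim : Filter.Tendsto η Filter.atTop Filter.atTop := hnat.comp hσ.tendsto_atTop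
  have hqlim : Filter.Tendsto (fun n => q (η n)) Filter.atTop (nhds a) := hσlim
  have hlow : ∀ w : ℂ, 0 < w.im → a * w.im ≤ (F w).im := by
    intro w hw
    have t1 := ((hr1 η hηlim (F w)).mul hqlim).mul_const w.im
    have t2 := (hr2 η hηlim w).mul_const (F w).im
    rw [one_mul] at t1 t2
    apply le_of_tendsto_of_tendsto t1 t2
    filter_upwards [hηlim.eventually_gt_atTop 0] with n hn
    exact aux_F_ineq F hF hFm (η n) hn w hw
  have him : ∀ z : ℂ, z ≠ 0 → (z + 1 / 4 * z⁻¹).im = z.im * (1 - 1 / 4 * (normSq z)⁻¹) := by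
    intro z hz
    simp [Complex.inv_im]
    ring
  have hup : ∀ v : ℂ, 0 < v.im → v.im ≤ a * (H v).im := by
    intro v hv
    have hAl : Filter.Tendsto (fun n => ‖F (η n * I)‖) Filter.atTop Filter.atTop := hlim.comp hηlim
    have hAinv : Filter.Tendsto (fun n => (F (η n * I))⁻¹) Filter.atTop (nhds 0) := by
      rw [tendsto_zero_iff_norm_tendsto_zero]
      simp only [norm_inv]
      exact hAl.inv_tendsto_atTop
    have t1 := hr2 η hηlim (H v)
    have t2 : Filter.Tendsto (fun n => 1 - 1 / 4 * (normSq (F (η n * I)))⁻¹) Filter.atTop (nhds 1) := by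
      have := (((Complex.continuous_normSq.tendsto _).comp hAinv).const_mul (1/4)).const_sub 1
      simpa [Function.comp_def] using this
    have t3 : Filter.Tendsto (fun n => normSq ((v - 1 / 4 * (F (η n * I))⁻¹) - F (η n * I)) /
        normSq (F (η n * I))) Filter.atTop (nhds 1) := by
      apply aux_ratio (fun n => F (η n * I)) (fun n => v - 1 / 4 * (F (η n * I))⁻¹) v hAl
      have := (hAinv.const_mul (1/4)).const_sub v
      simpa using this
    have s1 := (t1.mul t2).mul_const v.im
    have s2 := (t3.mul hqlim).mul_const (H v).im
    rw [one_mul] at s1 s2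
    rw [one_mul] at s1
    apply le_of_tendsto_of_tendsto s1 s2
    filter_upwards [hηlim.eventually_gt_atTop 0, hAl.eventually_gt_atTop (1/2)] with n hn hA
    have hA1 := hAim _ hn
    have hinvn := hinv (η n * I) (by simpa using hn) hA
    set A := F (η n * I) with hAdef
    have hA0 : A ≠ 0 := fun h => by rw [h] at hA1; simp at hA1
    have hAsq : 0 < normSq A := normSq_pos.mpr hA0
    have hA4 : 1 / 4 < normSq A := by rw [normSq_eq_norm_sq]; nlinarith
    have hk : 0 < 1 - 1 / 4 * (normSq A)⁻¹ := by
      rw [sub_pos, ← div_eq_mul_inv, div_lt_one hAsq]; exact hA4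
    have hvn : 0 < (A + 1 / 4 * A⁻¹).im := by rw [him A hA0]; positivity
    have h := aux_sp H hH hHm v (A + 1 / 4 * A⁻¹) hv hvn
    rw [hinvn, him A hA0] at h
    have e1 : ((η n : ℂ) * I).im = η n := by simp
    have e2 : normSq ((η n : ℂ) * I) = η n * η n := by simp [normSq_apply]
    rw [e1] at h
    have e3 : v - (A + 1 / 4 * A⁻¹) = v - 1 / 4 * A⁻¹ - A := by ring
    rw [e3] at h
    have e4 : normSq (v - 1 / 4 * A⁻¹ - A) / normSq A * q (η n) * (H v).im =
      normSq (v - 1 / 4 * A⁻¹ - A) * (H v).im / (η n * A.im) := by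
      simp only [hq]; rw [← hAdef]; field_simp
    rw [e4, e2, div_mul_eq_mul_div, div_mul_eq_mul_div, div_le_div_iff₀ (by positivity) (by positivity)]
    calc _ = η n * (normSq (H v - ↑(η n) * I) * (v.im * (A.im * (1 - 1 / 4 * (normSq A)⁻¹)))) := by ring
      _ ≤ η n * (normSq (v - 1 / 4 * A⁻¹ - A) * ((H v).im * η n)) := by gcongr
      _ = _ := by ring
  have hapos : 0 < a := by
    rcases ha.1.lt_or_eq with h | h
    · exact h
    · have := hup I (by simp)
      rw [← h] at this
      simp at this
      linarith
  refine ⟨a, hapos, fun w hw => ⟨hlow w hw, ?_⟩⟩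
  by_cases hc : 1 / 2 < ‖F w‖
  · have hF1 := hFm w hw
    set A := F w with hAdef
    have hA0 : A ≠ 0 := fun h => by rw [h] at hF1; simp at hF1
    have hAsq : 0 < normSq A := normSq_pos.mpr hA0
    have hA4 : 1 / 4 < normSq A := by rw [normSq_eq_norm_sq]; nlinarith
    have hk : 0 < 1 - 1 / 4 * (normSq A)⁻¹ := by
      rw [sub_pos, ← div_eq_mul_inv, div_lt_one hAsq]; exact hA4
    have hvn : 0 < (A + 1 / 4 * A⁻¹).im := by rw [him A hA0]; positivity
    have h := hup _ hvn
    rw [hinv w hw hc, him A hA0] at h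
    have h2 : A.im * (1 / 4 * (normSq A)⁻¹) ≤ 1 / 2 := by
      rw [← div_eq_mul_inv, mul_div_assoc', div_le_iff₀ hAsq]
      have := Complex.im_le_norm A
      rw [normSq_eq_norm_sq]
      nlinarith
    linarith
  · have := Complex.im_le_norm (F w)
    have := mul_pos hapos hw
    linarith

lemma aux_kinv : ∃ k : ℂ → ℂ, DifferentiableOn ℂ k {z : ℂ | 0 < z.im} ∧
    (∀ v : ℂ, 0 < v.im → 0 < (k v).im ∧ 1 / 2 < ‖k v‖) ∧
    ∀ A : ℂ, 0 < A.im → 1 / 2 < ‖A‖ → k (A + 1 / 4 * A⁻¹) = A := by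
  set s : ℂ → ℂ := fun v => Complex.exp (Complex.log (1 - v ^ 2) / 2) with hs
  have hslit : ∀ v : ℂ, 0 < v.im → 1 - v ^ 2 ∈ slitPlane := by
    intro v hv
    rw [mem_slitPlane_iff]
    by_cases hx : v.re = 0
    · left
      simp [pow_two, hx]
      positivity
    · right
      simp [pow_two]
      intro h
      have : v.re * v.im = 0 := by linarith
      rcases mul_eq_zero.mp this with h | h
      · exact hx h
      · exact hv.ne' h
  have hs2 : ∀ v : ℂ, 0 < v.im → s v ^ 2 = 1 - v ^ 2 := by
    intro v hv
    simp only [hs]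
    rw [← Complex.exp_nat_mul]
    have : ((2 : ℕ) : ℂ) * (Complex.log (1 - v ^ 2) / 2) = Complex.log (1 - v ^ 2) := by
      push_cast; ring
    rw [this, Complex.exp_log (slitPlane_ne_zero (hslit v hv))]
  have hsre : ∀ v : ℂ, 0 < v.im → 0 < (s v).re := by
    intro v hv
    simp only [hs]
    rw [Complex.exp_re]
    apply mul_pos (Real.exp_pos _)
    have e : (Complex.log (1 - v ^ 2) / 2).im = Complex.arg (1 - v ^ 2) / 2 := by
      rw [show (2:ℂ) = ((2:ℝ):ℂ) by simp, Complex.div_ofReal_im, Complex.log_im]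
    rw [e]
    have h1 := Complex.arg_le_pi (1 - v ^ 2)
    have h2 := Complex.neg_pi_lt_arg (1 - v ^ 2)
    have h3 : Complex.arg (1 - v ^ 2) ≠ Real.pi := (mem_slitPlane_iff_arg.mp (hslit v hv)).1
    have h4 := lt_of_le_of_ne h1 h3
    apply Real.cos_pos_of_mem_Ioo
    constructor <;> linarith
  have hsd : DifferentiableOn ℂ s {z : ℂ | 0 < z.im} := by
    intro v hv
    apply DifferentiableAt.differentiableWithinAt
    have h1 : DifferentiableAt ℂ (fun v : ℂ => 1 - v ^ 2) v := by fun_prop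
    exact ((h1.clog (hslit v hv)).div_const 2).cexp
  set k : ℂ → ℂ := fun v => (v + I * s v) / 2 with hk
  have hkim : ∀ v : ℂ, 0 < v.im → 0 < (k v).im := by
    intro v hv
    have e : (k v).im = (v.im + (s v).re) / 2 := by
      simp only [hk]
      rw [show (2:ℂ) = ((2:ℝ):ℂ) by simp, Complex.div_ofReal_im]
      simp
    rw [e]
    have := hsre v hv
    linarith
  have hkeq : ∀ v : ℂ, 0 < v.im → k v ^ 2 - v * k v + 1 / 4 = 0 := by
    intro v hv
    have h := hs2 v hv
    have hI := Complex.I_sq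
    simp only [hk]
    linear_combination (s v)^2 / 4 * hI - 1 / 4 * h
  refine ⟨k, ?_, ?_, ?_⟩
  · exact (differentiableOn_id.add (hsd.const_mul I)).div_const 2
  · intro v hv
    have h1 := hkim v hv
    refine ⟨h1, ?_⟩
    have h0 : k v ≠ 0 := fun h => by rw [h] at h1; simp at h1
    have hv' : v = k v + 1 / 4 * (k v)⁻¹ := by
      have := hkeq v hv
      field_simp
      linear_combination (-4) * this
    have him : v.im = (k v).im * (1 - 1 / 4 * (normSq (k v))⁻¹) := by
      conv_lhs => rw [hv']
      simp [Complex.inv_im]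
      ring
    have h2 : 0 < 1 - 1 / 4 * (normSq (k v))⁻¹ := by
      rw [him] at hv
      exact pos_of_mul_pos_right hv h1.le
    rw [sub_pos, ← div_eq_mul_inv, div_lt_one (normSq_pos.mpr h0), normSq_eq_norm_sq] at h2
    by_contra hc
    push Not at hc
    nlinarith [norm_nonneg (k v)]
  · intro A hA hA2
    have hA0 : A ≠ 0 := fun h => by rw [h] at hA; simp at hA
    have hAsq : 0 < normSq A := normSq_pos.mpr hA0
    have hA4 : 1 / 4 < normSq A := by rw [normSq_eq_norm_sq]; nlinarith
    have hkk : 0 < 1 - 1 / 4 * (normSq A)⁻¹ := by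
      rw [sub_pos, ← div_eq_mul_inv, div_lt_one hAsq]; exact hA4
    have him : (A + 1 / 4 * A⁻¹).im = A.im * (1 - 1 / 4 * (normSq A)⁻¹) := by
      simp [Complex.inv_im]
      ring
    have hv : 0 < (A + 1 / 4 * A⁻¹).im := by rw [him]; positivity
    have h := hkeq _ hv
    have h1 := hkim _ hv
    set x := k (A + 1 / 4 * A⁻¹)
    have hf : (x - A) * (x - 1 / 4 * A⁻¹) = 0 := by
      field_simp
      field_simp at h
      linear_combination h
    rcases mul_eq_zero.mp hf with h2 | h2
    · exact sub_eq_zero.mp h2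
    · exfalso
      rw [sub_eq_zero.mp h2] at h1
      have : (1 / 4 * A⁻¹).im = - (A.im * (1/4 * (normSq A)⁻¹)) := by
        simp [Complex.inv_im]; ring
      rw [this] at h1
      have : 0 < A.im * (1/4 * (normSq A)⁻¹) := by positivity
      linarith

lemma aux_pathLen_nonneg (φ : ℂ → ℂ) (D : Set ℂ) (hφ : ∀ z ∈ D, ‖φ z‖ < 1) (z w : ℂ) (γ : ℝ → ℂ)
    (hγ : γ ∈ PathsIn D z w) : 0 ≤ pathLen (hypDensity φ) γ := by
  apply intervalIntegral.integral_nonneg zero_le_one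
  intro t ht
  have h1 := hφ _ (hγ.2.2.2 t ht)
  have : 0 < 1 - ‖φ (γ t)‖ ^ 2 := by nlinarith [norm_nonneg (φ (γ t))]
  unfold hypDensity
  positivity

lemma aux_dist_nonneg (φ : ℂ → ℂ) (D : Set ℂ) (hφ : ∀ z ∈ D, ‖φ z‖ < 1) (z w : ℂ) :
    0 ≤ distHyp φ D z w := by
  apply Real.sInf_nonneg
  rintro _ ⟨γ, hγ, rfl⟩
  exact aux_pathLen_nonneg φ D hφ z w γ hγ

lemma aux_dist_le (φ : ℂ → ℂ) (D : Set ℂ) (hφ : ∀ z ∈ D, ‖φ z‖ < 1) (z w : ℂ) (γ : ℝ → ℂ)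
    (hγ : γ ∈ PathsIn D z w) (K : ℝ)
    (hK : ∀ t ∈ Icc (0:ℝ) 1, hypDensity φ (γ t) * ‖deriv γ t‖ ≤ K) : distHyp φ D z w ≤ K := by
  have h1 : distHyp φ D z w ≤ pathLen (hypDensity φ) γ := by
    apply csInf_le
    · refine ⟨0, ?_⟩
      rintro _ ⟨γ, hγ, rfl⟩
      exact aux_pathLen_nonneg φ D hφ z w γ hγ
    · exact ⟨γ, hγ, rfl⟩
  refine h1.trans ?_
  have h2 : ‖∫ t in (0:ℝ)..1, hypDensity φ (γ t) * ‖deriv γ t‖‖ ≤ K * |1 - 0| := by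
    apply intervalIntegral.norm_integral_le_of_norm_le_const
    intro t ht
    rw [uIoc_of_le zero_le_one] at ht
    have ht' : t ∈ Icc (0:ℝ) 1 := ⟨ht.1.le, ht.2⟩
    have h1 := hφ _ (hγ.2.2.2 t ht')
    have h3 : 0 < 1 - ‖φ (γ t)‖ ^ 2 := by nlinarith [norm_nonneg (φ (γ t))]
    rw [Real.norm_of_nonneg (by unfold hypDensity; positivity)]
    exact hK t ht'
  have h3 := (le_abs_self _).trans h2
  simpa [pathLen] using h3

lemma aux_toSet_le (φ : ℂ → ℂ) (D : Set ℂ) (hφ : ∀ z ∈ D, ‖φ z‖ < 1) (z w : ℂ) (S : Set ℂ)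
    (hw : w ∈ S) (K : ℝ) (h : distHyp φ D z w ≤ K) : distHypToSet φ D z S ≤ K := by
  refine le_trans (csInf_le ?_ ⟨w, hw, rfl⟩) h
  refine ⟨0, ?_⟩
  rintro _ ⟨x, _, rfl⟩
  exact aux_dist_nonneg φ D hφ z x

lemma aux_disk_path (φ ψ : ℂ → ℂ) (D : Set ℂ) (hD : IsOpen D)
    (hφd : DifferentiableOn ℂ φ D) (hψd : DifferentiableOn ℂ ψ (ball 0 1))
    (hψm : MapsTo ψ (ball (0:ℂ) 1) D) (hφψ : ∀ u ∈ ball (0:ℂ) 1, φ (ψ u) = u)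
    (R : ℝ) (hR : R < 1) (u v : ℂ) (hu : ‖u‖ ≤ R) (hv : ‖v‖ ≤ R) :
    ∃ γ ∈ PathsIn D (ψ u) (ψ v), ∀ t ∈ Icc (0:ℝ) 1,
      hypDensity φ (γ t) * ‖deriv γ t‖ ≤ 4 / (1 - R ^ 2) := by
  have hR0 : 0 ≤ R := (norm_nonneg u).trans hu
  set σ : ℝ → ℝ := fun t => (1 - Real.cos (Real.pi * t)) / 2 with hσ
  have hσ0 : ∀ t, 0 ≤ σ t := fun t => by
    have := Real.cos_le_one (Real.pi * t); simp only [hσ]; linarith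
  have hσ1 : ∀ t, σ t ≤ 1 := fun t => by
    have := Real.neg_one_le_cos (Real.pi * t); simp only [hσ]; linarith
  set c : ℝ → ℂ := fun t => u + (σ t : ℂ) * (v - u) with hc
  have hcR : ∀ t, ‖c t‖ ≤ R := by
    intro t
    have e : c t = ((1 - σ t : ℝ) : ℂ) * u + (σ t : ℂ) * v := by
      simp only [hc]; push_cast; ring
    rw [e]
    refine (norm_add_le _ _).trans ?_
    rw [norm_mul, norm_mul, Complex.norm_real, Complex.norm_real,
      Real.norm_of_nonneg (hσ0 t), Real.norm_of_nonneg (by linarith [hσ1 t])]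
    nlinarith [hσ0 t, hσ1 t]
  have hcb : ∀ t, c t ∈ ball (0:ℂ) 1 := fun t => by
    rw [mem_ball_zero_iff]; exact (hcR t).trans_lt hR
  have hσd : ∀ t, HasDerivAt σ (Real.pi * Real.sin (Real.pi * t) / 2) t := by
    intro t
    have h1 : HasDerivAt (fun t => Real.pi * t) Real.pi t := by
      simpa using (hasDerivAt_id t).const_mul Real.pi
    have h2 := ((h1.cos).const_sub 1).div_const 2
    refine HasDerivAt.congr_deriv h2 ?_
    ring
  have hcd : ∀ t, HasDerivAt c (((Real.pi * Real.sin (Real.pi * t) / 2 : ℝ) : ℂ) * (v - u)) t := by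
    intro t
    exact (((hσd t).ofReal_comp).mul_const (v - u)).const_add u
  have hcC : ContDiff ℝ 1 c := by
    have : ContDiff ℝ 1 σ := by simp only [hσ]; fun_prop
    have h2 : ContDiff ℝ 1 (fun t => (σ t : ℂ)) := Complex.ofRealCLM.contDiff.comp this
    exact contDiff_const.add (h2.mul contDiff_const)
  have hψA : ∀ z ∈ ball (0:ℂ) 1, DifferentiableAt ℂ ψ z := fun z hz =>
    hψd.differentiableAt (isOpen_ball.mem_nhds hz)
  refine ⟨fun t => ψ (c t), ⟨?_, ?_, ?_, ?_⟩, ?_⟩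
  · rw [contDiff_iff_contDiffAt]
    intro t
    have h1 : ContDiffAt ℂ 1 ψ (c t) :=
      (hψd.analyticAt (isOpen_ball.mem_nhds (hcb t))).contDiffAt
    exact (h1.restrict_scalars ℝ).comp t hcC.contDiffAt
  · simp [hc, hσ]
  · simp [hc, hσ]
  · intro t _
    exact hψm (hcb t)
  · intro t _
    have hb := hcb t
    have hd1 := (hψA _ hb).hasDerivAt
    have hd2 : HasDerivAt φ (deriv φ (ψ (c t))) (ψ (c t)) :=
      (hφd.differentiableAt (hD.mem_nhds (hψm hb))).hasDerivAt
    have hd3 := hd2.comp (c t) hd1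
    have hd4 : HasDerivAt (φ ∘ ψ) 1 (c t) := by
      refine (hasDerivAt_id (c t)).congr_of_eventuallyEq ?_
      filter_upwards [isOpen_ball.mem_nhds hb] with x hx
      exact hφψ x hx
    have hprod : deriv φ (ψ (c t)) * deriv ψ (c t) = 1 := hd3.unique hd4
    have hd5 := hd1.comp_of_eq t (hcd t) rfl
    have e : deriv (fun t => ψ (c t)) t = _ := hd5.deriv
    rw [e]
    unfold hypDensity
    rw [hφψ _ hb, norm_mul]
    have hp : ‖deriv φ (ψ (c t))‖ * ‖deriv ψ (c t)‖ = 1 := by rw [← norm_mul, hprod, norm_one]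
    have hpos : 0 < 1 - R ^ 2 := by nlinarith
    have hle : 1 - R ^ 2 ≤ 1 - ‖c t‖ ^ 2 := by nlinarith [hcR t, norm_nonneg (c t)]
    have hcd' : ‖(((Real.pi * Real.sin (Real.pi * t) / 2 : ℝ) : ℂ) * (v - u))‖ ≤ 4 := by
      rw [norm_mul, Complex.norm_real]
      have h1 : ‖v - u‖ ≤ 2 := (norm_sub_le _ _).trans (by linarith)
      have h2 : ‖Real.pi * Real.sin (Real.pi * t) / 2‖ ≤ 2 := by
        rw [Real.norm_eq_abs, abs_div, abs_mul, abs_of_pos Real.pi_pos]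
        have := Real.abs_sin_le_one (Real.pi * t)
        have h4 := Real.pi_le_four
        have h5 := Real.pi_pos
        rw [abs_of_pos (by norm_num : (0:ℝ) < 2)]
        nlinarith [abs_nonneg (Real.sin (Real.pi * t))]
      nlinarith [norm_nonneg (v - u)]
    calc _ = (‖deriv φ (ψ (c t))‖ * ‖deriv ψ (c t)‖) *
          ‖(((Real.pi * Real.sin (Real.pi * t) / 2 : ℝ) : ℂ) * (v - u))‖ / (1 - ‖c t‖ ^ 2) := by ring
      _ ≤ 4 / (1 - R ^ 2) := by
        rw [hp, one_mul]
        exact div_le_div₀ (by norm_num) hcd' hpos hle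

lemma aux_lower (φ : ℂ → ℂ) (D : Set ℂ) (hD : IsOpen D) (hφ : ∀ z ∈ D, ‖φ z‖ < 1)
    (hφd : DifferentiableOn ℂ φ D) (z w : ℂ) (hz : φ z = 0) (γ : ℝ → ℂ)
    (hγ : γ ∈ PathsIn D z w) :
    Real.exp (-(2 * pathLen (hypDensity φ) γ)) ≤ 1 - ‖φ w‖ ^ 2 := by
  obtain ⟨hγC, hγ0, hγ1, hγD⟩ := hγ
  have hγd : ∀ t, HasDerivAt γ (deriv γ t) t := fun t =>
    (hγC.differentiable (by norm_num) t).hasDerivAt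
  have hφA : ∀ x ∈ D, HasDerivAt φ (deriv φ x) x := fun x hx =>
    (hφd.differentiableAt (hD.mem_nhds hx)).hasDerivAt
  have hpos : ∀ x ∈ D, 0 < 1 - ‖φ x‖ ^ 2 := fun x hx => by
    nlinarith [hφ x hx, norm_nonneg (φ x)]
  have hβ : ∀ t ∈ Icc (0:ℝ) 1, HasDerivAt (fun t => φ (γ t)) (deriv φ (γ t) * deriv γ t) t :=
    fun t ht => (hφA _ (hγD t ht)).comp_of_eq t (hγd t) rfl
  set G : ℝ → ℝ := fun t => - Real.log (1 - ‖φ (γ t)‖ ^ 2) with hG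
  have hGd : ∀ t ∈ Icc (0:ℝ) 1, HasDerivAt G
      (2 * inner ℝ (φ (γ t)) (deriv φ (γ t) * deriv γ t) / (1 - ‖φ (γ t)‖ ^ 2)) t := by
    intro t ht
    have h1 := ((hβ t ht).norm_sq).const_sub 1
    have h2 := (h1.log (hpos _ (hγD t ht)).ne').neg
    refine HasDerivAt.congr_deriv h2 ?_
    ring
  have hcφ' : ContinuousOn (deriv φ) D := (hφd.deriv hD).continuousOn
  have hγc : ContinuousOn γ (Icc 0 1) := hγC.continuous.continuousOn
  have hcontInt : ContinuousOn (fun t => 2 * (hypDensity φ (γ t) * ‖deriv γ t‖)) (Icc 0 1) := by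
    apply ContinuousOn.mul continuousOn_const
    apply ContinuousOn.mul
    · unfold hypDensity
      apply ContinuousOn.div
      · exact (hcφ'.comp hγc hγD).norm
      · exact continuousOn_const.sub ((hφd.continuousOn.comp hγc hγD).norm.pow 2)
      · intro t ht
        exact (hpos _ (hγD t ht)).ne'
    · exact ((hγC.continuous_deriv le_rfl).norm).continuousOn
  have key := intervalIntegral.sub_le_integral_of_hasDeriv_right_of_le (a := 0) (b := 1) (g := G)
    (φ := fun t => 2 * (hypDensity φ (γ t) * ‖deriv γ t‖)) zero_le_one
    (fun t ht => (hGd t ht).continuousAt.continuousWithinAt)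
    (fun t ht => (hGd t ⟨ht.1.le, ht.2.le⟩).hasDerivWithinAt)
    hcontInt.integrableOn_Icc (by
      intro t ht
      have ht' : t ∈ Icc (0:ℝ) 1 := ⟨ht.1.le, ht.2.le⟩
      have hp := hpos _ (hγD t ht')
      unfold hypDensity
      rw [div_mul_eq_mul_div, mul_div_assoc']
      apply div_le_div_of_nonneg_right _ hp.le
      have h1 := real_inner_le_norm (φ (γ t)) (deriv φ (γ t) * deriv γ t)
      rw [norm_mul] at h1
      have h2 := hφ _ (hγD t ht')
      have h3 : 0 ≤ ‖deriv φ (γ t)‖ * ‖deriv γ t‖ := by positivity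
      nlinarith)
  rw [intervalIntegral.integral_const_mul] at key
  have e0 : G 0 = 0 := by simp [hG, hγ0, hz]
  rw [e0, sub_zero] at key
  change G 1 ≤ 2 * pathLen (hypDensity φ) γ at key
  simp only [hG, hγ1] at key
  have hw : w ∈ D := hγ1 ▸ hγD 1 (by simp)
  rw [← Real.le_log_iff_exp_le (hpos w hw)]
  linarith

lemma aux_est (F : ℂ → ℂ) (hF : DifferentiableOn ℂ F {z : ℂ | 0 < z.im}) (a : ℝ) (ha : 0 < a)
    (hb : ∀ w : ℂ, 0 < w.im → a * w.im ≤ (F w).im ∧ (F w).im ≤ a * w.im + 1 / 2)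
    (m : ℝ) (hm : 0 < m) (hm1 : m ≤ 1) (w₁ : ℂ) (hw1 : m / 4 ≤ w₁.im) (hw2 : ‖w₁‖ ≤ 4 / m)
    (hFw : F w₁ = I) (t : ℝ) (ht : 0 ≤ t) :
    m / 8 * Real.exp (2 * t) ≤ (F ((Real.exp (2 * t) : ℝ) * I)).im ∧
    |(F ((Real.exp (2 * t) : ℝ) * I)).re| ≤ 1 + 16 / m ^ 2 + 2 / m * (1 + 4 / m) + t := by
  have hop : IsOpen {z : ℂ | 0 < z.im} := isOpen_lt continuous_const Complex.continuous_im
  have hw0 : 0 < w₁.im := by linarith [show 0 < m / 4 by positivity]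
  obtain ⟨b1, b2⟩ := hb w₁ hw0
  rw [hFw] at b1 b2
  simp only [I_im] at b1 b2
  have him : w₁.im ≤ 4 / m := (Complex.im_le_norm _).trans hw2
  have ha1 : m / 8 ≤ a := by
    have h : a * w₁.im ≤ a * (4 / m) := by gcongr
    have h2 : 1 / 2 ≤ a * (4 / m) := by linarith
    rw [mul_div_assoc', le_div_iff₀ hm] at h2
    linarith
  have ha2 : a ≤ 4 / m := by
    have h : a * (m / 4) ≤ a * w₁.im := by gcongr
    rw [le_div_iff₀ hm]
    linarith
  set h : ℂ → ℂ := fun w => F w - a * w with hh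
  have hd : DifferentiableOn ℂ h {z : ℂ | 0 < z.im} := by
    apply hF.sub
    fun_prop
  have hhim : ∀ w, (h w).im = (F w).im - a * w.im := by intro w; simp [hh]
  have hder : ∀ w : ℂ, 0 < w.im → ‖deriv h w‖ * w.im ≤ 1 / 2 := by
    intro w hw
    have := aux_sp_deriv h hd (fun z hz => by rw [hhim]; linarith [(hb z hz).1]) w hw
    rw [hhim] at this
    linarith [(hb w hw).2]
  have hdA : ∀ w : ℂ, 0 < w.im → DifferentiableAt ℂ h w := fun w hw =>
    hd.differentiableAt (hop.mem_nhds hw)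
  have hhw1 : ‖h w₁‖ ≤ 1 + 16 / m ^ 2 := by
    simp only [hh, hFw]
    refine (norm_sub_le _ _).trans ?_
    rw [norm_mul, Complex.norm_real, Complex.norm_I, Real.norm_of_nonneg ha.le]
    have : a * ‖w₁‖ ≤ (4 / m) * (4 / m) := by gcongr
    have e : (4 / m) * (4 / m) = 16 / m ^ 2 := by field_simp; norm_num
    linarith
  have hhI : ‖h I - h w₁‖ ≤ 2 / m * (1 + 4 / m) := by
    have hconv : Convex ℝ {z : ℂ | m / 4 ≤ z.im} := convex_halfSpace_im_ge _
    have hp : ∀ z ∈ {z : ℂ | m / 4 ≤ z.im}, 0 < z.im := fun z hz =>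
      lt_of_lt_of_le (by positivity) hz
    have := Convex.norm_image_sub_le_of_norm_deriv_le (f := h) (C := 2 / m) (x := w₁) (y := I)
      (fun z hz => hdA z (hp z hz)) (fun z hz => by
        have h1 := hder z (hp z hz)
        have h2 : ‖deriv h z‖ * (m / 4) ≤ ‖deriv h z‖ * z.im := by gcongr; exact hz
        rw [le_div_iff₀ hm]
        linarith) hconv hw1 (by simp; linarith)
    refine this.trans ?_
    gcongr
    refine (norm_sub_le _ _).trans ?_
    rw [Complex.norm_I]
    linarith
  have hht : ‖h ((Real.exp (2 * t) : ℝ) * I) - h I‖ ≤ t := by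
    have hc : ∀ s : ℝ, HasDerivAt (fun s : ℝ => ((Real.exp (2 * s) : ℝ) : ℂ) * I)
        (((2 * Real.exp (2 * s) : ℝ) : ℂ) * I) s := by
      intro s
      have h1 : HasDerivAt (fun s : ℝ => Real.exp (2 * s)) (2 * Real.exp (2 * s)) s := by
        have h0 : HasDerivAt (fun s : ℝ => 2 * s) 2 s := by
          simpa using (hasDerivAt_id s).const_mul (2:ℝ)
        refine HasDerivAt.congr_deriv h0.exp ?_
        ring
      exact h1.ofReal_comp.mul_const I
    have hpos : ∀ s : ℝ, 0 < (((Real.exp (2 * s) : ℝ) : ℂ) * I).im := by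
      intro s
      rw [Complex.im_ofReal_mul]
      simp [Real.exp_pos]
    have key := norm_image_sub_le_of_norm_deriv_le_segment' (a := 0) (b := t) (C := 1)
      (f := fun s : ℝ => h (((Real.exp (2 * s) : ℝ) : ℂ) * I))
      (f' := fun s => deriv h (((Real.exp (2 * s) : ℝ) : ℂ) * I) * (((2 * Real.exp (2 * s) : ℝ) : ℂ) * I))
      (fun s _ => (((hdA _ (hpos s)).hasDerivAt).comp_of_eq s (hc s) rfl).hasDerivWithinAt)
      (fun s _ => by
        have h1 := hder _ (hpos s)
        rw [norm_mul, norm_mul, Complex.norm_real, Complex.norm_I, Real.norm_of_nonneg (by positivity)]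
        rw [Complex.im_ofReal_mul] at h1
        simp only [I_im] at h1
        linarith) t ⟨ht, le_rfl⟩
    simpa using key
  have hpos : 0 < (((Real.exp (2 * t) : ℝ) : ℂ) * I).im := by
    rw [Complex.im_ofReal_mul]
    simp [Real.exp_pos]
  constructor
  · have := (hb _ hpos).1
    rw [Complex.im_ofReal_mul] at this
    simp only [I_im, mul_one] at this
    refine le_trans ?_ this
    gcongr
  · have e : (F ((Real.exp (2 * t) : ℝ) * I)).re = (h ((Real.exp (2 * t) : ℝ) * I)).re := by
      simp only [hh, Complex.sub_re]
      rw [Complex.re_ofReal_mul, Complex.re_ofReal_mul]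
      simp
    rw [e]
    refine (Complex.abs_re_le_norm _).trans ?_
    set X := h ((Real.exp (2 * t) : ℝ) * I)
    have e2 : X = (X - h I) + (h I - h w₁) + h w₁ := by ring
    rw [e2]
    refine (norm_add₃_le).trans ?_
    linarith

/-- existence of the angular derivative for our configuration -/
lemma aux_main_a (D : Set ℂ) (φ ψ : ℂ → ℂ)
    (hDsub : D ⊆ {z : ℂ | 0 < z.im})
    (hDball : ball (0:ℂ) 2 ∩ {z : ℂ | 0 < z.im} ⊆ D)
    (hφd : DifferentiableOn ℂ φ D) (hφm : ∀ z ∈ D, ‖φ z‖ < 1)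
    (hψd : DifferentiableOn ℂ ψ (ball 0 1))
    (hψm : MapsTo ψ (ball (0:ℂ) 1) D) (hφψ : ∀ u ∈ ball (0:ℂ) 1, φ (ψ u) = u)
    (hlim : Filter.Tendsto (fun x : ℝ => ψ (x : ℂ)) (nhdsWithin 1 (Iio 1)) (nhds 0)) :
    ∃ F : ℂ → ℂ, (F = fun w => -(ψ ((w - I) / (w + I)))⁻¹) ∧
      DifferentiableOn ℂ F {z : ℂ | 0 < z.im} ∧ ∃ a : ℝ, 0 < a ∧
      ∀ w : ℂ, 0 < w.im → a * w.im ≤ (F w).im ∧ (F w).im ≤ a * w.im + 1 / 2 := by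
  refine ⟨_, rfl, ?_⟩
  set F : ℂ → ℂ := fun w => -(ψ ((w - I) / (w + I)))⁻¹ with hF
  have hwI : ∀ w : ℂ, 0 < w.im → w + I ≠ 0 := by
    intro w hw h
    have := congrArg Complex.im h
    simp at this
    linarith
  have hcb : ∀ w : ℂ, 0 < w.im → (w - I) / (w + I) ∈ ball (0:ℂ) 1 := by
    intro w hw
    rw [mem_ball_zero_iff, norm_div, div_lt_one (norm_pos_iff.mpr (hwI w hw))]
    apply lt_of_pow_lt_pow_left₀ 2 (norm_nonneg _)
    rw [← normSq_eq_norm_sq, ← normSq_eq_norm_sq]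
    simp [normSq_apply]
    nlinarith
  have hne : ∀ z : ℂ, 0 < z.im → z ≠ 0 := fun z hz h => by simp [h] at hz
  have hψim : ∀ u ∈ ball (0:ℂ) 1, 0 < (ψ u).im := fun u hu => hDsub (hψm hu)
  have hinvim : ∀ z : ℂ, 0 < z.im → 0 < (-z⁻¹).im := by
    intro z hz
    have := normSq_pos.mpr (hne z hz)
    have e : (-z⁻¹).im = z.im / normSq z := by simp [Complex.inv_im]; ring
    rw [e]; positivity
  have hFd : DifferentiableOn ℂ F {z : ℂ | 0 < z.im} := by
    apply DifferentiableOn.neg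
    apply DifferentiableOn.inv
    · refine hψd.comp (t := ball 0 1) ?_ hcb
      apply DifferentiableOn.div
      · fun_prop
      · fun_prop
      · exact hwI
    · intro w hw
      exact hne _ (hψim _ (hcb w hw))
  have hFm : ∀ w : ℂ, 0 < w.im → 0 < (F w).im := fun w hw => hinvim _ (hψim _ (hcb w hw))
  refine ⟨hFd, ?_⟩
  obtain ⟨k, hkd, hkm, hkinv⟩ := aux_kinv
  have hkD : ∀ v : ℂ, 0 < v.im → -(k v)⁻¹ ∈ D := by
    intro v hv
    obtain ⟨h1, h2⟩ := hkm v hv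
    apply hDball
    refine ⟨?_, hinvim _ h1⟩
    rw [mem_ball_zero_iff, norm_neg, norm_inv]
    rw [inv_lt_comm₀ (by linarith) (by norm_num)]
    linarith
  set H : ℂ → ℂ := fun v => I * (1 + φ (-(k v)⁻¹)) / (1 - φ (-(k v)⁻¹)) with hH
  have hφk : DifferentiableOn ℂ (fun v => φ (-(k v)⁻¹)) {z : ℂ | 0 < z.im} := by
    refine hφd.comp (t := D) ?_ hkD
    apply DifferentiableOn.neg
    apply hkd.inv
    intro v hv
    exact hne _ (hkm v hv).1
  have h1ne : ∀ u : ℂ, ‖u‖ < 1 → 1 - u ≠ 0 := by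
    intro u hu h
    have : u = 1 := (sub_eq_zero.mp h).symm
    simp [this] at hu
  have hHd : DifferentiableOn ℂ H {z : ℂ | 0 < z.im} := by
    apply DifferentiableOn.div
    · exact (hφk.const_add 1).const_mul I
    · exact hφk.const_sub 1
    · intro v hv
      exact h1ne _ (hφm _ (hkD v hv))
  have hHm : ∀ v : ℂ, 0 < v.im → 0 < (H v).im := by
    intro v hv
    have hu := hφm _ (hkD v hv)
    simp only [hH]
    set u := φ (-(k v)⁻¹)
    have e : (I * (1 + u) / (1 - u)).im = (1 - normSq u) / normSq (1 - u) := by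
      rw [Complex.div_im, ← sub_div]
      congr 1
      simp [normSq_apply]; ring
    rw [e]
    have h2 : 0 < normSq (1 - u) := normSq_pos.mpr (h1ne u hu)
    have h3 : 0 < 1 - normSq u := by
      rw [normSq_eq_norm_sq]; nlinarith [norm_nonneg u]
    positivity
  apply aux_core F H hFd hFm hHd hHm
  · intro w hw hw2
    have hk := hkinv (F w) (hFm w hw) hw2
    simp only [hH]
    rw [hk]
    have e1 : -(F w)⁻¹ = ψ ((w - I) / (w + I)) := by simp [hF]
    rw [e1, hφψ _ (hcb w hw)]
    have h0 := hwI w hw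
    have e2 : 1 - (w - I) / (w + I) = 2 * I / (w + I) := by field_simp; ring
    have e3 : 1 + (w - I) / (w + I) = 2 * w / (w + I) := by field_simp; ring
    rw [e2, e3]
    have := Complex.I_ne_zero
    field_simp
  · have hx : Filter.Tendsto (fun η : ℝ => (η - 1) / (η + 1)) Filter.atTop (nhdsWithin 1 (Iio 1)) := by
      apply tendsto_nhdsWithin_iff.mpr
      constructor
      · have h1 : Filter.Tendsto (fun η : ℝ => 1 - 2 * (η + 1)⁻¹) Filter.atTop (nhds 1) := by
          have h2 : Filter.Tendsto (fun η : ℝ => (η + 1)⁻¹) Filter.atTop (nhds 0) :=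
            (Filter.tendsto_atTop_add_const_right _ (1:ℝ) Filter.tendsto_id).inv_tendsto_atTop
          simpa using (h2.const_mul 2).const_sub 1
        refine h1.congr' ?_
        filter_upwards [Filter.eventually_gt_atTop 0] with η hη
        field_simp
        ring
      · filter_upwards [Filter.eventually_gt_atTop 0] with η hη
        rw [mem_Iio, div_lt_one (by linarith)]
        linarith
    have h1 := hlim.comp hx
    have h2 : Filter.Tendsto (fun η : ℝ => ‖ψ (((η - 1) / (η + 1) : ℝ) : ℂ)‖) Filter.atTop
        (nhdsWithin 0 (Ioi 0)) := by
      apply tendsto_nhdsWithin_iff.mpr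
      constructor
      · simpa [Function.comp_def] using h1.norm
      · filter_upwards [Filter.eventually_gt_atTop 0] with η hη
        apply norm_pos_iff.mpr
        apply hne _ (hψim _ _)
        rw [mem_ball_zero_iff, Complex.norm_real, Real.norm_eq_abs, abs_lt]
        constructor
        · rw [lt_div_iff₀ (by linarith)]; linarith
        · rw [div_lt_one (by linarith)]; linarith
    have h3 := h2.inv_tendsto_nhdsGT_zero
    refine h3.congr' ?_
    filter_upwards [Filter.eventually_gt_atTop 0] with η hη
    simp only [hF, Pi.inv_apply]
    rw [norm_neg, norm_inv]
    have : ((η : ℂ) * I - I) / (η * I + I) = (((η - 1) / (η + 1) : ℝ) : ℂ) := by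
      have h0 : (η : ℂ) + 1 ≠ 0 := by exact_mod_cast (by linarith : η + 1 ≠ 0)
      have e : (η : ℂ) * I + I = (η + 1) * I := by ring
      have e' : (η : ℂ) * I - I = (η - 1) * I := by ring
      rw [e, e', mul_div_mul_right _ _ Complex.I_ne_zero]
      push_cast
      rfl
    rw [this]

lemma aux_horiz (φ : ℂ → ℂ) (Dt : Set ℂ)
    (hball2 : ball (0:ℂ) 2 ∩ {z : ℂ | 0 < z.im} ⊆ Dt)
    (hφd : DifferentiableOn ℂ φ Dt) (hφm : ∀ z ∈ Dt, ‖φ z‖ < 1)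
    (p : ℂ) (hpim : 0 < p.im) (hpnorm : ‖p‖ < 1) :
    distHyp φ Dt p ((p.im : ℂ) * I) ≤ |p.re| / p.im := by
  have hy1 : p.im ≤ 1 := (Complex.im_le_norm p).trans hpnorm.le
  set γ : ℝ → ℂ := fun s => p - (s : ℂ) * (p.re : ℂ) with hγ
  have hγim : ∀ s, (γ s).im = p.im := by intro s; simp [hγ]
  have hγre : ∀ s, (γ s).re = (1 - s) * p.re := by intro s; simp [hγ]; ring
  have hγn : ∀ s ∈ Icc (0:ℝ) 1, ‖γ s‖ < 1 := by
    intro s hs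
    refine lt_of_le_of_lt ?_ hpnorm
    apply le_of_sq_le_sq _ (norm_nonneg _)
    rw [← normSq_eq_norm_sq, ← normSq_eq_norm_sq, normSq_apply, normSq_apply, hγim, hγre]
    have h1 : (1 - s) ^ 2 ≤ 1 := by nlinarith [hs.1, hs.2]
    have h2 := mul_le_mul_of_nonneg_right h1 (sq_nonneg p.re)
    linarith
  have hsub : ∀ s ∈ Icc (0:ℝ) 1, ball (γ s) p.im ⊆ Dt := by
    intro s hs z hz
    apply hball2
    rw [mem_ball, dist_eq_norm] at hz
    constructor
    · rw [mem_ball_zero_iff]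
      have e : z = (z - γ s) + γ s := by ring
      rw [e]
      refine lt_of_le_of_lt (norm_add_le _ _) ?_
      linarith [hγn s hs]
    · have h1 := Complex.abs_im_le_norm (z - γ s)
      rw [Complex.sub_im, hγim] at h1
      have h2 := (abs_lt.mp (lt_of_le_of_lt h1 hz)).1
      change 0 < z.im
      linarith
  have hγd : ∀ s, deriv γ s = -(p.re : ℂ) := by
    intro s
    have h1 : HasDerivAt (fun s : ℝ => (s : ℂ)) 1 s := Complex.ofRealCLM.hasDerivAt
    have h2 := (h1.mul_const (p.re : ℂ)).const_sub p
    have h3 := h2.deriv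
    rw [one_mul] at h3
    exact h3
  apply aux_dist_le φ Dt hφm p _ γ
  · refine ⟨?_, ?_, ?_, ?_⟩
    · have h2 : ContDiff ℝ 1 (fun t : ℝ => (t : ℂ)) := Complex.ofRealCLM.contDiff
      exact contDiff_const.sub (h2.mul contDiff_const)
    · simp [hγ]
    · apply Complex.ext
      · rw [hγre]; simp
      · rw [hγim]; simp
    · intro s hs
      exact hsub s hs (mem_ball_self hpim)
  · intro s hs
    have h1 := aux_density φ (γ s) p.im hpim (hφd.mono (hsub s hs))
      (fun x hx => hφm x (hsub s hs hx))
    have hnn : ‖deriv γ s‖ = |p.re| := by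
      rw [hγd, norm_neg, Complex.norm_real, Real.norm_eq_abs]
    rw [hnn]
    calc hypDensity φ (γ s) * |p.re| ≤ 1 / p.im * |p.re| :=
          mul_le_mul_of_nonneg_right h1 (abs_nonneg _)
      _ = |p.re| / p.im := by ring

/-- Fix `C > 0` and `r₀ ≥ 2`.  Let `D̃ ⊆ ℍ` be a simply connected domain with `i ∈ D̃`,
with `0` a prime end of `∂D̃`, and with inradius at least `r₀`.  Let `z₀ ∈ D̃` with
`dist_hyp^{D̃}(z₀, i) ≤ C`.  Then there is `C̃ > 0` depending only on `r₀` and `C` such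
that `dist_hyp^{D̃}(γ^{D̃}_{z₀,0}(t), γ^{ℍ}_{i,0}(ℝ₊)) ≤ C̃ e^{−t}` for all `t ≥ 0`, where
`γ^{D̃}_{z₀,0}(t) = ψ(tanh t)` is the unit-speed hyperbolic geodesic in `D̃` from `z₀` to
`0` (with `ψ : 𝔻 → D̃` a Riemann map sending `0 ↦ z₀` and `1⁻ ↦ 0`), and
`γ^{ℍ}_{i,0}(t) = i e^{−t}`. -/
theorem stmt11 (C r₀ : ℝ) (hC : 0 < C) (hr₀ : 2 ≤ r₀) :
    ∃ Ct : ℝ, 0 < Ct ∧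
    ∀ (Dt : Set ℂ) (φ ψ : ℂ → ℂ) (z₀ : ℂ),
    IsOpen Dt → Dt ⊆ {z : ℂ | 0 < z.im} → Complex.I ∈ Dt → z₀ ∈ Dt →
    ball (0:ℂ) r₀ ∩ {z : ℂ | 0 < z.im} ⊆ Dt →
    DifferentiableOn ℂ φ Dt → BijOn φ Dt (ball (0:ℂ) 1) →
    DifferentiableOn ℂ ψ (ball (0:ℂ) 1) → BijOn ψ (ball (0:ℂ) 1) Dt →
    (∀ z ∈ Dt, ψ (φ z) = z) → ψ 0 = z₀ →
    Filter.Tendsto (fun x : ℝ => ψ (x : ℂ)) (nhdsWithin 1 (Iio 1)) (nhds 0) →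
    distHyp φ Dt z₀ Complex.I ≤ C →
    ∀ t : ℝ, 0 ≤ t →
      distHypToSet φ Dt (ψ ((Real.tanh t : ℝ) : ℂ))
          {w : ℂ | ∃ s : ℝ, 0 ≤ s ∧ w = (Real.exp (-s) : ℂ) * Complex.I} ≤
        Ct * Real.exp (-t) := by
  set m : ℝ := Real.exp (-(2 * (C + 1))) with hm
  have hm0 : 0 < m := Real.exp_pos _
  have hm1 : m ≤ 1 := by rw [hm, Real.exp_le_one_iff]; linarith
  set A : ℝ := 1 + 16 / m ^ 2 + 2 / m * (1 + 4 / m) with hA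
  have hA0 : 0 < A := by positivity
  refine ⟨(A + 1) / (m / 8) + 4 / (m / 8) ^ 2, by positivity, ?_⟩
  intro Dt φ ψ z₀ hD hDsub hID hz₀ hball hφd hφb hψd hψb hψφ hψ0 hlim hdist t ht
  have hφm : ∀ z ∈ Dt, ‖φ z‖ < 1 := fun z hz => by simpa using hφb.mapsTo hz
  have hψm := hψb.mapsTo
  have hφψ : ∀ u ∈ ball (0:ℂ) 1, φ (ψ u) = u := fun u hu =>
    hψb.injOn (hφb.mapsTo (hψm hu)) hu (hψφ _ (hψm hu))
  have hball2 : ball (0:ℂ) 2 ∩ {z : ℂ | 0 < z.im} ⊆ Dt := fun z hz =>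
    hball ⟨ball_subset_ball hr₀ hz.1, hz.2⟩
  have hφz : φ z₀ = 0 := by rw [← hψ0]; exact hφψ 0 (by simp)
  -- the point `φ I` stays away from the unit circle
  set u₁ := φ I with hu₁
  have hu1lt : ‖u₁‖ < 1 := hφm I hID
  have hψu1 : ψ u₁ = I := hψφ I hID
  have hu1 : m ≤ 1 - ‖u₁‖ ^ 2 := by
    have hne : (pathLen (hypDensity φ) '' PathsIn Dt z₀ I).Nonempty := by
      obtain ⟨γ, hγ, _⟩ := aux_disk_path φ ψ Dt hD hφd hψd hψm hφψ ‖u₁‖ hu1lt 0 u₁ (by simp) le_rfl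
      rw [hψ0, hψu1] at hγ
      exact ⟨_, γ, hγ, rfl⟩
    have hlt : sInf (pathLen (hypDensity φ) '' PathsIn Dt z₀ I) < C + 1 :=
      lt_of_le_of_lt hdist (by linarith)
    obtain ⟨_, ⟨γ, hγ, rfl⟩, hγlt⟩ := exists_lt_of_csInf_lt hne hlt
    refine le_trans ?_ (aux_lower φ Dt hD hφm hφd z₀ I hφz γ hγ)
    rw [hm]
    apply Real.exp_le_exp.mpr
    linarith
  obtain ⟨F, hF, hFd, a, ha, hab⟩ := aux_main_a Dt φ ψ hDsub hball2 hφd hφm hψd hψm hφψ hlim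
  -- the preimage of `I`
  have h1u : 1 - u₁ ≠ 0 := by
    intro h
    have : u₁ = 1 := (sub_eq_zero.mp h).symm
    simp [this] at hu1lt
  set w₁ : ℂ := I * (1 + u₁) / (1 - u₁) with hw₁
  have hnle : ‖1 - u₁‖ ≤ 2 := (norm_sub_le _ _).trans (by rw [norm_one]; linarith)
  have hnge : m / 2 ≤ ‖1 - u₁‖ := by
    have h1 : 1 - ‖u₁‖ ≤ ‖1 - u₁‖ := by simpa using norm_sub_norm_le (1:ℂ) u₁
    nlinarith [norm_nonneg u₁]
  have hw1im : m / 4 ≤ w₁.im := by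
    have e : w₁.im = (1 - normSq u₁) / normSq (1 - u₁) := by
      rw [hw₁, Complex.div_im, ← sub_div]
      congr 1
      simp [normSq_apply]; ring
    rw [e, normSq_eq_norm_sq, normSq_eq_norm_sq]
    apply div_le_div₀ (by linarith) hu1
    · have := norm_pos_iff.mpr h1u
      positivity
    · nlinarith [norm_nonneg (1 - u₁)]
  have hw1n : ‖w₁‖ ≤ 4 / m := by
    rw [hw₁, norm_div, norm_mul, Complex.norm_I, one_mul]
    have h2 : ‖1 + u₁‖ ≤ 2 := (norm_add_le _ _).trans (by rw [norm_one]; linarith)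
    calc _ ≤ 2 / (m / 2) := div_le_div₀ (by norm_num) h2 (by positivity) hnge
      _ = 4 / m := by field_simp; norm_num
  have hFw1 : F w₁ = I := by
    rw [hF]
    have hI := Complex.I_ne_zero
    have e1 : w₁ - I = 2 * I * u₁ / (1 - u₁) := by rw [hw₁]; field_simp; ring
    have e2 : w₁ + I = 2 * I / (1 - u₁) := by rw [hw₁]; field_simp; ring
    have e : (w₁ - I) / (w₁ + I) = u₁ := by rw [e1, e2]; field_simp
    simp only [e, hψu1]
    simp
  obtain ⟨hE1, hE2⟩ := aux_est F hFd a ha hab m hm0 hm1 w₁ hw1im hw1n hFw1 t ht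
  rw [← hA] at hE2
  set p : ℂ := ψ ((Real.tanh t : ℝ) : ℂ) with hp
  have htanh : ((((Real.exp (2 * t) : ℝ) : ℂ) * I) - I) / ((((Real.exp (2 * t) : ℝ) : ℂ) * I) + I) =
      ((Real.tanh t : ℝ) : ℂ) := by
    set E := Real.exp (2 * t) with hE
    have hE0 : 0 < E := Real.exp_pos _
    have e0 : Real.tanh t = (E - 1) / (E + 1) := by
      rw [Real.tanh_eq_sinh_div_cosh, Real.sinh_eq, Real.cosh_eq, Real.exp_neg, hE,
        show 2 * t = t + t by ring, Real.exp_add]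
      have := Real.exp_pos t
      field_simp
    have e : (E : ℂ) * I + I = (E + 1) * I := by ring
    have e' : (E : ℂ) * I - I = (E - 1) * I := by ring
    rw [e, e', mul_div_mul_right _ _ Complex.I_ne_zero, e0]
    push_cast
    rfl
  have hFp : F ((Real.exp (2 * t) : ℝ) * I) = -p⁻¹ := by
    rw [hF]
    simp only [htanh, hp]
  rw [hFp] at hE1 hE2
  have hexp : 0 < Real.exp (-t) := Real.exp_pos _
  have hee : Real.exp (-t) * Real.exp t = 1 := by rw [← Real.exp_add]; simp
  have he1 : 1 ≤ Real.exp t := Real.one_le_exp ht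
  have he2 : Real.exp (2 * t) = Real.exp t * Real.exp t := by rw [← Real.exp_add]; ring_nf
  have htm : ‖((Real.tanh t : ℝ) : ℂ)‖ ^ 2 = Real.tanh t ^ 2 := by
    rw [Complex.norm_real, Real.norm_eq_abs, sq_abs]
  have htm2 : Real.exp (-t) * Real.exp (-t) ≤ 1 - Real.tanh t ^ 2 := by
    have hc : 0 < Real.cosh t := Real.cosh_pos t
    have e : 1 - Real.tanh t ^ 2 = 1 / Real.cosh t ^ 2 := by
      rw [Real.tanh_eq_sinh_div_cosh]
      have := Real.cosh_sq t
      field_simp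
      linarith
    have hce : Real.cosh t ≤ Real.exp t := by
      rw [Real.cosh_eq]
      have : Real.exp (-t) ≤ Real.exp t := Real.exp_le_exp.mpr (by linarith)
      linarith
    rw [e, le_div_iff₀ (by positivity)]
    calc _ ≤ Real.exp (-t) * Real.exp (-t) * Real.exp t ^ 2 := by gcongr
      _ = (Real.exp (-t) * Real.exp t) ^ 2 := by ring
      _ = 1 := by rw [hee]; norm_num
      _ ≤ 1 := le_rfl
  have htb : ((Real.tanh t : ℝ) : ℂ) ∈ ball (0:ℂ) 1 := by
    rw [mem_ball_zero_iff]
    have : 0 < Real.exp (-t) * Real.exp (-t) := by positivity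
    nlinarith [norm_nonneg ((Real.tanh t : ℝ) : ℂ)]
  have hpD : p ∈ Dt := hψm htb
  have hpim : 0 < p.im := hDsub hpD
  have hp0 : p ≠ 0 := fun h => by rw [h] at hpim; simp at hpim
  have hpn : 0 < normSq p := normSq_pos.mpr hp0
  by_cases hcase : 1 < m / 8 * Real.exp (2 * t)
  · -- `p` is close to `0`: horizontal segment to the imaginary axis
    have hpnorm : ‖p‖ < 1 := by
      have h1 := (Complex.im_le_norm (-p⁻¹))
      rw [norm_neg, norm_inv] at h1
      have h2 : 1 < ‖p‖⁻¹ := by linarith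
      exact (one_lt_inv₀ (norm_pos_iff.mpr hp0)).mp h2
    have him : (-p⁻¹).im = p.im / normSq p := by simp [Complex.inv_im]; ring
    have hre : |(-p⁻¹).re| = |p.re| / normSq p := by
      simp [Complex.inv_re, abs_div, abs_of_pos hpn]
    rw [him] at hE1
    rw [hre] at hE2
    have hratio : |p.re| / p.im ≤ (A + 1) / (m / 8) * Real.exp (-t) := by
      rw [div_le_iff₀ hpim]
      rw [div_le_iff₀ hpn] at hE2
      rw [le_div_iff₀ hpn] at hE1
      have h1 : A + t ≤ (A + 1) * Real.exp t := by
        have := Real.add_one_le_exp t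
        nlinarith
      calc |p.re| ≤ (A + t) * normSq p := hE2
        _ ≤ (A + 1) * Real.exp t * normSq p := by gcongr
        _ = (A + 1) / (m / 8) * Real.exp (-t) * (m / 8 * Real.exp (2 * t) * normSq p) := by
          rw [he2]
          have : Real.exp t = Real.exp (-t) * (Real.exp t * Real.exp t) := by
            rw [← mul_assoc, hee, one_mul]
          conv_lhs => rw [this]
          field_simp
        _ ≤ (A + 1) / (m / 8) * Real.exp (-t) * p.im := by gcongr
    have hy1 : p.im ≤ 1 := (Complex.im_le_norm p).trans hpnorm.le
    refine aux_toSet_le φ Dt hφm p ((p.im : ℂ) * I) _ ?_ _ ?_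
    · refine ⟨-Real.log p.im, ?_, ?_⟩
      · have := Real.log_nonpos hpim.le hy1
        linarith
      · rw [neg_neg, Real.exp_log hpim]
    · refine (aux_horiz φ Dt hball2 hφd hφm p hpim hpnorm).trans (hratio.trans ?_)
      have : 0 ≤ 4 / (m / 8) ^ 2 * Real.exp (-t) := by positivity
      rw [add_mul]
      linarith
  · -- bounded `t`: compare with `I`
    push Not at hcase
    have hE3 : m / 8 ≤ Real.exp (-t) * Real.exp (-t) := by
      calc m / 8 = m / 8 * Real.exp (2 * t) * (Real.exp (-t) * Real.exp (-t)) := by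
            rw [he2]
            have : m / 8 * (Real.exp t * Real.exp t) * (Real.exp (-t) * Real.exp (-t)) =
              m / 8 * ((Real.exp (-t) * Real.exp t) * (Real.exp (-t) * Real.exp t)) := by ring
            rw [this, hee]; ring
        _ ≤ 1 * (Real.exp (-t) * Real.exp (-t)) := by gcongr
        _ = _ := one_mul _
    have hem1 : Real.exp (-t) ≤ 1 := by rw [Real.exp_le_one_iff]; linarith
    have hE4 : m / 8 ≤ Real.exp (-t) := by nlinarith
    refine aux_toSet_le φ Dt hφm p I _ ?_ _ ?_
    · exact ⟨0, le_rfl, by simp⟩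
    have hRsq : Real.sqrt (1 - m / 8) ^ 2 = 1 - m / 8 := Real.sq_sqrt (by linarith)
    have hR1 : Real.sqrt (1 - m / 8) < 1 := by
      rw [Real.sqrt_lt' one_pos]; linarith
    obtain ⟨γ, hγ, hK⟩ := aux_disk_path φ ψ Dt hD hφd hψd hψm hφψ (Real.sqrt (1 - m / 8)) hR1
      ((Real.tanh t : ℝ) : ℂ) u₁ (Real.le_sqrt_of_sq_le (by rw [htm]; linarith))
      (Real.le_sqrt_of_sq_le (by linarith))
    rw [hψu1] at hγ
    refine (aux_dist_le φ Dt hφm p I γ hγ _ hK).trans ?_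
    rw [hRsq]
    have e : 4 / (1 - (1 - m / 8)) = 4 / (m / 8) ^ 2 * (m / 8) := by
      rw [sub_sub_cancel]
      field_simp
    rw [e, add_mul]
    have h1 : 4 / (m / 8) ^ 2 * (m / 8) ≤ 4 / (m / 8) ^ 2 * Real.exp (-t) := by gcongr
    have h2 : 0 ≤ (A + 1) / (m / 8) * Real.exp (-t) := by positivity
    linarith

end
end

section
/- Let D ⊆ ℂ be open, X ⊆ D closed in D with two-dimensional Lebesgue measure zero, and let f : D → ℂ be a homeomorphism onto its image which is conformal on D \ X. If f is absolutely continuous on lines (ACL) in D, then f is conformal on D. -/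
open Complex Set Metric MeasureTheory

noncomputable section

/-- `g` is absolutely continuous on `[a, b]`: for every `ε > 0` there is `δ > 0` such
that for every finite family of subintervals of `[a,b]` with pairwise disjoint interiors
and total length `< δ`, the total variation of `g` over their endpoints is `< ε`. -/
def AbsContOn (g : ℝ → ℂ) (a b : ℝ) : Prop :=
  ∀ ε : ℝ, 0 < ε → ∃ δ : ℝ, 0 < δ ∧ ∀ n : ℕ, ∀ r s : Fin n → ℝ,
    (∀ i, a ≤ r i ∧ r i ≤ s i ∧ s i ≤ b) →
    (∀ i j, i ≠ j → Ioo (r i) (s i) ∩ Ioo (r j) (s j) = ∅) →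
    (∑ i, (s i - r i)) < δ → (∑ i, ‖g (s i) - g (r i)‖) < ε

/-- `f` is absolutely continuous on lines (ACL) in `D`: for Lebesgue-a.e. horizontal line
and a.e. vertical line, `f` is absolutely continuous on every compact segment of that
line contained in `D`. -/
def ACL (f : ℂ → ℂ) (D : Set ℂ) : Prop :=
  (∀ᵐ (y : ℝ) ∂(volume : Measure ℝ), ∀ a b : ℝ, a ≤ b →
    (∀ x ∈ Icc a b, ((x : ℂ) + (y : ℂ) * Complex.I) ∈ D) →
    AbsContOn (fun x : ℝ => f ((x : ℂ) + (y : ℂ) * Complex.I)) a b) ∧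
  (∀ᵐ (x : ℝ) ∂(volume : Measure ℝ), ∀ a b : ℝ, a ≤ b →
    (∀ y ∈ Icc a b, ((x : ℂ) + (y : ℂ) * Complex.I) ∈ D) →
    AbsContOn (fun y : ℝ => f ((x : ℂ) + (y : ℂ) * Complex.I)) a b)

lemma aux_ac {g : ℝ → ℂ} {a b : ℝ} (h : AbsContOn g (min a b) (max a b)) :
    AbsolutelyContinuousOnInterval g a b := by
  rw [absolutelyContinuousOnInterval_iff]
  intro ε hε
  obtain ⟨δ, hδ, H⟩ := h ε hε
  refine ⟨δ, hδ, ?_⟩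
  rintro ⟨n, E⟩ ⟨hE1, hE2⟩ hlen
  simp only at hE1 hE2 hlen ⊢
  have key := H n (fun i => min (E i).1 (E i).2) (fun i => max (E i).1 (E i).2) ?_ ?_ ?_
  · rw [Finset.sum_range]
    refine lt_of_eq_of_lt ?_ key
    refine Finset.sum_congr rfl fun i _ => ?_
    rcases le_total (E i).1 (E i).2 with h | h
    · simp [h, dist_comm (g (E i).1), dist_eq_norm]
    · simp [h, dist_eq_norm]
  · intro i
    obtain ⟨h1, h2⟩ := hE1 i (by simp)
    rw [uIcc, mem_Icc] at h1 h2
    exact ⟨le_min h1.1 h2.1, min_le_max, max_le h1.2 h2.2⟩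
  · intro i j hij
    have := hE2 (by simp : (i : ℕ) ∈ (Finset.range n : Set ℕ))
      (by simp : (j : ℕ) ∈ (Finset.range n : Set ℕ)) (fun h => hij (Fin.ext h))
    rw [← disjoint_iff_inter_eq_empty]
    exact this.mono Ioo_subset_Ioc_self Ioo_subset_Ioc_self
  · rw [Finset.sum_range] at hlen
    refine lt_of_eq_of_lt ?_ hlen
    refine Finset.sum_congr rfl fun i _ => ?_
    rw [max_sub_min_eq_abs, Real.dist_eq, abs_sub_comm]

lemma aux_ftc {g g' : ℝ → ℂ} {a b : ℝ} (h : AbsContOn g (min a b) (max a b))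
    (hd : ∀ᵐ x : ℝ, x ∈ uIcc a b → HasDerivAt g (g' x) x) :
    ∫ x in a..b, g' x = g b - g a := by
  have hac := aux_ac h
  have hre : AbsolutelyContinuousOnInterval (fun x => (g x).re) a b := by
    refine squeeze_zero (fun t => Finset.sum_nonneg fun i _ => dist_nonneg) (fun t => ?_) hac
    refine Finset.sum_le_sum fun i _ => ?_
    rw [Real.dist_eq, dist_eq_norm, ← Complex.sub_re]
    exact Complex.abs_re_le_norm _
  have him : AbsolutelyContinuousOnInterval (fun x => (g x).im) a b := by
    refine squeeze_zero (fun t => Finset.sum_nonneg fun i _ => dist_nonneg) (fun t => ?_) hac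
    refine Finset.sum_le_sum fun i _ => ?_
    rw [Real.dist_eq, dist_eq_norm, ← Complex.sub_im]
    exact Complex.abs_im_le_norm _
  have e : ∫ x in a..b, g' x =
      ∫ x in a..b, (((deriv (fun x => (g x).re) x : ℝ) : ℂ)
        + ((deriv (fun x => (g x).im) x : ℝ) : ℂ) * Complex.I) := by
    refine intervalIntegral.integral_congr_ae ?_
    filter_upwards [hd] with x hx hxm
    have hx := hx (uIoc_subset_uIcc hxm)
    have h1 : HasDerivAt (fun x => (g x).re) (g' x).re x :=
      Complex.reCLM.hasFDerivAt.comp_hasDerivAt x hx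
    have h2 : HasDerivAt (fun x => (g x).im) (g' x).im x :=
      Complex.imCLM.hasFDerivAt.comp_hasDerivAt x hx
    rw [h1.deriv, h2.deriv, Complex.re_add_im]
  have i1 : IntervalIntegrable (fun x => ((deriv (fun x => (g x).re) x : ℝ) : ℂ)) volume a b :=
    ⟨hre.intervalIntegrable_deriv.1.ofReal, hre.intervalIntegrable_deriv.2.ofReal⟩
  have i2 : IntervalIntegrable (fun x => ((deriv (fun x => (g x).im) x : ℝ) : ℂ)) volume a b :=
    ⟨him.intervalIntegrable_deriv.1.ofReal, him.intervalIntegrable_deriv.2.ofReal⟩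
  rw [e, intervalIntegral.integral_add i1 (i2.mul_const _), intervalIntegral.integral_mul_const,
    intervalIntegral.integral_ofReal, intervalIntegral.integral_ofReal,
    hre.integral_deriv_eq_sub, him.integral_deriv_eq_sub]
  apply Complex.ext <;> simp

lemma aux_int (D : Set ℂ) (hD : IsOpen D) (X : Set ℂ)
    (hXclosed : D ∩ closure X ⊆ X) (hX0 : volume X = 0)
    (f : ℂ → ℂ) (hcont : ContinuousOn f D) (hinj : InjOn f D)
    (hconf : DifferentiableOn ℂ f (D \ X)) (K : Set ℂ) (hK : IsCompact K) (hKD : K ⊆ D) :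
    IntegrableOn (deriv f) K := by
  have hop : IsOpen (D \ X) := by
    have : D \ X = D \ closure X := by
      ext z
      exact ⟨fun h => ⟨h.1, fun h' => h.2 (hXclosed ⟨h.1, h'⟩)⟩,
        fun h => ⟨h.1, fun h' => h.2 (subset_closure h')⟩⟩
    rw [this]
    exact hD.sdiff isClosed_closure
  have hda : ∀ z ∈ D \ X, HasDerivAt f (deriv f z) z := fun z hz =>
    (hconf.differentiableAt (hop.mem_nhds hz)).hasDerivAt
  set s := K ∩ (D \ X) with hs
  have hsm : MeasurableSet s := hK.measurableSet.inter hop.measurableSet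
  have hsK : s =ᵐ[volume] K := by
    have hXae : ∀ᵐ z, z ∉ X := measure_eq_zero_iff_ae_notMem.mp hX0
    filter_upwards [hXae] with z hz
    refine propext ⟨fun h => h.1, fun h => ⟨h, hKD h, hz⟩⟩
  suffices IntegrableOn (deriv f) s from this.congr_set_ae hsK.symm
  have hle := MeasureTheory.lintegral_abs_det_fderiv_le_addHaar_image volume hsm
    (f := f) (f' := fun z => (ContinuousLinearMap.toSpanSingleton ℂ (deriv f z)).restrictScalars ℝ)
    (fun z hz => ((hda z hz.2).hasFDerivAt.restrictScalars ℝ).hasFDerivWithinAt)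
    (hinj.mono fun z hz => hz.2.1)
  have hdet : ∀ c : ℂ, |((ContinuousLinearMap.toSpanSingleton ℂ c).restrictScalars ℝ).det|
      = ‖c‖ ^ 2 := by
    intro c
    simp [ContinuousLinearMap.det, LinearMap.det_restrictScalars,
      Algebra.norm_complex_eq, Complex.normSq_eq_norm_sq]
  simp only [hdet] at hle
  have hfin : volume (f '' s) < ⊤ :=
    (measure_mono (image_mono inter_subset_left)).trans_lt
      (hK.image_of_continuousOn (hcont.mono hKD)).measure_lt_top
  have hL2 : MemLp (deriv f) 2 (volume.restrict s) := by
    refine ⟨(measurable_deriv f).aestronglyMeasurable, ?_⟩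
    rw [eLpNorm_lt_top_iff_lintegral_rpow_enorm_lt_top (by simp) (by simp)]
    refine lt_of_le_of_lt (le_of_eq ?_) (hle.trans_lt hfin)
    refine lintegral_congr fun z => ?_
    rw [ENNReal.ofReal_pow (norm_nonneg _), ofReal_norm]
    simp
  have : IsFiniteMeasure (volume.restrict s) :=
    ⟨by simpa using (measure_mono inter_subset_left).trans_lt hK.measure_lt_top⟩
  exact (hL2.mono_exponent (p := 1) (by norm_num)).integrable le_rfl

lemma aux_null (X : Set ℂ) (hX0 : volume X = 0) :
    (∀ᵐ y : ℝ, ∀ᵐ x : ℝ, ((x : ℂ) + (y : ℂ) * Complex.I) ∉ X) ∧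
    (∀ᵐ x : ℝ, ∀ᵐ y : ℝ, ((x : ℂ) + (y : ℂ) * Complex.I) ∉ X) := by
  have hXae : ∀ᵐ z, z ∉ X := measure_eq_zero_iff_ae_notMem.mp hX0
  have h1 : ∀ᵐ p : ℝ × ℝ, ((p.1 : ℂ) + (p.2 : ℂ) * Complex.I) ∉ X := by
    have := (Complex.volume_preserving_equiv_real_prod.symm).quasiMeasurePreserving.ae hXae
    filter_upwards [this] with p hp
    rw [← Complex.mk_eq_add_mul_I]
    exact hp
  have h2 : ∀ᵐ p : ℝ × ℝ, ((p.2 : ℂ) + (p.1 : ℂ) * Complex.I) ∉ X :=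
    (Measure.measurePreserving_swap (μ := (volume : Measure ℝ))
      (ν := (volume : Measure ℝ))).quasiMeasurePreserving.ae h1
  exact ⟨Measure.ae_ae_of_ae_prod h2, Measure.ae_ae_of_ae_prod h1⟩

/-- Let `D ⊆ ℂ` be open, `X ⊆ D` closed in `D` with two-dimensional Lebesgue measure
zero, and let `f : D → ℂ` be a homeomorphism onto its image which is conformal on
`D \ X`.  If `f` is absolutely continuous on lines (ACL) in `D`, then `f` is conformal
on `D`. -/
theorem stmt13 (D : Set ℂ) (hD : IsOpen D) (X : Set ℂ) (hXD : X ⊆ D)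
    (hXclosed : D ∩ closure X ⊆ X) (hX0 : volume X = 0)
    (f : ℂ → ℂ) (hcont : ContinuousOn f D) (hinj : InjOn f D)
    (hconf : DifferentiableOn ℂ f (D \ X)) (hACL : ACL f D) :
    DifferentiableOn ℂ f D := by
  have hop : IsOpen (D \ X) := by
    have : D \ X = D \ closure X := by
      ext z
      exact ⟨fun h => ⟨h.1, fun h' => h.2 (hXclosed ⟨h.1, h'⟩)⟩,
        fun h => ⟨h.1, fun h' => h.2 (subset_closure h')⟩⟩
    rw [this]
    exact hD.sdiff isClosed_closure
  have hda : ∀ z ∈ D \ X, HasDerivAt f (deriv f z) z := fun z hz =>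
    (hconf.differentiableAt (hop.mem_nhds hz)).hasDerivAt
  rw [← Complex.isConservativeOn_and_continuousOn_iff_isDifferentiableOn hD]
  refine ⟨?_, hcont⟩
  intro z w hzw
  rw [← add_eq_zero_iff_eq_neg, Complex.wedgeIntegral_add_wedgeIntegral_eq]
  have hmem : ∀ x ∈ uIcc z.re w.re, ∀ y ∈ uIcc z.im w.im,
      ((x : ℂ) + (y : ℂ) * Complex.I) ∈ D := by
    intro x hx y hy
    apply hzw
    simp only [Complex.Rectangle, Complex.mem_reProdIm]
    simpa using ⟨hx, hy⟩
  obtain ⟨hn1, hn2⟩ := aux_null X hX0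
  -- horizontal lines
  have H1 : ∀ᵐ y : ℝ, y ∈ uIoc z.im w.im →
      ∫ x in z.re..w.re, deriv f ((x : ℂ) + (y : ℂ) * Complex.I) =
        f ((w.re : ℂ) + (y : ℂ) * Complex.I) - f ((z.re : ℂ) + (y : ℂ) * Complex.I) := by
    filter_upwards [hn1, hACL.1] with y hy1 hy2 hy
    have hy := uIoc_subset_uIcc hy
    refine aux_ftc (g := fun x : ℝ => f ((x : ℂ) + (y : ℂ) * Complex.I))
      (hy2 _ _ min_le_max fun x hx => hmem x hx y hy) ?_
    filter_upwards [hy1] with x hx hxm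
    have hl : HasDerivAt (fun t : ℝ => (t : ℂ) + (y : ℂ) * Complex.I) 1 x :=
      (Complex.ofRealCLM.hasDerivAt (x := x)).add_const _
    have h4 := (hda _ ⟨hmem x hxm y hy, hx⟩).comp x hl
    rw [mul_one] at h4
    exact h4
  -- vertical lines
  have H2 : ∀ᵐ x : ℝ, x ∈ uIoc z.re w.re →
      ∫ y in z.im..w.im, deriv f ((x : ℂ) + (y : ℂ) * Complex.I) * Complex.I =
        f ((x : ℂ) + (w.im : ℂ) * Complex.I) - f ((x : ℂ) + (z.im : ℂ) * Complex.I) := by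
    filter_upwards [hn2, hACL.2] with x hx1 hx2 hx
    have hx := uIoc_subset_uIcc hx
    refine aux_ftc (g := fun y : ℝ => f ((x : ℂ) + (y : ℂ) * Complex.I))
      (hx2 _ _ min_le_max fun y hy => hmem x hx y hy) ?_
    filter_upwards [hx1] with y hy hym
    have hl : HasDerivAt (fun t : ℝ => (x : ℂ) + (t : ℂ) * Complex.I) Complex.I y := by
      simpa using ((Complex.ofRealCLM.hasDerivAt (x := y)).mul_const Complex.I).const_add (x : ℂ)
    exact (hda _ ⟨hmem x hx y hym, hy⟩).comp y hl
  -- Fubini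
  have hK : IsCompact (Complex.Rectangle z w) := isCompact_uIcc.reProdIm isCompact_uIcc
  have hIntK := aux_int D hD X hXclosed hX0 f hcont hinj hconf _ hK hzw
  have hIntP : Integrable (Function.uncurry fun x y : ℝ => deriv f ((x : ℂ) + (y : ℂ) * Complex.I))
      ((volume.restrict (uIoc z.re w.re)).prod (volume.restrict (uIoc z.im w.im))) := by
    rw [Measure.prod_restrict]
    have := (Complex.volume_preserving_equiv_real_prod.symm).integrableOn_comp_preimage
      (MeasurableEquiv.measurableEmbedding _) |>.mpr hIntK
    have h3 : (deriv f ∘ Complex.measurableEquivRealProd.symm) =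
        Function.uncurry fun x y : ℝ => deriv f ((x : ℂ) + (y : ℂ) * Complex.I) := by
      ext p
      simp only [Function.uncurry, ← Complex.mk_eq_add_mul_I]
      rfl
    rw [h3] at this
    refine IntegrableOn.mono_set this ?_
    rintro ⟨x, y⟩ ⟨hx, hy⟩
    exact ⟨uIoc_subset_uIcc hx, uIoc_subset_uIcc hy⟩
  have hF : ∫ x in z.re..w.re, ∫ y in z.im..w.im, deriv f ((x : ℂ) + (y : ℂ) * Complex.I) =
      ∫ y in z.im..w.im, ∫ x in z.re..w.re, deriv f ((x : ℂ) + (y : ℂ) * Complex.I) := by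
    simp only [intervalIntegral.intervalIntegral_eq_integral_uIoc, integral_smul]
    rw [smul_comm, integral_integral_swap hIntP]
  have E1 := intervalIntegral.integral_congr_ae H1
  have E2 := intervalIntegral.integral_congr_ae H2
  simp only [intervalIntegral.integral_mul_const] at E2
  rw [hF, E1] at E2
  have ch : ∀ y ∈ uIcc z.im w.im, IntervalIntegrable
      (fun x : ℝ => f ((x : ℂ) + (y : ℂ) * Complex.I)) volume z.re w.re := fun y hy =>
    ContinuousOn.intervalIntegrable <| hcont.comp (by fun_prop) fun x hx => hmem x hx y hy
  have cv : ∀ x ∈ uIcc z.re w.re, IntervalIntegrable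
      (fun y : ℝ => f ((x : ℂ) + (y : ℂ) * Complex.I)) volume z.im w.im := fun x hx =>
    ContinuousOn.intervalIntegrable <| hcont.comp (by fun_prop) fun y hy => hmem x hx y hy
  rw [intervalIntegral.integral_sub (cv _ right_mem_uIcc) (cv _ left_mem_uIcc),
    intervalIntegral.integral_sub (ch _ right_mem_uIcc) (ch _ left_mem_uIcc)] at E2
  simp only [smul_eq_mul]
  linear_combination E2

end
end

section
/- Let (k*_ℓ)_{ℓ ≥ 1} be nonnegative random variables adapted to a filtration (ℱ_ℓ) such that for constants c₀ > 1, c₁ > 0, P[k*_ℓ ≥ t | ℱ_{ℓ−1}] ≤ c₀ exp(−c₀^{−1} e^{c₁ t}) for all t ≥ 0 and all ℓ. Then for every θ > 1 there exists c₂ > 1 depending only on c₀ and c₁ such that E[e^{θ k*_ℓ} | ℱ_{ℓ−1}] ≤ c₂ e^{c₂ θ log θ} almost surely, and consequently for every n, N ∈ ℕ and every b > 0, P[Σ_{j=1}^{n} k*_{N+j} ≥ b] ≤ (c₂ e^{c₂ θ log θ})^{n} e^{−θ b}. -/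
open MeasureTheory

noncomputable section

/-- The numerical bound. -/
lemma aux_num (c₀ c₁ : ℝ) (hc₀ : 1 < c₀) (hc₁ : 0 < c₁) :
    ∃ c₂ : ℝ, 1 < c₂ ∧ ∀ θ : ℝ, 1 < θ →
      ∑' m : ℕ, ENNReal.ofReal (Real.exp (θ * (m + 1))) *
        ENNReal.ofReal (c₀ * Real.exp (-c₀⁻¹ * Real.exp (c₁ * m))) ≤
      ENNReal.ofReal (c₂ * Real.exp (c₂ * θ * Real.log θ)) := by
  have hc0 : 0 < c₀ := by linarith
  obtain ⟨a, ha⟩ : ∃ a : ℝ, a = c₀⁻¹ / 2 := ⟨_, rfl⟩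
  have ha0 : 0 < a := by rw [ha]; positivity
  obtain ⟨L, hL⟩ : ∃ L : ℝ, L = |Real.log (a * c₁)| := ⟨_, rfl⟩
  have hL0 : 0 ≤ L := by rw [hL]; positivity
  obtain ⟨D, hD⟩ : ∃ D : ℝ, D = 1 + L / c₁ := ⟨_, rfl⟩
  have hD0 : 0 < D := by rw [hD]; positivity
  obtain ⟨r, hr⟩ : ∃ r : ℝ, r = Real.exp (-(a * c₁)) := ⟨_, rfl⟩
  have hr0 : 0 ≤ r := by rw [hr]; positivity
  have hr1 : r < 1 := by
    rw [hr, Real.exp_lt_one_iff]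
    have := mul_pos ha0 hc₁
    linarith
  have hS : 0 < (1 - r)⁻¹ := inv_pos.2 (by linarith)
  have hB : 0 < c₀ * (1 - r)⁻¹ * Real.exp D := by positivity
  have hc1' : 0 < c₁⁻¹ := inv_pos.2 hc₁
  refine ⟨1 + c₀ * (1 - r)⁻¹ * Real.exp D + D + c₁⁻¹, by linarith, fun θ hθ => ?_⟩
  have hθ0 : 0 < θ := by linarith
  have hlog : 0 < Real.log θ := Real.log_pos hθ
  have hθlog : θ ≤ 1 + θ * Real.log θ := by
    have h1 := Real.one_sub_inv_le_log_of_pos hθ0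
    have h2 := mul_le_mul_of_nonneg_left h1 hθ0.le
    have h3 : θ * (1 - θ⁻¹) = θ - 1 := by field_simp
    linarith
  obtain ⟨W, hW⟩ : ∃ W : ℝ, W = c₀ * Real.exp D * Real.exp ((D + c₁⁻¹) * (θ * Real.log θ)) :=
    ⟨_, rfl⟩
  have hW0 : 0 ≤ W := by rw [hW]; positivity
  have key : ∀ m : ℕ, Real.exp (θ * (m + 1)) *
      (c₀ * Real.exp (-c₀⁻¹ * Real.exp (c₁ * m))) ≤ W * r ^ m := by
    intro m
    have hrm : r ^ m = Real.exp (m * (-(a * c₁))) := by rw [hr, ← Real.exp_nat_mul]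
    have e1 : Real.exp (θ * (m + 1)) * (c₀ * Real.exp (-c₀⁻¹ * Real.exp (c₁ * m)))
        = c₀ * Real.exp (θ * (m + 1) + -c₀⁻¹ * Real.exp (c₁ * m)) := by
      rw [Real.exp_add]; ring
    have e2 : W * r ^ m = c₀ * Real.exp (D + (D + c₁⁻¹) * (θ * Real.log θ) + m * (-(a * c₁))) := by
      rw [hW, hrm, Real.exp_add, Real.exp_add]; ring
    rw [e1, e2]
    refine mul_le_mul_of_nonneg_left (Real.exp_le_exp.2 ?_) hc0.le
    have h1 : c₁ * m + 1 ≤ Real.exp (c₁ * m) := Real.add_one_le_exp _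
    have h1' := mul_le_mul_of_nonneg_left h1 ha0.le
    -- Young-type inequality
    have h2 : θ * m - a * Real.exp (c₁ * m) ≤ (θ / c₁) * (Real.log θ + L) := by
      have hy : 0 < θ / (a * c₁) := by positivity
      have h3 := Real.add_one_le_exp (c₁ * m - Real.log (θ / (a * c₁)))
      rw [Real.exp_sub, Real.exp_log hy, le_div_iff₀ hy,
        Real.log_div hθ0.ne' (mul_pos ha0 hc₁).ne'] at h3
      have h4 := mul_le_mul_of_nonneg_left h3 ha0.le
      have h5 : a * ((c₁ * m - (Real.log θ - Real.log (a * c₁)) + 1) * (θ / (a * c₁)))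
          = θ * m - (θ / c₁) * (Real.log θ - Real.log (a * c₁)) + θ / c₁ := by
        field_simp
      rw [h5] at h4
      have h6 : - Real.log (a * c₁) ≤ L := by rw [hL]; exact neg_le_abs _
      have hq : 0 < θ / c₁ := by positivity
      have h7 := mul_le_mul_of_nonneg_left h6 hq.le
      nlinarith
    have h8 : c₀⁻¹ = 2 * a := by rw [ha]; ring
    have h9 : (θ / c₁) * (Real.log θ + L) = c₁⁻¹ * (θ * Real.log θ) + (D - 1) * θ := by
      rw [hD]; field_simp; ring
    have h10 := mul_le_mul_of_nonneg_left hθlog hD0.le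
    rw [h8]
    nlinarith
  calc _ ≤ ∑' m : ℕ, ENNReal.ofReal (W * r ^ m) := by
        refine ENNReal.tsum_le_tsum fun m => ?_
        rw [← ENNReal.ofReal_mul (Real.exp_pos _).le]
        exact ENNReal.ofReal_le_ofReal (key m)
    _ = ENNReal.ofReal (∑' m : ℕ, W * r ^ m) :=
        (ENNReal.ofReal_tsum_of_nonneg (fun m => by positivity)
          ((summable_geometric_of_lt_one hr0 hr1).mul_left W)).symm
    _ ≤ _ := by
        refine ENNReal.ofReal_le_ofReal ?_
        rw [tsum_mul_left, tsum_geometric_of_lt_one hr0 hr1]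
        have e : W * (1 - r)⁻¹ = (c₀ * (1 - r)⁻¹ * Real.exp D) *
            Real.exp ((D + c₁⁻¹) * (θ * Real.log θ)) := by rw [hW]; ring
        rw [e]
        have hp : 0 < θ * Real.log θ := by positivity
        refine mul_le_mul (by linarith) (Real.exp_le_exp.2 ?_) (Real.exp_pos _).le (by linarith)
        rw [mul_assoc]
        exact mul_le_mul_of_nonneg_right (by linarith) hp.le

/-- Conditional exponential moment, in `lintegral` form on sets. -/
lemma aux_set {Ω : Type} {m m0 : MeasurableSpace Ω} (μ : Measure Ω) [IsProbabilityMeasure μ]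
    (hm : m ≤ m0) (X : Ω → ℝ) (hX : Measurable[m0] X) (hX0 : ∀ ω, 0 ≤ X ω) (p : ℕ → ℝ)
    (hp0 : ∀ j, 0 ≤ p j)
    (h : ∀ j : ℕ, μ[Set.indicator {ω | (j : ℝ) ≤ X ω} (fun _ => (1 : ℝ)) | m] ≤ᵐ[μ]
        fun _ => p j) (θ : ℝ) (hθ : 0 ≤ θ) (A : Set Ω) (hA : MeasurableSet[m] A) :
    ∫⁻ ω in A, ENNReal.ofReal (Real.exp (θ * X ω)) ∂μ ≤
      (∑' j : ℕ, ENNReal.ofReal (Real.exp (θ * (j + 1))) * ENNReal.ofReal (p j)) * μ A := by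
  have hms : ∀ j : ℕ, MeasurableSet[m0] {ω | (j : ℝ) ≤ X ω} :=
    fun j => measurableSet_le measurable_const hX
  have hA0 : MeasurableSet[m0] A := hm _ hA
  have h1 : ∀ j : ℕ, (μ.restrict A) {ω | (j : ℝ) ≤ X ω} ≤ ENNReal.ofReal (p j) * μ A := by
    intro j
    have hi : Integrable (Set.indicator {ω | (j : ℝ) ≤ X ω} (fun _ => (1 : ℝ))) μ :=
      (integrable_const 1).indicator (hms j)
    have e := setIntegral_condExp hm hi hA
    have l : ∫ ω in A, (μ[Set.indicator {ω | (j : ℝ) ≤ X ω} (fun _ => (1 : ℝ)) | m]) ω ∂μ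
        ≤ ∫ ω in A, p j ∂μ :=
      setIntegral_mono_ae integrable_condExp.integrableOn (integrable_const _).integrableOn (h j)
    rw [e, integral_indicator_const _ (hms j), setIntegral_const] at l
    simp only [smul_eq_mul, mul_one] at l
    have := ENNReal.ofReal_le_ofReal l
    rw [ofReal_measureReal, ENNReal.ofReal_mul measureReal_nonneg, ofReal_measureReal,
      mul_comm] at this
    exact this
  calc ∫⁻ ω in A, ENNReal.ofReal (Real.exp (θ * X ω)) ∂μ
      ≤ ∫⁻ ω in A, ∑' j : ℕ, Set.indicator {ω | (j : ℝ) ≤ X ω}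
          (fun _ => ENNReal.ofReal (Real.exp (θ * (j + 1)))) ω ∂μ := by
        refine lintegral_mono fun ω => ?_
        refine le_trans ?_ (ENNReal.le_tsum ⌊X ω⌋₊)
        rw [Set.indicator_of_mem (by exact Nat.floor_le (hX0 ω))]
        refine ENNReal.ofReal_le_ofReal (Real.exp_le_exp.2 ?_)
        exact mul_le_mul_of_nonneg_left (Nat.lt_floor_add_one _).le hθ
    _ = ∑' j : ℕ, ∫⁻ ω in A, Set.indicator {ω | (j : ℝ) ≤ X ω}
          (fun _ => ENNReal.ofReal (Real.exp (θ * (j + 1)))) ω ∂μ :=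
        lintegral_tsum fun j => (measurable_const.indicator (hms j)).aemeasurable
    _ ≤ ∑' j : ℕ, ENNReal.ofReal (Real.exp (θ * (j + 1))) * ENNReal.ofReal (p j) * μ A := by
        refine ENNReal.tsum_le_tsum fun j => ?_
        rw [lintegral_indicator_const (hms j), mul_assoc]
        exact mul_le_mul_right (h1 j) _
    _ = _ := ENNReal.tsum_mul_right

/-- From sets to functions. -/
lemma aux_fun {Ω : Type} {m m0 : MeasurableSpace Ω} (μ : Measure Ω)
    (hm : m ≤ m0) (f : Ω → ENNReal) (hf : Measurable[m0] f) (K : ENNReal)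
    (h : ∀ A, MeasurableSet[m] A → ∫⁻ ω in A, f ω ∂μ ≤ K * μ A)
    (Y : Ω → ENNReal) (hY : Measurable[m] Y) :
    ∫⁻ ω, Y ω * f ω ∂μ ≤ K * ∫⁻ ω, Y ω ∂μ := by
  have hle : (μ.withDensity f).trim hm ≤ K • μ.trim hm := by
    refine Measure.le_iff.2 fun A hA => ?_
    rw [trim_measurableSet_eq hm hA, withDensity_apply _ (hm _ hA), Measure.smul_apply,
      trim_measurableSet_eq hm hA]
    exact h A hA
  have hY0 : Measurable[m0] Y := hY.mono hm le_rfl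
  calc ∫⁻ ω, Y ω * f ω ∂μ = ∫⁻ ω, Y ω ∂(μ.withDensity f) := by
        rw [lintegral_withDensity_eq_lintegral_mul _ hf hY0]
        simp [mul_comm]
    _ = ∫⁻ ω, Y ω ∂((μ.withDensity f).trim hm) := (lintegral_trim hm hY).symm
    _ ≤ ∫⁻ ω, Y ω ∂(K • μ.trim hm) := lintegral_mono' hle le_rfl
    _ = K * ∫⁻ ω, Y ω ∂μ := by rw [lintegral_smul_measure, lintegral_trim hm hY, smul_eq_mul]

lemma aux_condExp {Ω : Type} {m m0 : MeasurableSpace Ω} (μ : Measure Ω) [IsProbabilityMeasure μ]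
    (hm : m ≤ m0) (f : Ω → ℝ) (hf : Measurable[m0] f) (hf0 : ∀ ω, 0 ≤ f ω) (K : ℝ) (hK : 0 ≤ K)
    (h : ∀ A, MeasurableSet[m] A → ∫⁻ ω in A, ENNReal.ofReal (f ω) ∂μ ≤ ENNReal.ofReal K * μ A) :
    μ[f | m] ≤ᵐ[μ] fun _ => K := by
  have hi : Integrable f μ := by
    refine ⟨hf.aestronglyMeasurable, ?_⟩
    rw [hasFiniteIntegral_iff_ofReal (Filter.Eventually.of_forall hf0)]
    have := h Set.univ MeasurableSet.univ
    rw [Measure.restrict_univ, measure_univ, mul_one] at this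
    exact this.trans_lt ENNReal.ofReal_lt_top
  refine ae_le_of_ae_le_trim (hm := hm) ?_
  refine ae_le_of_forall_setIntegral_le
    (integrable_condExp.trim hm stronglyMeasurable_condExp) (integrable_const _) fun A hA _ => ?_
  rw [← setIntegral_trim hm stronglyMeasurable_condExp hA,
    ← setIntegral_trim hm stronglyMeasurable_const hA, setIntegral_condExp hm hi hA,
    setIntegral_const]
  rw [integral_eq_lintegral_of_nonneg_ae (Filter.Eventually.of_forall hf0)
    hf.aestronglyMeasurable]
  refine ENNReal.toReal_le_of_le_ofReal (by positivity) ?_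
  refine (h A hA).trans_eq ?_
  rw [smul_eq_mul, ENNReal.ofReal_mul measureReal_nonneg, ofReal_measureReal, mul_comm]

theorem stmt15 (c₀ c₁ : ℝ) (hc₀ : 1 < c₀) (hc₁ : 0 < c₁) :
    ∃ c₂ : ℝ, 1 < c₂ ∧
    ∀ (Ω : Type) (m0 : MeasurableSpace Ω) (μ : Measure Ω), IsProbabilityMeasure μ →
    ∀ ℱ : Filtration ℕ m0, ∀ k : ℕ → Ω → ℝ,
    Adapted ℱ k → (∀ ℓ ω, 0 ≤ k ℓ ω) →
    (∀ ℓ : ℕ, ∀ t : ℝ, 0 ≤ t →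
      μ[Set.indicator {ω | t ≤ k (ℓ + 1) ω} (fun _ => (1 : ℝ)) | ℱ ℓ] ≤ᵐ[μ]
        fun _ => c₀ * Real.exp (-c₀⁻¹ * Real.exp (c₁ * t))) →
    ∀ θ : ℝ, 1 < θ →
      (∀ ℓ : ℕ, μ[fun ω => Real.exp (θ * k (ℓ + 1) ω) | ℱ ℓ] ≤ᵐ[μ]
          fun _ => c₂ * Real.exp (c₂ * θ * Real.log θ)) ∧
      (∀ n N : ℕ, ∀ b : ℝ, 0 < b →
        μ {ω | b ≤ ∑ j ∈ Finset.range n, k (N + 1 + j) ω} ≤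
          ENNReal.ofReal ((c₂ * Real.exp (c₂ * θ * Real.log θ)) ^ n * Real.exp (-θ * b))) := by
  obtain ⟨c₂, hc₂, hnum⟩ := aux_num c₀ c₁ hc₀ hc₁
  refine ⟨c₂, hc₂, ?_⟩
  intro Ω m0 μ hμ ℱ k hk hk0 htail θ hθ
  have hθ0 : 0 < θ := by linarith
  obtain ⟨K, hK⟩ : ∃ K : ℝ, K = c₂ * Real.exp (c₂ * θ * Real.log θ) := ⟨_, rfl⟩
  have hK0 : 0 ≤ K := by rw [hK]; positivity
  have hkm : ∀ ℓ, Measurable[m0] (k ℓ) := fun ℓ => (hk ℓ).mono (ℱ.le ℓ) le_rfl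
  have hset : ∀ ℓ : ℕ, ∀ A, MeasurableSet[ℱ ℓ] A →
      ∫⁻ ω in A, ENNReal.ofReal (Real.exp (θ * k (ℓ + 1) ω)) ∂μ ≤ ENNReal.ofReal K * μ A := by
    intro ℓ A hA
    refine (aux_set μ (ℱ.le ℓ) (k (ℓ + 1)) (hkm _) (hk0 _)
      (fun j => c₀ * Real.exp (-c₀⁻¹ * Real.exp (c₁ * j))) (fun j => by positivity)
      (fun j => htail ℓ j (Nat.cast_nonneg j)) θ hθ0.le A hA).trans ?_
    rw [hK]
    exact mul_le_mul_left (hnum θ hθ) _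
  rw [← hK]
  refine ⟨fun ℓ => ?_, fun n N b hb => ?_⟩
  · exact aux_condExp μ (ℱ.le ℓ) _ ((hkm _).const_mul θ).exp (fun ω => (Real.exp_pos _).le) K hK0
      (hset ℓ)
  · have hind : ∀ n : ℕ, ∫⁻ ω, ENNReal.ofReal
        (Real.exp (θ * ∑ j ∈ Finset.range n, k (N + 1 + j) ω)) ∂μ ≤ ENNReal.ofReal K ^ n := by
      intro n
      induction n with
      | zero => simp
      | succ n ih =>
        have hY : Measurable[ℱ (N + n)] fun ω => ENNReal.ofReal
            (Real.exp (θ * ∑ j ∈ Finset.range n, k (N + 1 + j) ω)) := by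
          refine Measurable.ennreal_ofReal (Measurable.exp (Measurable.const_mul ?_ θ))
          refine Finset.measurable_fun_sum _ fun j hj => ?_
          have : j < n := Finset.mem_range.1 hj
          exact (hk (N + 1 + j)).mono (ℱ.mono (by omega)) le_rfl
        have := aux_fun μ (ℱ.le (N + n)) _ ((hkm (N + n + 1)).const_mul θ).exp.ennreal_ofReal _
          (hset (N + n)) _ hY
        calc _ = _ := by
              refine lintegral_congr fun ω => ?_
              rw [Finset.sum_range_succ, mul_add, Real.exp_add,
                ENNReal.ofReal_mul (Real.exp_pos _).le, show N + 1 + n = N + n + 1 by omega]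
          _ ≤ _ := this
          _ ≤ ENNReal.ofReal K * ENNReal.ofReal K ^ n := mul_le_mul_right ih _
          _ = _ := (pow_succ' _ _).symm
    have hmk := mul_meas_ge_le_lintegral (μ := μ) (f := fun ω => ENNReal.ofReal
        (Real.exp (θ * ∑ j ∈ Finset.range n, k (N + 1 + j) ω)))
        (((Finset.measurable_fun_sum _ fun j _ => hkm _).const_mul θ).exp.ennreal_ofReal)
        (ENNReal.ofReal (Real.exp (θ * b)))
    have hsub : {ω | b ≤ ∑ j ∈ Finset.range n, k (N + 1 + j) ω} ⊆
        {ω | ENNReal.ofReal (Real.exp (θ * b)) ≤ ENNReal.ofReal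
          (Real.exp (θ * ∑ j ∈ Finset.range n, k (N + 1 + j) ω))} := fun ω hω =>
      ENNReal.ofReal_le_ofReal (Real.exp_le_exp.2 (mul_le_mul_of_nonneg_left hω hθ0.le))
    have h3 := (mul_le_mul_right (measure_mono (μ := μ) hsub)
      (ENNReal.ofReal (Real.exp (θ * b)))).trans (hmk.trans (hind n))
    calc _ = ENNReal.ofReal (Real.exp (-θ * b)) * (ENNReal.ofReal (Real.exp (θ * b)) *
          μ {ω | b ≤ ∑ j ∈ Finset.range n, k (N + 1 + j) ω}) := by
          rw [← mul_assoc, ← ENNReal.ofReal_mul (Real.exp_pos _).le, ← Real.exp_add]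
          simp
      _ ≤ ENNReal.ofReal (Real.exp (-θ * b)) * ENNReal.ofReal K ^ n := mul_le_mul_right h3 _
      _ = _ := by
          rw [ENNReal.ofReal_mul (by positivity), ENNReal.ofReal_pow hK0, mul_comm]

end
end

section
/- Let U ⊆ ℂ be a simply connected domain, 𝒲 a Whitney square decomposition of U, Q ∈ 𝒲, and let γ : [s, t] → U be a hyperbolic geodesic segment (parameterized by hyperbolic length) with both endpoints in Q. Then the whole segment γ([s,t]) is contained in the closed hyperbolic ball of radius 2 around cen(Q), and its Euclidean length satisfies length(γ([s,t])) ≤ c · len(Q) for a universal constant c > 0. -/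
open Complex Set Metric MeasureTheory

noncomputable section

/-- The disk automorphism sending `b` to `0`. -/
def mob (b z : ℂ) : ℂ := (z - b) / (1 - (starRingEnd ℂ) b * z)

lemma mob_den_ne {b z : ℂ} (hb : ‖b‖ < 1) (hz : ‖z‖ < 1) : 1 - (starRingEnd ℂ) b * z ≠ 0 := by
  intro h
  have h1 : (starRingEnd ℂ) b * z = 1 := (sub_eq_zero.mp h).symm
  have h2 : ‖b‖ * ‖z‖ = 1 := by
    have := congrArg norm h1
    simpa using this
  nlinarith [norm_nonneg b, norm_nonneg z]

lemma mob_key (b z : ℂ) : ‖1 - (starRingEnd ℂ) b * z‖ ^ 2 - ‖z - b‖ ^ 2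
    = (1 - ‖b‖ ^ 2) * (1 - ‖z‖ ^ 2) := by
  simp only [Complex.sq_norm, Complex.normSq_apply, Complex.sub_re, Complex.sub_im,
    Complex.mul_re, Complex.mul_im, Complex.conj_re, Complex.conj_im, Complex.one_re,
    Complex.one_im]
  ring

lemma one_sub_mob {b z : ℂ} (hb : ‖b‖ < 1) (hz : ‖z‖ < 1) :
    1 - ‖mob b z‖ ^ 2 = (1 - ‖b‖ ^ 2) * (1 - ‖z‖ ^ 2) / ‖1 - (starRingEnd ℂ) b * z‖ ^ 2 := by
  have h := norm_pos_iff.mpr (mob_den_ne hb hz)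
  rw [← mob_key, mob, norm_div, sub_div, div_self (by positivity), div_pow]

lemma mob_lt {b z : ℂ} (hb : ‖b‖ < 1) (hz : ‖z‖ < 1) : ‖mob b z‖ < 1 := by
  have h := one_sub_mob hb hz
  have h0 := norm_pos_iff.mpr (mob_den_ne hb hz)
  have h1 : 0 < 1 - ‖b‖ ^ 2 := by nlinarith [norm_nonneg b]
  have h2 : 0 < 1 - ‖z‖ ^ 2 := by nlinarith [norm_nonneg z]
  have h3 : 0 < 1 - ‖mob b z‖ ^ 2 := by rw [h]; positivity
  nlinarith [norm_nonneg (mob b z)]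

lemma mob_bound {b z : ℂ} {α β : ℝ} (hα : α < 1) (hβ : β < 1) (hb : ‖b‖ ≤ β) (hz : ‖z‖ ≤ α) :
    ‖mob b z‖ ≤ (α + β) / (1 + α * β) := by
  have hα0 : 0 ≤ α := (norm_nonneg _).trans hz
  have hβ0 : 0 ≤ β := (norm_nonneg _).trans hb
  have hb1 := hb.trans_lt hβ
  have hz1 := hz.trans_lt hα
  have h := one_sub_mob hb1 hz1
  have h0 := norm_pos_iff.mpr (mob_den_ne hb1 hz1)
  have h1 : 1 - β ^ 2 ≤ 1 - ‖b‖ ^ 2 := by nlinarith [norm_nonneg b]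
  have h2 : 1 - α ^ 2 ≤ 1 - ‖z‖ ^ 2 := by nlinarith [norm_nonneg z]
  have h1' : 0 ≤ 1 - β ^ 2 := by nlinarith
  have h2' : 0 ≤ 1 - α ^ 2 := by nlinarith
  have h3 : ‖1 - (starRingEnd ℂ) b * z‖ ≤ 1 + α * β := by
    refine (norm_sub_le _ _).trans ?_
    rw [norm_mul, RCLike.norm_conj, norm_one]
    nlinarith [norm_nonneg b, norm_nonneg z, mul_le_mul hb hz (norm_nonneg z) hβ0]
  have h4 : (1 - β ^ 2) * (1 - α ^ 2) / (1 + α * β) ^ 2 ≤ 1 - ‖mob b z‖ ^ 2 := by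
    rw [h]
    have h6 := h1'.trans h1
    have h7 := h2'.trans h2
    gcongr
  have h5 : (1 - β ^ 2) * (1 - α ^ 2) / (1 + α * β) ^ 2 = 1 - ((α + β) / (1 + α * β)) ^ 2 := by
    have : (1 + α * β) ≠ 0 := by positivity
    field_simp
    ring
  rw [h5] at h4
  refine abs_le_of_sq_le_sq' (b := (α + β) / (1 + α * β)) (by linarith) (by positivity) |>.2

lemma mob_neg_mob {b z : ℂ} (hb : ‖b‖ < 1) (hz : ‖z‖ < 1) : mob (-b) (mob b z) = z := by
  have h := mob_den_ne hb hz
  have hb2 := mob_den_ne hb hb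
  have e : mob (-b) (mob b z) = ((z - b) / (1 - (starRingEnd ℂ) b * z) + b) /
    (1 + (starRingEnd ℂ) b * ((z - b) / (1 - (starRingEnd ℂ) b * z))) := by
    simp [mob]
  rw [e]
  have e2 : (z - b) / (1 - (starRingEnd ℂ) b * z) + b
      = z * (1 - (starRingEnd ℂ) b * b) / (1 - (starRingEnd ℂ) b * z) := by
    rw [div_add' _ _ _ h]
    congr 1
    ring
  have e3 : 1 + (starRingEnd ℂ) b * ((z - b) / (1 - (starRingEnd ℂ) b * z))
      = (1 - (starRingEnd ℂ) b * b) / (1 - (starRingEnd ℂ) b * z) := by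
    rw [← mul_div_assoc, one_add_div h]
    congr 1
    ring
  rw [e2, e3, div_div_div_cancel_right₀ h, mul_div_assoc, div_self hb2, mul_one]

lemma mob_hasDerivAt {b z : ℂ} (hb : ‖b‖ < 1) (hz : ‖z‖ < 1) :
    HasDerivAt (mob b) (((1 - ‖b‖ ^ 2 : ℝ) : ℂ) / (1 - (starRingEnd ℂ) b * z) ^ 2) z := by
  have h := mob_den_ne hb hz
  have h1 : HasDerivAt (fun z : ℂ => z - b) 1 z := (hasDerivAt_id z).sub_const b
  have h2 : HasDerivAt (fun z : ℂ => 1 - (starRingEnd ℂ) b * z) (-(starRingEnd ℂ) b) z := by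
    simpa using ((hasDerivAt_id z).const_mul ((starRingEnd ℂ) b)).const_sub 1
  have h3 := h1.div h2 h
  have e : ((1 - ‖b‖ ^ 2 : ℝ) : ℂ) = 1 * (1 - (starRingEnd ℂ) b * z)
      - (z - b) * (-(starRingEnd ℂ) b) := by
    push_cast
    rw [← Complex.conj_mul']
    ring
  rw [e]
  exact h3

lemma schwarz_pick {φ : ℂ → ℂ} {p z : ℂ} {r : ℝ} 
    (hd : DifferentiableOn ℂ φ (ball p r)) (hm : MapsTo φ (ball p r) (ball 0 1))
    (hz : z ∈ ball p r) : ‖mob (φ p) (φ z)‖ ≤ dist z p / r := by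
  have hr : 0 < r := nonempty_ball.1 ⟨z, hz⟩
  have hn : ∀ w ∈ ball p r, ‖φ w‖ < 1 := fun w hw => by simpa using hm hw
  have hp := hn p (mem_ball_self hr)
  have := Complex.dist_le_div_mul_dist_of_mapsTo_ball (f := fun w => mob (φ p) (φ w)) (c := p)
    (R₁ := r) (R₂ := 1) (z := z) ?_ ?_ hz
  · have e : mob (φ p) (φ p) = 0 := by simp [mob]
    rw [e, dist_zero_right] at this
    refine this.trans (le_of_eq ?_)
    ring
  · intro w hw
    exact (mob_hasDerivAt hp (hn w hw)).differentiableAt.comp_differentiableWithinAt w (hd w hw)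
  · intro w hw
    have e : mob (φ p) (φ p) = 0 := by simp [mob]
    simp only [e, mem_closedBall, dist_zero_right]
    exact (mob_lt hp (hn w hw)).le

lemma hasDerivAt_tanh' (x : ℝ) : HasDerivAt Real.tanh (1 - Real.tanh x ^ 2) x := by
  have hc := (Real.cosh_pos x).ne'
  have h := (Real.hasDerivAt_sinh x).div (Real.hasDerivAt_cosh x) hc
  have e : Real.tanh = fun x => Real.sinh x / Real.cosh x := by
    funext y; exact Real.tanh_eq_sinh_div_cosh y
  have e2 : 1 - Real.tanh x ^ 2 = (Real.cosh x * Real.cosh x - Real.sinh x * Real.sinh x)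
      / Real.cosh x ^ 2 := by
    rw [Real.tanh_eq_sinh_div_cosh]
    field_simp
  rw [e2, e]
  exact h

lemma contDiff_tanh' : ContDiff ℝ 1 Real.tanh := by
  have e : Real.tanh = fun x => Real.sinh x / Real.cosh x := by
    funext y; exact Real.tanh_eq_sinh_div_cosh y
  rw [e]
  exact Real.contDiff_sinh.div Real.contDiff_cosh (fun x => (Real.cosh_pos x).ne')

lemma tanh_le_iff' (x y : ℝ) : Real.tanh x ≤ Real.tanh y ↔ x ≤ y := by
  rw [← Real.artanh_le_artanh_iff ⟨Real.neg_one_lt_tanh x, Real.tanh_lt_one x⟩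
    ⟨Real.neg_one_lt_tanh y, Real.tanh_lt_one y⟩, Real.artanh_tanh, Real.artanh_tanh]

lemma tanh_two : 13 / 14 ≤ Real.tanh 2 := by
  rw [Real.tanh_eq, div_le_div_iff₀ (by norm_num) (by positivity)]
  have h1 : (2.7:ℝ) < Real.exp 1 := lt_trans (by norm_num) Real.exp_one_gt_d9
  have h2 : Real.exp 2 = Real.exp 1 ^ 2 := by rw [← Real.exp_nat_mul]; norm_num
  have h3 : Real.exp 2 * Real.exp (-2) = 1 := by rw [← Real.exp_add]; norm_num
  have h4 : 7.29 ≤ Real.exp 2 := by rw [h2]; nlinarith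
  nlinarith [Real.exp_pos (-2)]

lemma distHyp_le {U : Set ℂ} (hU : IsOpen U) {φ ψ : ℂ → ℂ}
    (hφ : DifferentiableOn ℂ φ U) (hφm : MapsTo φ U (ball (0:ℂ) 1))
    (hψ : DifferentiableOn ℂ ψ (ball (0:ℂ) 1)) (hψm : MapsTo ψ (ball (0:ℂ) 1) U)
    (hinv : ∀ z ∈ ball (0:ℂ) 1, φ (ψ z) = z) {a b : ℂ} (ha : ‖a‖ < 1) (hb : ‖b‖ < 1)
    (hab : ‖mob b a‖ ≤ 13 / 14) : distHyp φ U (ψ a) (ψ b) ≤ 2 := by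
  obtain ⟨ω, hω, hw⟩ : ∃ ω : ℂ, ‖ω‖ = 1 ∧ mob b a = (‖mob b a‖ : ℂ) * ω := by
    by_cases h : mob b a = 0
    · exact ⟨1, by simp, by simp [h]⟩
    · have hn : (‖mob b a‖ : ℂ) ≠ 0 := by exact_mod_cast norm_ne_zero_iff.mpr h
      exact ⟨mob b a / (‖mob b a‖ : ℂ), by simp [h], by field_simp⟩
  set d := Real.artanh ‖mob b a‖ with hd
  have hd0 : 0 ≤ d := Real.artanh_nonneg (norm_nonneg _)
  have hI : ‖mob b a‖ ∈ Ioo (-1:ℝ) 1 := ⟨by linarith [norm_nonneg (mob b a)], by linarith⟩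
  have htd : Real.tanh d = ‖mob b a‖ := Real.tanh_artanh hI
  have hd2 : d ≤ 2 := by
    rw [← tanh_le_iff', htd]; exact hab.trans tanh_two
  have hnb : ‖-b‖ < 1 := by simpa using hb
  let ξ : ℝ → ℂ := fun t => (Real.tanh (d * (1 - t)) : ℂ) * ω
  have hξn : ∀ t, ‖ξ t‖ = |Real.tanh (d * (1 - t))| := fun t => by
    simp only [ξ, norm_mul, hω, mul_one, Complex.norm_real, Real.norm_eq_abs]
  have hξ1 : ∀ t, ‖ξ t‖ < 1 := fun t => by rw [hξn]; exact Real.abs_tanh_lt_one _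
  have hξd : ∀ t, HasDerivAt ξ (((1 - Real.tanh (d * (1 - t)) ^ 2) * (-d) : ℝ) * ω) t := fun t => by
    have h1 : HasDerivAt (fun t : ℝ => d * (1 - t)) (-d) t := by
      simpa using ((hasDerivAt_id t).const_sub 1).const_mul d
    exact (((hasDerivAt_tanh' _).comp t h1).ofReal_comp).mul_const ω
  have hξc : ContDiff ℝ 1 ξ := by
    have h1 : ContDiff ℝ 1 (fun t : ℝ => Real.tanh (d * (1 - t))) :=
      contDiff_tanh'.comp (by fun_prop)
    exact (Complex.ofRealCLM.contDiff.comp h1).mul contDiff_const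
  let η : ℝ → ℂ := fun t => mob (-b) (ξ t)
  have hη1 : ∀ t, η t ∈ ball (0:ℂ) 1 := fun t => by
    simpa using mob_lt hnb (hξ1 t)
  have hηc : ContDiff ℝ 1 η := by
    have h1 : ContDiff ℝ 1 (fun t => ξ t - (-b)) := hξc.sub contDiff_const
    have h2 : ContDiff ℝ 1 (fun t => 1 - (starRingEnd ℂ) (-b) * ξ t) :=
      contDiff_const.sub (contDiff_const.mul hξc)
    have h3 := h1.mul (h2.inv (fun t => mob_den_ne hnb (hξ1 t)))
    have e : η = fun t => (ξ t - -b) * (1 - (starRingEnd ℂ) (-b) * ξ t)⁻¹ := by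
      funext t
      simp only [η, mob, div_eq_mul_inv]
    rw [e]
    exact h3
  have hγc : ContDiff ℝ 1 (fun t => ψ (η t)) := by
    rw [contDiff_iff_contDiffAt]
    intro t
    have h1 : ContDiffAt ℂ 1 ψ (η t) :=
      (hψ.contDiffOn isOpen_ball).contDiffAt (isOpen_ball.mem_nhds (hη1 t))
    exact (h1.restrict_scalars ℝ).comp t hηc.contDiffAt
  have hpath : (fun t => ψ (η t)) ∈ PathsIn U (ψ a) (ψ b) := by
    refine ⟨hγc, ?_, ?_, fun t _ => hψm (hη1 t)⟩
    · have : ξ 0 = mob b a := by simp only [ξ, sub_zero, mul_one, htd]; exact hw.symm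
      simp only [η, this, mob_neg_mob hb ha]
    · have : ξ 1 = 0 := by simp [ξ]
      simp only [η, this]
      simp [mob]
  have hlen : pathLen (hypDensity φ) (fun t => ψ (η t)) = d := by
    have : ∀ t : ℝ, hypDensity φ (ψ (η t)) * ‖deriv (fun t => ψ (η t)) t‖ = d := by
      intro t
      have hψd : HasDerivAt ψ (deriv ψ (η t)) (η t) :=
        (hψ.differentiableAt (isOpen_ball.mem_nhds (hη1 t))).hasDerivAt
      have hφd : HasDerivAt φ (deriv φ (ψ (η t))) (ψ (η t)) :=
        (hφ.differentiableAt (hU.mem_nhds (hψm (hη1 t)))).hasDerivAt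
      have hone : deriv φ (ψ (η t)) * deriv ψ (η t) = 1 := by
        refine (hφd.comp (η t) hψd).unique ?_
        refine (hasDerivAt_id (η t)).congr_of_eventuallyEq ?_
        filter_upwards [isOpen_ball.mem_nhds (hη1 t)] with z hz
        exact hinv z hz
      have hηd := (mob_hasDerivAt hnb (hξ1 t)).comp t (hξd t)
      have hγd := hψd.comp t hηd
      have e : deriv (fun t => ψ (η t)) t = _ := hγd.deriv
      rw [e, hypDensity, hinv _ (hη1 t)]
      have h1 : 0 < 1 - ‖b‖ ^ 2 := by nlinarith [norm_nonneg b]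
      have h2 : 0 < 1 - Real.tanh (d * (1 - t)) ^ 2 := by linarith [Real.tanh_sq_lt_one (d * (1 - t))]
      have h3 := norm_pos_iff.mpr (mob_den_ne hnb (hξ1 t))
      have h4 := one_sub_mob hnb (hξ1 t)
      have hone' : ‖deriv φ (ψ (η t))‖ * ‖deriv ψ (η t)‖ = 1 := by
        rw [← norm_mul, hone, norm_one]
      have h5 : ‖ξ t‖ ^ 2 = Real.tanh (d * (1 - t)) ^ 2 := by rw [hξn, sq_abs]
      rw [h5, norm_neg] at h4
      have h6 : 1 - ‖η t‖ ^ 2 = _ := h4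
      rw [h6]
      simp only [norm_mul, norm_div, norm_pow, Complex.norm_real, Real.norm_eq_abs, norm_neg, hω,
        abs_of_pos h1, abs_of_pos h2, abs_of_nonneg hd0]
      generalize ‖1 - (starRingEnd ℂ) (-b) * ξ t‖ = D at *
      generalize 1 - Real.tanh (d * (1 - t)) ^ 2 = T at *
      generalize 1 - ‖b‖ ^ 2 = B at *
      field_simp
      linear_combination d * hone'
    simp only [pathLen, this]
    simp
  rw [distHyp, confDist]
  have hmem : d ∈ pathLen (hypDensity φ) '' PathsIn U (ψ a) (ψ b) := ⟨_, hpath, hlen⟩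
  have hbdd : BddBelow (pathLen (hypDensity φ) '' PathsIn U (ψ a) (ψ b)) := by
    refine ⟨0, ?_⟩
    rintro _ ⟨γ, ⟨_, _, _, hγ⟩, rfl⟩
    refine intervalIntegral.integral_nonneg (by norm_num) (fun t ht => ?_)
    have h1 : ‖φ (γ t)‖ < 1 := by simpa using hφm (hγ t ht)
    have h2 : 0 < 1 - ‖φ (γ t)‖ ^ 2 := by nlinarith [norm_nonneg (φ (γ t))]
    unfold hypDensity
    positivity
  exact (csInf_le hbdd hmem).trans hd2

/-- A Bloch type lemma. -/
lemma bloch_aux {h : ℂ → ℂ} {c : ℂ} {R : ℝ} (hR : 0 < R) (hh : DifferentiableOn ℂ h (ball c R))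
    (hne : ∀ z ∈ ball c R, ∀ w ∈ ball c R, h w ≠ h z + 2 * Real.pi * I) :
    ‖deriv h c‖ * R ≤ 192 * Real.pi := by
  have hdd : DifferentiableOn ℂ (deriv h) (ball c R) := hh.deriv isOpen_ball
  have hsub : closedBall c (R / 2) ⊆ ball c R := closedBall_subset_ball (by linarith)
  obtain ⟨z₀, hz₀, hmax⟩ := (isCompact_closedBall c (R / 2)).exists_isMaxOn
    (f := fun z => ‖deriv h z‖ * (R / 2 - dist z c)) ⟨c, mem_closedBall_self (by linarith)⟩
    ((hdd.continuousOn.mono hsub).norm.mul (by fun_prop))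
  have hmax' : ∀ z ∈ closedBall c (R / 2), ‖deriv h z‖ * (R / 2 - dist z c) ≤
    ‖deriv h z₀‖ * (R / 2 - dist z₀ c) := fun z hz => hmax hz
  have hc := hmax' c (mem_closedBall_self (by linarith))
  rw [dist_self, sub_zero] at hc
  by_contra hcon
  push Not at hcon
  have hpi := Real.pi_pos
  set m := ‖deriv h z₀‖ with hm
  set ρ := (R / 2 - dist z₀ c) / 2 with hρ
  have hz₀' : dist z₀ c ≤ R / 2 := hz₀
  have hbig : 48 * Real.pi < m * ρ := by rw [hρ]; linarith
  have hm0 : 0 ≤ m := norm_nonneg _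
  have hρ0 : 0 < ρ := by
    rcases lt_or_ge 0 ρ with h | h
    · exact h
    · nlinarith
  have hmpos : 0 < m := by
    rcases hm0.lt_or_eq with h | h
    · exact h
    · rw [← h] at hbig; linarith
  have hball : ∀ z ∈ ball z₀ ρ, z ∈ closedBall c (R / 2) ∧ ‖deriv h z‖ ≤ 2 * m := by
    intro z hz
    have h1 : dist z z₀ < ρ := hz
    have h2 := dist_triangle z z₀ c
    have h3 : z ∈ closedBall c (R / 2) := by
      rw [mem_closedBall]; rw [hρ] at h1; linarith
    refine ⟨h3, ?_⟩
    have h4 := hmax' z h3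
    have h5 : ρ ≤ R / 2 - dist z c := by rw [hρ] at h1 ⊢; linarith
    have h6 : ‖deriv h z‖ * ρ ≤ m * (2 * ρ) := by
      have : m * (2 * ρ) = m * (R / 2 - dist z₀ c) := by rw [hρ]; ring
      rw [this]
      exact (mul_le_mul_of_nonneg_left h5 (norm_nonneg _)).trans h4
    nlinarith
  have hbR : ball z₀ ρ ⊆ ball c R := fun z hz => hsub (hball z hz).1
  have hlip : ∀ z ∈ ball z₀ ρ, ‖deriv h z - deriv h z₀‖ ≤ 3 * m / ρ * dist z z₀ := by
    intro z hz
    rw [← dist_eq_norm]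
    refine Complex.dist_le_div_mul_dist_of_mapsTo_ball (hdd.mono hbR) ?_ hz
    intro w hw
    rw [mem_closedBall, dist_eq_norm]
    refine (norm_sub_le _ _).trans ?_
    linarith [(hball w hw).2]
  have hr6 : closedBall z₀ (ρ / 6) ⊆ ball z₀ ρ := closedBall_subset_ball (by linarith)
  have hest : ∀ z ∈ closedBall z₀ (ρ / 6),
      ‖(h z - deriv h z₀ * z) - (h z₀ - deriv h z₀ * z₀)‖ ≤ m / 2 * ‖z - z₀‖ := by
    intro z hz
    refine (convex_closedBall z₀ (ρ / 6)).norm_image_sub_le_of_norm_hasDerivWithin_le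
      (f := fun z => h z - deriv h z₀ * z) (f' := fun z => deriv h z - deriv h z₀) ?_ ?_
      (mem_closedBall_self (by linarith)) hz
    · intro w hw
      have h1 : HasDerivAt h (deriv h w) w :=
        (hh.differentiableAt (isOpen_ball.mem_nhds (hbR (hr6 hw)))).hasDerivAt
      have h2 : HasDerivAt (fun z => deriv h z₀ * z) (deriv h z₀) w := by
        simpa using (hasDerivAt_id w).const_mul (deriv h z₀)
      exact (h1.sub h2).hasDerivWithinAt
    · intro w hw
      refine (hlip w (hr6 hw)).trans ?_
      have h1 : dist w z₀ ≤ ρ / 6 := hw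
      calc 3 * m / ρ * dist w z₀ ≤ 3 * m / ρ * (ρ / 6) := by gcongr
        _ = m / 2 := by field_simp; norm_num
  have hlow : ∀ z ∈ closedBall z₀ (ρ / 6), m / 2 * ‖z - z₀‖ ≤ ‖h z - h z₀‖ := by
    intro z hz
    have h1 := hest z hz
    have h2 : deriv h z₀ * (z - z₀) = (h z - h z₀) -
      ((h z - deriv h z₀ * z) - (h z₀ - deriv h z₀ * z₀)) := by ring
    have h3 : m * ‖z - z₀‖ ≤ ‖h z - h z₀‖ + m / 2 * ‖z - z₀‖ := by
      rw [hm, ← norm_mul, h2, ← hm]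
      exact (norm_sub_le _ _).trans (by linarith)
    linarith
  have hcov := DiffContOnCl.ball_subset_image_closedBall (f := h) (z₀ := z₀) (r := ρ / 6)
    (ε := m * ρ / 12) ?_ (by linarith) ?_ ?_
  · have hin : h z₀ + 2 * Real.pi * I ∈ ball (h z₀) (m * ρ / 12 / 2) := by
      rw [mem_ball, dist_eq_norm, add_sub_cancel_left]
      simp only [norm_mul, Complex.norm_real, Complex.norm_I, Complex.norm_ofNat,
        Real.norm_eq_abs, abs_of_pos hpi]
      linarith
    obtain ⟨w, hw, hw2⟩ := hcov hin
    exact hne z₀ (hsub hz₀) w (hbR (hr6 hw)) hw2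
  · refine (hh.mono ?_).diffContOnCl
    rw [closure_ball _ (by linarith : ρ / 6 ≠ 0)]
    exact hr6.trans hbR
  · intro z hz
    have h1 := hlow z (sphere_subset_closedBall hz)
    rw [mem_sphere, dist_eq_norm] at hz
    rw [hz] at h1
    linarith
  · have h1 : ∀ᶠ z in nhdsWithin z₀ {z₀}ᶜ, h z ≠ h z₀ := by
      have h2 : ∀ᶠ z in nhdsWithin z₀ {z₀}ᶜ, z ∈ closedBall z₀ (ρ / 6) :=
        nhdsWithin_le_nhds (closedBall_mem_nhds z₀ (by linarith))
      filter_upwards [h2, self_mem_nhdsWithin] with z hz hz2 he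
      have h3 := hlow z hz
      rw [he, sub_self, norm_zero] at h3
      have h4 : 0 < ‖z - z₀‖ := norm_pos_iff.mpr (sub_ne_zero.mpr hz2)
      nlinarith
    exact h1.frequently.filter_mono nhdsWithin_le_nhds

/-- A Koebe type distortion estimate. -/
lemma koebe_aux {ψ : ℂ → ℂ} {x : ℂ} (hψ : DifferentiableOn ℂ ψ (ball (0:ℂ) 1))
    (hinj : InjOn ψ (ball (0:ℂ) 1)) (hx : ∀ z ∈ ball (0:ℂ) 1, ψ z ≠ x) {z : ℂ}
    (hz : ‖z‖ ≤ 4 / 5) :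
    ‖deriv ψ z‖ ≤ (960 * Real.pi) * (Real.exp (960 * Real.pi) * ‖ψ 0 - x‖) := by
  have hnz : ∀ z ∈ ball (0:ℂ) 1, ψ z - x ≠ 0 := fun z hz => sub_ne_zero.mpr (hx z hz)
  have h00 : (0:ℂ) ∈ ball (0:ℂ) 1 := by simp
  have hd : DifferentiableOn ℂ (fun z => deriv ψ z / (ψ z - x)) (ball (0:ℂ) 1) :=
    (hψ.deriv isOpen_ball).div (hψ.sub_const x) hnz
  obtain ⟨h, h0, hh⟩ := hd.isExactOn_ball.with_val_at 0 (Complex.log (ψ 0 - x))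
  have hψd : ∀ z ∈ ball (0:ℂ) 1, HasDerivAt ψ (deriv ψ z) z := fun z hz =>
    (hψ.differentiableAt (isOpen_ball.mem_nhds hz)).hasDerivAt
  have hexp : ∀ z ∈ ball (0:ℂ) 1, ψ z - x = Complex.exp (h z) := by
    have hder : ∀ z ∈ ball (0:ℂ) 1,
        HasDerivAt (fun z => (ψ z - x) * Complex.exp (-h z)) 0 z := by
      intro z hz
      have h1 := ((hψd z hz).sub_const x).mul ((hh z hz).neg.cexp)
      have h2 := hnz z hz
      have e : deriv ψ z * Complex.exp (-h z) + (ψ z - x) *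
          (Complex.exp (-h z) * -(deriv ψ z / (ψ z - x))) = 0 := by
        field_simp
        ring
      rw [← e]
      exact h1
    intro z hz
    have h1 : (ψ z - x) * Complex.exp (-h z) = (ψ 0 - x) * Complex.exp (-h 0) := by
      have := (convex_ball (0:ℂ) 1).norm_image_sub_le_of_norm_hasDerivWithin_le
        (f := fun z => (ψ z - x) * Complex.exp (-h z)) (f' := fun _ => 0) (C := 0)
        (fun w hw => (hder w hw).hasDerivWithinAt) (by simp) h00 hz
      rw [zero_mul] at this
      exact sub_eq_zero.mp (norm_le_zero_iff.mp this)
    rw [h0, Complex.exp_neg (Complex.log _), Complex.exp_log (hnz 0 h00), mul_inv_cancel₀ (hnz 0 h00),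
      Complex.exp_neg] at h1
    exact (mul_inv_eq_one₀ (Complex.exp_ne_zero _)).mp h1
  have hhd : DifferentiableOn ℂ h (ball (0:ℂ) 1) := fun z hz =>
    (hh z hz).differentiableAt.differentiableWithinAt
  have hK : ∀ z : ℂ, ‖z‖ ≤ 4 / 5 → ‖deriv h z‖ ≤ 960 * Real.pi := by
    intro z hz
    have hs : ball z (1 / 5) ⊆ ball (0:ℂ) 1 := by
      intro w hw
      rw [mem_ball, dist_eq_norm] at hw
      rw [mem_ball_zero_iff]
      have := norm_add_le (w - z) z
      rw [sub_add_cancel] at this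
      linarith
    have := bloch_aux (h := h) (c := z) (R := 1 / 5) (by norm_num) (hhd.mono hs) ?_
    · linarith
    · intro u hu w hw he
      have h1 := hexp w (hs hw)
      rw [he, Complex.exp_add, Complex.exp_two_pi_mul_I, mul_one, ← hexp u (hs hu)] at h1
      have h2 : w = u := hinj (hs hw) (hs hu) (sub_left_injective h1)
      rw [h2] at he
      have h3 : (2 * Real.pi * I : ℂ) = 0 := left_eq_add.mp he
      exact Complex.two_pi_I_ne_zero h3
  have hz1 : z ∈ ball (0:ℂ) 1 := by rw [mem_ball_zero_iff]; linarith
  have hpi := Real.pi_pos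
  have h1 : ‖h z - h 0‖ ≤ 960 * Real.pi := by
    have := (convex_closedBall (0:ℂ) (4 / 5)).norm_image_sub_le_of_norm_hasDerivWithin_le
        (f := h) (f' := deriv h) (C := 960 * Real.pi)
        (fun w hw => ?_) (fun w hw => hK w (by simpa using hw)) 
        (mem_closedBall_self (by norm_num)) (by simpa using hz : z ∈ closedBall (0:ℂ) (4 / 5))
    · refine this.trans ?_
      rw [sub_zero]
      nlinarith
    · have hw' : ‖w‖ ≤ 4 / 5 := by simpa using hw
      exact (hh w (by rw [mem_ball_zero_iff]; linarith)).differentiableAt.hasDerivAt.hasDerivWithinAt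
  have h2 : ‖ψ z - x‖ ≤ Real.exp (960 * Real.pi) * ‖ψ 0 - x‖ := by
    rw [hexp z hz1, hexp 0 h00, Complex.norm_exp, Complex.norm_exp, ← Real.exp_add]
    apply Real.exp_le_exp.mpr
    have := (Complex.re_le_norm (h z - h 0)).trans h1
    rw [Complex.sub_re] at this
    linarith
  have h3 : deriv ψ z = deriv h z * (ψ z - x) := by
    rw [(hh z hz1).deriv, div_mul_cancel₀ _ (hnz z hz1)]
  rw [h3, norm_mul]
  exact mul_le_mul (hK z hz) h2 (norm_nonneg _) (by positivity)

lemma square_half_diam {p z : ℂ} {s : ℝ} (hz : z ∈ square p s) :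
    dist z p ≤ Metric.diam (square p s) / 2 ∧ Metric.diam (square p s) ≤ 2 * s := by
  have hs : 0 ≤ s := by linarith [hz.1, abs_nonneg (z.re - p.re)]
  have hsub : square p s ⊆ closedBall p s := by
    intro w hw
    rw [mem_closedBall, dist_eq_norm]
    refine (Complex.norm_le_abs_re_add_abs_im _).trans ?_
    rw [Complex.sub_re, Complex.sub_im]
    linarith [hw.1, hw.2]
  refine ⟨?_, (Metric.diam_mono hsub isBounded_closedBall).trans (Metric.diam_closedBall hs)⟩
  have hz2 : 2 * p - z ∈ square p s := by
    have h1 : (2 * p - z).re - p.re = -(z.re - p.re) := by simp; ring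
    have h2 : (2 * p - z).im - p.im = -(z.im - p.im) := by simp; ring
    refine ⟨?_, ?_⟩
    · rw [h1, abs_neg]; exact hz.1
    · rw [h2, abs_neg]; exact hz.2
  have h := Metric.dist_le_diam_of_mem (isBounded_closedBall.subset hsub) hz hz2
  have e : dist z (2 * p - z) = 2 * dist z p := by
    rw [dist_eq_norm, dist_eq_norm, show z - (2 * p - z) = 2 * (z - p) by ring, norm_mul]
    simp
  linarith

/-- Let `U ⊆ ℂ` be a simply connected domain, `𝒲` a Whitney square decomposition of `U`,
`Q ∈ 𝒲`, and let `γ : [0, L] → U`, `γ(u) = ψ(tanh(u) ζ)` (with `ψ : 𝔻 → U` a Riemann map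
and `|ζ| = 1`) be a hyperbolic geodesic segment, parameterized by hyperbolic length, with
both endpoints in `Q`.  Then the whole segment is contained in the closed hyperbolic ball
of radius `2` around `cen(Q)`, and its Euclidean length is at most `c · len(Q)` for a
universal constant `c > 0`. -/
theorem stmt19 : ∃ c : ℝ, 0 < c ∧
    ∀ (U : Set ℂ), IsOpen U → U ≠ univ →
    ∀ φ ψ : ℂ → ℂ,
    DifferentiableOn ℂ φ U → BijOn φ U (ball (0:ℂ) 1) →
    DifferentiableOn ℂ ψ (ball (0:ℂ) 1) → BijOn ψ (ball (0:ℂ) 1) U →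
    (∀ z ∈ ball (0:ℂ) 1, φ (ψ z) = z) →
    ∀ W : Set (ℂ × ℝ), IsWhitneyDecomp U W →
    ∀ q ∈ W, ∀ ζ : ℂ, ‖ζ‖ = 1 → ∀ L : ℝ, 0 ≤ L →
    ψ 0 ∈ square q.1 q.2 → ψ ((Real.tanh L : ℝ) * ζ : ℂ) ∈ square q.1 q.2 →
    (∀ u : ℝ, 0 ≤ u → u ≤ L →
        distHyp φ U (ψ ((Real.tanh u : ℝ) * ζ : ℂ)) q.1 ≤ 2) ∧
    (∫ u in (0:ℝ)..L, ‖deriv (fun v : ℝ => ψ ((Real.tanh v : ℝ) * ζ : ℂ)) u‖) ≤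
      c * q.2 := by
  have hpi := Real.pi_pos
  refine ⟨2 * ((960 * Real.pi) * (Real.exp (960 * Real.pi) * 10)), by positivity, ?_⟩
  intro U hU hUne φ ψ hφ hφb hψ hψb hinv W hW q hq ζ hζ L hL h0 hLm
  set p := q.1 with hp
  set s := q.2 with hs
  set r := Metric.diam (square p s) with hr
  have hspos : 0 < s := by
    obtain ⟨n, hn⟩ := hW.dyadic q hq
    rw [hs, hn]; positivity
  have hpQ : p ∈ square p s := by
    refine ⟨?_, ?_⟩ <;> simp <;> linarith
  have hr2 : r ≤ 2 * s := (square_half_diam hpQ).2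
  have hhalf : ∀ z ∈ square p s, dist z p ≤ r / 2 := fun z hz => (square_half_diam hz).1
  have hrpos : 0 < r := by
    have h1 : p + (s / 2 : ℝ) ∈ square p s := by
      refine ⟨?_, ?_⟩
      · simp [abs_of_pos (half_pos hspos)]
      · simp; linarith
    have h2 := hhalf _ h1
    rw [dist_eq_norm, add_sub_cancel_left, Complex.norm_real, Real.norm_eq_abs,
      abs_of_pos (by linarith)] at h2
    linarith
  have hlow : r ≤ sdist (square p s) Uᶜ := hW.lower q hq
  have hup : sdist (square p s) Uᶜ < 4 * r := hW.upper q hq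
  have hballU : ball p r ⊆ U := by
    intro z hz
    by_contra hzU
    have h1 : sdist (square p s) Uᶜ ≤ dist p z :=
      csInf_le ⟨0, by rintro _ ⟨a, _, b, _, rfl⟩; exact dist_nonneg⟩ ⟨p, hpQ, z, hzU, rfl⟩
    rw [mem_ball, dist_comm] at hz
    linarith
  have hpU : p ∈ U := hballU (mem_ball_self hrpos)
  obtain ⟨x, hxU, hx⟩ : ∃ x, x ∉ U ∧ ‖ψ 0 - x‖ ≤ 5 * r := by
    obtain ⟨y, hy⟩ := (Set.ne_univ_iff_exists_notMem U).mp hUne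
    have hnonempty : {d : ℝ | ∃ a ∈ square p s, ∃ b ∈ Uᶜ, d = dist a b}.Nonempty :=
      ⟨_, p, hpQ, y, hy, rfl⟩
    obtain ⟨_, ⟨a, ha, x, hx, rfl⟩, hlt⟩ := exists_lt_of_csInf_lt hnonempty hup
    refine ⟨x, hx, ?_⟩
    rw [← dist_eq_norm]
    have h1 := dist_triangle4 (ψ 0) p a x
    have h2 := hhalf _ h0
    have h3 := hhalf _ ha
    rw [dist_comm] at h3
    linarith
  have h00 : (0:ℂ) ∈ ball (0:ℂ) 1 := by simp
  have hpick : ∀ z ∈ square p s, ‖mob (φ p) (φ z)‖ ≤ 1 / 2 := by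
    intro z hz
    have h1 := hhalf z hz
    refine (schwarz_pick (hφ.mono hballU) (hφb.mapsTo.mono_left hballU)
      (show z ∈ ball p r by rw [mem_ball]; linarith)).trans ?_
    rw [div_le_div_iff₀ hrpos (by norm_num)]
    linarith
  set b := φ p with hb
  have hb1 : ‖b‖ < 1 := by simpa using hφb.mapsTo hpU
  have hψb' : ψ b = p := by
    obtain ⟨w, hw, hwp⟩ := hψb.surjOn hpU
    rw [hb, ← hwp, hinv w hw]
  have hbhalf : ‖b‖ ≤ 1 / 2 := by
    have := hpick _ h0
    rw [hinv 0 h00] at this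
    simpa [mob] using this
  have hnorm : ∀ u : ℝ, ‖((Real.tanh u : ℝ) * ζ : ℂ)‖ = |Real.tanh u| := fun u => by
    rw [norm_mul, hζ, mul_one, Complex.norm_real, Real.norm_eq_abs]
  have hnorm1 : ∀ u : ℝ, ‖((Real.tanh u : ℝ) * ζ : ℂ)‖ < 1 := fun u => by
    rw [hnorm]; exact Real.abs_tanh_lt_one u
  have hL45 : Real.tanh L ≤ 4 / 5 := by
    have h1 := hpick _ hLm
    rw [hinv _ (by rw [mem_ball_zero_iff]; exact hnorm1 L)] at h1
    have h2 := mob_bound (b := -b) (α := 1 / 2) (β := 1 / 2) (by norm_num) (by norm_num)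
      (by simpa using hbhalf) h1
    rw [mob_neg_mob hb1 (hnorm1 L), hnorm] at h2
    refine (le_abs_self _).trans (h2.trans (by norm_num))
  have hu45 : ∀ u : ℝ, 0 ≤ u → u ≤ L → ‖((Real.tanh u : ℝ) * ζ : ℂ)‖ ≤ 4 / 5 := by
    intro u hu0 huL
    have h1 : 0 ≤ Real.tanh u := by
      rw [← Real.tanh_zero]; exact (tanh_le_iff' 0 u).mpr hu0
    rw [hnorm, abs_of_nonneg h1]
    exact ((tanh_le_iff' u L).mpr huL).trans hL45
  refine ⟨?_, ?_⟩
  · intro u hu0 huL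
    have h1 := mob_bound (α := 4 / 5) (β := 1 / 2) (by norm_num) (by norm_num) hbhalf
      (hu45 u hu0 huL)
    rw [← hψb']
    exact distHyp_le hU hφ hφb.mapsTo hψ hψb.mapsTo hinv (hnorm1 u) hb1
      (h1.trans (by norm_num))
  · have hL2 : L ≤ 2 := by
      rw [← tanh_le_iff']; linarith [tanh_two]
    set K := (960 * Real.pi) * (Real.exp (960 * Real.pi) * (10 * s)) with hK
    have hK0 : 0 ≤ K := by positivity
    have hbd : ∀ u ∈ Set.uIoc 0 L,
        ‖‖deriv (fun v : ℝ => ψ ((Real.tanh v : ℝ) * ζ : ℂ)) u‖‖ ≤ K := by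
      intro u hu
      rw [Set.uIoc_of_le hL] at hu
      rw [norm_norm]
      have h1 : HasDerivAt ψ (deriv ψ ((Real.tanh u : ℝ) * ζ : ℂ)) ((Real.tanh u : ℝ) * ζ : ℂ) :=
        (hψ.differentiableAt (isOpen_ball.mem_nhds
          (by rw [mem_ball_zero_iff]; exact hnorm1 u))).hasDerivAt
      have h2 : HasDerivAt (fun v : ℝ => ((Real.tanh v : ℝ) * ζ : ℂ))
          (((1 - Real.tanh u ^ 2 : ℝ) : ℂ) * ζ) u :=
        ((hasDerivAt_tanh' u).ofReal_comp).mul_const ζ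
      have h3 : deriv (fun v : ℝ => ψ ((Real.tanh v : ℝ) * ζ : ℂ)) u = _ := (h1.comp u h2).deriv
      rw [h3, norm_mul, norm_mul, hζ, mul_one, Complex.norm_real, Real.norm_eq_abs]
      have h4 : |1 - Real.tanh u ^ 2| ≤ 1 := by
        rw [abs_le]
        constructor <;> nlinarith [Real.tanh_sq_lt_one u, sq_nonneg (Real.tanh u)]
      have h5 := koebe_aux hψ hψb.injOn (x := x)
        (fun z hz he => hxU (he ▸ hψb.mapsTo hz)) (hu45 u hu.1.le hu.2)
      have h6 : ‖deriv ψ ((Real.tanh u : ℝ) * ζ : ℂ)‖ ≤ K := by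
        refine h5.trans ?_
        rw [hK]
        gcongr
        linarith
      calc _ ≤ K * 1 := mul_le_mul h6 h4 (abs_nonneg _) hK0
        _ = K := mul_one K
    have h1 := intervalIntegral.norm_integral_le_of_norm_le_const hbd
    have h2 := (le_abs_self _).trans h1
    rw [sub_zero, abs_of_nonneg hL] at h2
    refine h2.trans ?_
    have h3 : K * L ≤ K * 2 := by gcongr
    refine h3.trans (le_of_eq ?_)
    rw [hK]; ring

end
end
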